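/- arXiv:1604.01060 — 4 statements merged into one kernel-verified Lean document; each statement's English description precedes it below -/
import Mathlib

section
/- Let (V⁺,V⁻) be a Jordan pair and e = (e,e') an idempotent (Q_e e' = e and Q_{e'} e = e'). Then V^± decomposes as the direct sum of the eigenspaces V_2^±, V_1^±, V_0^± of D_{e,e'} (resp. D_{e',e}) for eigenvalues 2, 1, 0, and the Peirce rule {V_k^±, V_ℓ^∓, V_m^±} ⊆ V_{k−ℓ+m}^± holds (interpreted as 0 when k−ℓ+m ∉ {0,1,2}), together with {V^±, V_2^∓, V_0^±} = 0. -/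
/-- A (linear) Jordan pair over `ℝ`: a pair of modules with trilinear products,
symmetric in the outer variables, satisfying the fundamental Jordan pair identity. -/
structure JordanPair (Vp Vm : Type*) [AddCommGroup Vp] [Module ℝ Vp]
    [AddCommGroup Vm] [Module ℝ Vm] where
  tp : Vp →ₗ[ℝ] Vm →ₗ[ℝ] Vp →ₗ[ℝ] Vp
  tm : Vm →ₗ[ℝ] Vp →ₗ[ℝ] Vm →ₗ[ℝ] Vm
  symm_p : ∀ x y z, tp x y z = tp z y x
  symm_m : ∀ x y z, tm x y z = tm z y x
  jp_p : ∀ x y u v z,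
    tp x y (tp u v z) - tp u v (tp x y z) = tp (tp x y u) v z - tp u (tm y x v) z
  jp_m : ∀ y x v u w,
    tm y x (tm v u w) - tm v u (tm y x w) = tm (tm y x v) u w - tm v (tp x y u) w

variable {Vp Vm : Type*} [AddCommGroup Vp] [Module ℝ Vp] [AddCommGroup Vm] [Module ℝ Vm]

/-- The Peirce space `V_c⁺(e) = {x : {e,e',x} = c·x}` of an idempotent. -/
def JordanPair.peirceP (J : JordanPair Vp Vm) (e : Vp) (e' : Vm) (c : ℝ) : Submodule ℝ Vp :=
  LinearMap.ker (J.tp e e' - c • LinearMap.id)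

/-- The Peirce space `V_c⁻(e) = {y : {e',e,y} = c·y}` of an idempotent. -/
def JordanPair.peirceM (J : JordanPair Vp Vm) (e : Vp) (e' : Vm) (c : ℝ) : Submodule ℝ Vm :=
  LinearMap.ker (J.tm e' e - c • LinearMap.id)

namespace JordanPairAux

/-- The opposite Jordan pair. -/
def swap (J : JordanPair Vp Vm) : JordanPair Vm Vp where
  tp := J.tm
  tm := J.tp
  symm_p := J.symm_m
  symm_m := J.symm_p
  jp_p := J.jp_m
  jp_m := J.jp_p

lemma memP (J : JordanPair Vp Vm) (e : Vp) (e' : Vm) (c : ℝ) (x : Vp) :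
    x ∈ J.peirceP e e' c ↔ J.tp e e' x = c • x := by
  simp [JordanPair.peirceP, sub_eq_zero]

lemma memM (J : JordanPair Vp Vm) (e : Vp) (e' : Vm) (c : ℝ) (x : Vm) :
    x ∈ J.peirceM e e' c ↔ J.tm e' e x = c • x := by
  simp [JordanPair.peirceM, sub_eq_zero]

/-- `{e {e' x e'} e} = 2 D² x - 2 D x`. -/
lemma quad (J : JordanPair Vp Vm) (e : Vp) (e' : Vm) (he : J.tp e e' e = (2 : ℝ) • e) (x : Vp) :
    J.tp e (J.tm e' x e') e = (2 : ℝ) • J.tp e e' (J.tp e e' x) - (2 : ℝ) • J.tp e e' x := by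
  have h := J.jp_p x e' e e' e
  rw [he, map_smul, J.symm_p x e' e, J.symm_p _ e' e] at h
  linear_combination (norm := module) (1 : ℝ) • h

/-- `{e w e}` lies in the Peirce 2-space. -/
lemma quad_two (J : JordanPair Vp Vm) (e : Vp) (e' : Vm) (he : J.tp e e' e = (2 : ℝ) • e)
    (w : Vm) : J.tp e e' (J.tp e w e) = (2 : ℝ) • J.tp e w e := by
  have h1 := J.jp_p e e' e w e
  have h2 := J.jp_p e w e e' e
  rw [he] at h1 h2
  rw [J.symm_p _ e' e, J.symm_m w e e'] at h2
  simp only [map_smul, LinearMap.smul_apply] at h1 h2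
  linear_combination (norm := module) (3⁻¹ : ℝ) • h1 - (3⁻¹ : ℝ) • h2

lemma cubic (J : JordanPair Vp Vm) (e : Vp) (e' : Vm) (he : J.tp e e' e = (2 : ℝ) • e) (x : Vp) :
    J.tp e e' (J.tp e e' (J.tp e e' x)) =
      (3 : ℝ) • J.tp e e' (J.tp e e' x) - (2 : ℝ) • J.tp e e' x := by
  have h := quad_two J e e' he (J.tm e' x e')
  rw [quad J e e' he] at h
  simp only [map_smul, map_sub] at h
  linear_combination (norm := module) (2⁻¹ : ℝ) • h

lemma decomp (J : JordanPair Vp Vm) (e : Vp) (e' : Vm) (he : J.tp e e' e = (2 : ℝ) • e) (x : Vp) :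
    ∃ a b c : Vp, J.tp e e' a = (0 : ℝ) • a ∧ J.tp e e' b = (1 : ℝ) • b ∧
      J.tp e e' c = (2 : ℝ) • c ∧ x = a + b + c := by
  have h := cubic J e e' he x
  refine ⟨x - (3 / 2 : ℝ) • J.tp e e' x + (2⁻¹ : ℝ) • J.tp e e' (J.tp e e' x),
    (2 : ℝ) • J.tp e e' x - J.tp e e' (J.tp e e' x),
    (2⁻¹ : ℝ) • J.tp e e' (J.tp e e' x) - (2⁻¹ : ℝ) • J.tp e e' x, ?_, ?_, ?_, ?_⟩
  · simp only [map_smul, map_sub, map_add, h]; module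
  · simp only [map_smul, map_sub, map_add, h]; module
  · simp only [map_smul, map_sub, map_add, h]; module
  · module

lemma internal (J : JordanPair Vp Vm) (e : Vp) (e' : Vm) (he : J.tp e e' e = (2 : ℝ) • e) :
    DirectSum.IsInternal fun i : Fin 3 => J.peirceP e e' ((i : ℕ) : ℝ) := by
  have key : (fun i : Fin 3 => J.peirceP e e' ((i : ℕ) : ℝ)) =
      fun i : Fin 3 => Module.End.eigenspace (J.tp e e') ((i : ℕ) : ℝ) := by
    funext i
    ext x
    rw [memP, Module.End.mem_eigenspace_iff]
  apply DirectSum.isInternal_submodule_of_iSupIndep_of_iSup_eq_top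
  · rw [key]
    refine (Module.End.eigenspaces_iSupIndep (J.tp e e')).comp
      (f := fun i : Fin 3 => ((i : ℕ) : ℝ)) ?_
    intro i j hij
    exact Fin.ext (Nat.cast_injective hij)
  · rw [eq_top_iff]
    rintro x -
    obtain ⟨a, b, c, ha, hb, hc, rfl⟩ := decomp J e e' he x
    refine add_mem (add_mem ?_ ?_) ?_
    · refine Submodule.mem_iSup_of_mem (0 : Fin 3) ?_
      rw [memP, ha]; simp
    · refine Submodule.mem_iSup_of_mem (1 : Fin 3) ?_
      rw [memP, hb]; simp
    · refine Submodule.mem_iSup_of_mem (2 : Fin 3) ?_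
      rw [memP, hc]; simp

lemma rule (J : JordanPair Vp Vm) (e : Vp) (e' : Vm) {k l m : ℝ} {x : Vp} {y : Vm} {z : Vp}
    (hx : J.tp e e' x = k • x) (hy : J.tm e' e y = l • y) (hz : J.tp e e' z = m • z) :
    J.tp e e' (J.tp x y z) = (k - l + m) • J.tp x y z := by
  have h := J.jp_p e e' x y z
  rw [hx, hy, hz] at h
  simp only [map_smul, LinearMap.smul_apply] at h
  linear_combination (norm := module) h

lemma eig_zero (J : JordanPair Vp Vm) (e : Vp) (e' : Vm) (he : J.tp e e' e = (2 : ℝ) • e)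
    {c : ℝ} {t : Vp} (ht : J.tp e e' t = c • t) (hc : c * (c - 1) * (c - 2) ≠ 0) : t = 0 := by
  have h := cubic J e e' he t
  simp only [ht, map_smul] at h
  have h2 : (c * (c - 1) * (c - 2)) • t = 0 := by
    linear_combination (norm := module) h
  exact (smul_eq_zero.mp h2).resolve_left hc

lemma fullRule (J : JordanPair Vp Vm) (e : Vp) (e' : Vm) (he : J.tp e e' e = (2 : ℝ) • e)
    (k l m : ℕ) (x : Vp) (hx : x ∈ J.peirceP e e' k) (y : Vm) (hy : y ∈ J.peirceM e e' l)
    (z : Vp) (hz : z ∈ J.peirceP e e' m) :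
    ((0 ≤ (k : ℤ) - l + m ∧ (k : ℤ) - l + m ≤ 2 →
            J.tp x y z ∈ J.peirceP e e' (((k : ℤ) - l + m : ℤ) : ℝ)) ∧
          (((k : ℤ) - l + m < 0 ∨ 2 < (k : ℤ) - l + m) → J.tp x y z = 0)) := by
  rw [memP] at hx hz
  rw [memM] at hy
  have h := rule J e e' hx hy hz
  have hcast : ((((k : ℤ) - l + m : ℤ)) : ℝ) = (k : ℝ) - l + m := by push_cast; rfl
  rw [← hcast] at h
  refine ⟨fun _ => (memP _ _ _ _ _).2 h, fun hr => eig_zero J e e' he h ?_⟩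
  generalize (k : ℤ) - l + m = n at hr
  have h0 : n ≠ 0 := by omega
  have h1 : n - 1 ≠ 0 := by omega
  have h2 : n - 2 ≠ 0 := by omega
  have := mul_ne_zero (mul_ne_zero h0 h1) h2
  exact_mod_cast this

/-- `{V₀⁺, e', V⁺} = 0`. -/
lemma zero_e (J : JordanPair Vp Vm) (e : Vp) (e' : Vm) (he : J.tp e e' e = (2 : ℝ) • e)
    (he' : J.tm e' e e' = (2 : ℝ) • e') {z : Vp} (hz : J.tp e e' z = (0 : ℝ) • z) (x : Vp) :
    J.tp z e' x = 0 := by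
  obtain ⟨a, b, c, ha, hb, hc, rfl⟩ := decomp J e e' he x
  have h0 : J.tp z e' a = 0 := eig_zero J e e' he (rule J e e' hz he' ha) (by norm_num)
  have h1 : J.tp z e' b = 0 := eig_zero J e e' he (rule J e e' hz he' hb) (by norm_num)
  have hq := quad J e e' he c
  have hw := quad_two (swap J) e' e he' c
  change J.tm e' e (J.tm e' c e') = (2 : ℝ) • J.tm e' c e' at hw
  set w := J.tm e' c e' with hwdef
  have hzw : J.tm e' z w = 0 :=
    eig_zero (swap J) e' e he' (rule (swap J) e' e he' hz hw) (by norm_num)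
  have hze : J.tp z e' e = 0 := by rw [J.symm_p, hz, zero_smul]
  have h := J.jp_p z e' e w e
  rw [hze, hzw, hq] at h
  simp only [hc, map_smul, map_zero, map_sub, LinearMap.zero_apply] at h
  have h2 : J.tp z e' c = 0 := by
    linear_combination (norm := module) (4⁻¹ : ℝ) • h
  rw [map_add, map_add, h0, h1, h2]; simp

lemma two_zero (J : JordanPair Vp Vm) (e : Vp) (e' : Vm) (he : J.tp e e' e = (2 : ℝ) • e)
    (he' : J.tm e' e e' = (2 : ℝ) • e') (x : Vp) (y : Vm) (hy : y ∈ J.peirceM e e' 2)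
    (z : Vp) (hz : z ∈ J.peirceP e e' 0) : J.tp x y z = 0 := by
  rw [memP] at hz
  rw [memM] at hy
  have hq := quad (swap J) e' e he' y
  change J.tm e' (J.tp e y e) e' = (2 : ℝ) • J.tm e' e (J.tm e' e y)
    - (2 : ℝ) • J.tm e' e y at hq
  have hT : ∀ u, J.tp u e' z = 0 := fun u => by
    rw [J.symm_p]; exact zero_e J e e' he he' hz u
  have h := J.jp_p (J.tp e y e) e' x e' z
  rw [hq] at h
  simp only [hT, hy, map_smul, map_zero, map_sub, LinearMap.sub_apply,
    LinearMap.smul_apply] at h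
  linear_combination (norm := module) (4⁻¹ : ℝ) • h

end JordanPairAux

/-- **Peirce decomposition.** Let `(e,e')` be an idempotent of a Jordan pair, i.e.
`Q_e e' = e` and `Q_{e'} e = e'`.  Then `V⁺` and `V⁻` decompose as direct sums of the
eigenspaces of `D_{e,e'}` resp. `D_{e',e}` for the eigenvalues `2, 1, 0`, the Peirce rule
`{V_k^±, V_ℓ^∓, V_m^±} ⊆ V_{k−ℓ+m}^±` holds (interpreted as `0` when `k−ℓ+m ∉ {0,1,2}`),
and `{V^±, V_2^∓, V_0^±} = 0`. -/
theorem jordanPair_peirce_decomposition (J : JordanPair Vp Vm) (e : Vp) (e' : Vm)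
    (he : (2⁻¹ : ℝ) • J.tp e e' e = e) (he' : (2⁻¹ : ℝ) • J.tm e' e e' = e') :
    -- direct sum decompositions into the eigenspaces for eigenvalues 0, 1, 2
    (DirectSum.IsInternal fun i : Fin 3 => J.peirceP e e' ((i : ℕ) : ℝ)) ∧
    (DirectSum.IsInternal fun i : Fin 3 => J.peirceM e e' ((i : ℕ) : ℝ)) ∧
    -- Peirce rules on the `+` side
    (∀ k l m : ℕ, k ≤ 2 → l ≤ 2 → m ≤ 2 →
      ∀ x ∈ J.peirceP e e' k, ∀ y ∈ J.peirceM e e' l, ∀ z ∈ J.peirceP e e' m,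
        ((0 ≤ (k : ℤ) - l + m ∧ (k : ℤ) - l + m ≤ 2 →
            J.tp x y z ∈ J.peirceP e e' (((k : ℤ) - l + m : ℤ) : ℝ)) ∧
          (((k : ℤ) - l + m < 0 ∨ 2 < (k : ℤ) - l + m) → J.tp x y z = 0))) ∧
    -- Peirce rules on the `−` side
    (∀ k l m : ℕ, k ≤ 2 → l ≤ 2 → m ≤ 2 →
      ∀ y ∈ J.peirceM e e' k, ∀ x ∈ J.peirceP e e' l, ∀ w ∈ J.peirceM e e' m,
        ((0 ≤ (k : ℤ) - l + m ∧ (k : ℤ) - l + m ≤ 2 →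
            J.tm y x w ∈ J.peirceM e e' (((k : ℤ) - l + m : ℤ) : ℝ)) ∧
          (((k : ℤ) - l + m < 0 ∨ 2 < (k : ℤ) - l + m) → J.tm y x w = 0))) ∧
    -- `{V⁺, V₂⁻, V₀⁺} = 0` and `{V⁻, V₂⁺, V₀⁻} = 0`
    (∀ x : Vp, ∀ y ∈ J.peirceM e e' 2, ∀ z ∈ J.peirceP e e' 0, J.tp x y z = 0) ∧
    (∀ y : Vm, ∀ x ∈ J.peirceP e e' 2, ∀ w ∈ J.peirceM e e' 0, J.tm y x w = 0) := by
  have h1 : J.tp e e' e = (2 : ℝ) • e := by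
    rw [inv_smul_eq_iff₀ two_ne_zero] at he; exact he
  have h2 : J.tm e' e e' = (2 : ℝ) • e' := by
    rw [inv_smul_eq_iff₀ two_ne_zero] at he'; exact he'
  exact ⟨JordanPairAux.internal J e e' h1, JordanPairAux.internal (JordanPairAux.swap J) e' e h2,
    fun k l m _ _ _ x hx y hy z hz => JordanPairAux.fullRule J e e' h1 k l m x hx y hy z hz,
    fun k l m _ _ _ x hx y hy z hz =>
      JordanPairAux.fullRule (JordanPairAux.swap J) e' e h2 k l m x hx y hy z hz,
    fun x y hy z hz => JordanPairAux.two_zero J e e' h1 h2 x y hy z hz,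
    fun x y hy z hz => JordanPairAux.two_zero (JordanPairAux.swap J) e' e h2 h1 x y hy z hz⟩
end

section
/- Let Ω be the symmetric cone of a Euclidean Jordan algebra A of rank r and dimension n, with determinant Δ and trace form (x|y). For λ ∈ ℂ and μ ∈ ℝ, the integral ∫_Ω K_λ(x) Δ(x)^μ dx of the K-Bessel function K_λ(x) = ∫_Ω e^{−tr(v)−(x|v^{-1})} Δ(v)^{−λ} dv converges if and only if μ > −1 and μ − Re λ > −2 − (r−1)d/2, and in that case equals Γ_Ω(μ + n/r)·Γ_Ω(μ − λ + 2n/r), where Γ_Ω is the Gindikin Gamma function of the cone and d the Peirce multiplicity. -/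
open MeasureTheory Real
open scoped RealInnerProductSpace

/-- The complex Gindikin Gamma function
`Γ_Ω(z) = (2π)^{r(r−1)d/4} ∏_{i=0}^{r-1} Γ(z − i·d/2)` of a symmetric cone of rank `r`
and multiplicity `d`. -/
noncomputable def gindikinGamma (r : ℕ) (d : ℝ) (z : ℂ) : ℂ :=
  (((2 * Real.pi) ^ ((r : ℝ) * ((r : ℝ) - 1) * d / 4) : ℝ) : ℂ) *
    ∏ i ∈ Finset.range r, Complex.Gamma (z - (i : ℝ) * d / 2)

/-- The K-Bessel function `𝒦_λ(x) = ∫_Ω e^{−tr(v)−(x|v⁻¹)} Δ(v)^{−λ} dv` of a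
symmetric cone `Ω` with determinant `Δ`, trace `tr` and inversion `jinv`. -/
noncomputable def coneKBessel {E : Type*} [NormedAddCommGroup E] [InnerProductSpace ℝ E]
    [MeasurableSpace E] (μ : Measure E) (Ω : Set E) (Δ tr : E → ℝ) (jinv : E → E)
    (lam : ℂ) (x : E) : ℂ :=
  ∫ v in Ω, Complex.exp (((-(tr v) - ⟪x, jinv v⟫ : ℝ) : ℂ)) * ((Δ v : ℂ) ^ (-lam)) ∂μ


lemma rpow_le_add_aux {t a b s : ℝ} (ht : 0 < t) (has : a ≤ s) (hsb : s ≤ b) :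
    t ^ s ≤ t ^ a + t ^ b := by
  rcases le_total 1 t with h | h
  · have := Real.rpow_le_rpow_of_exponent_le h hsb
    have := Real.rpow_pos_of_pos ht a
    linarith
  · have := Real.rpow_le_rpow_of_exponent_ge ht h has
    have := Real.rpow_pos_of_pos ht b
    linarith

lemma rpow_mul_log_aux {t a b s δ : ℝ} (ht : 0 < t) (hδ : 0 < δ) (has : a + δ ≤ s)
    (hsb : s + δ ≤ b) : t ^ s * |Real.log t| ≤ (t ^ a + t ^ b) / δ := by
  have key : |Real.log t| ≤ (t ^ δ) / δ ∨ |Real.log t| ≤ (t ^ (-δ)) / δ := by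
    rcases le_total 1 t with h | h
    · left
      rw [abs_of_nonneg (Real.log_nonneg h)]
      exact Real.log_le_rpow_div ht.le hδ
    · right
      rw [abs_of_nonpos (Real.log_nonpos ht.le h), ← Real.log_inv]
      have := Real.log_le_rpow_div (inv_pos.2 ht).le hδ
      rwa [Real.inv_rpow ht.le, ← Real.rpow_neg ht.le] at this
  have hs := Real.rpow_pos_of_pos ht s
  rcases key with h | h
  · calc t ^ s * |Real.log t| ≤ t ^ s * ((t ^ δ) / δ) := by gcongr
      _ = t ^ (s + δ) / δ := by rw [Real.rpow_add ht]; ring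
      _ ≤ _ := by
        gcongr
        exact rpow_le_add_aux ht (by linarith) hsb
  · calc t ^ s * |Real.log t| ≤ t ^ s * ((t ^ (-δ)) / δ) := by gcongr
      _ = t ^ (s + -δ) / δ := by rw [Real.rpow_add ht]; ring
      _ ≤ _ := by
        gcongr
        exact rpow_le_add_aux ht (by linarith) (by linarith)

section
variable {α : Type*} [MeasurableSpace α] {ν : Measure α} {f : α → ℂ} {g : α → ℝ} {a b : ℝ}

lemma norm_term_aux {x : α} (hx : 0 < g x) (z : ℂ) :
    ‖f x * (g x : ℂ) ^ z‖ = ‖f x‖ * g x ^ z.re := by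
  rw [norm_mul, Complex.norm_cpow_eq_rpow_re_of_pos hx]

lemma bound_integrable_aux (hpos : ∀ᵐ x ∂ν, 0 < g x)
    (ha : Integrable (fun x => f x * (g x : ℂ) ^ (a : ℂ)) ν)
    (hb : Integrable (fun x => f x * (g x : ℂ) ^ (b : ℂ)) ν) :
    Integrable (fun x => ‖f x‖ * (g x ^ a + g x ^ b)) ν := by
  refine (ha.norm.add hb.norm).congr ?_
  filter_upwards [hpos] with x hx
  simp only [Pi.add_apply, norm_term_aux hx, Complex.ofReal_re]
  ring

lemma meas_aux (hf : AEStronglyMeasurable f ν) (hg : AEMeasurable g ν) (z : ℂ) :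
    AEStronglyMeasurable (fun x => f x * (g x : ℂ) ^ z) ν := by
  apply hf.mul
  exact ((Complex.measurable_ofReal.comp_aemeasurable hg).pow_const z).aestronglyMeasurable

lemma term_integrable_aux (hf : AEStronglyMeasurable f ν) (hg : AEMeasurable g ν)
    (hpos : ∀ᵐ x ∂ν, 0 < g x)
    (ha : Integrable (fun x => f x * (g x : ℂ) ^ (a : ℂ)) ν)
    (hb : Integrable (fun x => f x * (g x : ℂ) ^ (b : ℂ)) ν) {z : ℂ}
    (hz1 : a ≤ z.re) (hz2 : z.re ≤ b) :
    Integrable (fun x => f x * (g x : ℂ) ^ z) ν := by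
  refine (bound_integrable_aux hpos ha hb).mono' (meas_aux hf hg z) ?_
  filter_upwards [hpos] with x hx
  rw [norm_term_aux hx]
  gcongr
  exact rpow_le_add_aux hx hz1 hz2

lemma differentiableOn_aux (hf : AEStronglyMeasurable f ν) (hg : AEMeasurable g ν)
    (hpos : ∀ᵐ x ∂ν, 0 < g x)
    (ha : Integrable (fun x => f x * (g x : ℂ) ^ (a : ℂ)) ν)
    (hb : Integrable (fun x => f x * (g x : ℂ) ^ (b : ℂ)) ν) :
    DifferentiableOn ℂ (fun z : ℂ => ∫ x, f x * (g x : ℂ) ^ z ∂ν)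
      {z | a < z.re ∧ z.re < b} := by
  rintro z ⟨hz1, hz2⟩
  apply DifferentiableAt.differentiableWithinAt
  obtain ⟨δ, hδ, h1, h2⟩ : ∃ δ : ℝ, 0 < δ ∧ a + 2 * δ ≤ z.re ∧ z.re + 2 * δ ≤ b := by
    refine ⟨min (z.re - a) (b - z.re) / 2, ?_, ?_, ?_⟩
    · have := lt_min (sub_pos.2 hz1) (sub_pos.2 hz2)
      linarith
    · linarith [min_le_left (z.re - a) (b - z.re)]
    · linarith [min_le_right (z.re - a) (b - z.re)]
  have := hasDerivAt_integral_of_dominated_loc_of_deriv_le (μ := ν) (𝕜 := ℂ)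
    (F := fun z x => f x * (g x : ℂ) ^ z)
    (F' := fun z x => f x * ((g x : ℂ) ^ z * Complex.log (g x))) (x₀ := z)
    (s := Metric.ball z δ) (bound := fun x => ‖f x‖ * (g x ^ a + g x ^ b) / δ)
    (Metric.ball_mem_nhds z hδ) (Filter.Eventually.of_forall fun z => meas_aux hf hg z)
    (term_integrable_aux hf hg hpos ha hb hz1.le hz2.le) ?_ ?_ ?_ ?_
  · exact this.2.differentiableAt
  · apply hf.mul
    have hg' := Complex.measurable_ofReal.comp_aemeasurable hg
    exact ((hg'.pow_const z).mul (Complex.measurable_log.comp_aemeasurable hg')).aestronglyMeasurable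
  · filter_upwards [hpos] with x hx w hw
    have hw' : |w.re - z.re| < δ := by
      have h := Complex.abs_re_le_norm (w - z)
      rw [Metric.mem_ball, dist_eq_norm] at hw
      rw [← Complex.sub_re]
      linarith
    rw [abs_lt] at hw'
    rw [norm_mul, norm_mul, Complex.norm_cpow_eq_rpow_re_of_pos hx, ← Complex.ofReal_log hx.le,
      Complex.norm_real, Real.norm_eq_abs, mul_div_assoc]
    gcongr
    exact rpow_mul_log_aux hx hδ (by linarith) (by linarith)
  · exact (bound_integrable_aux hpos ha hb).div_const δ
  · filter_upwards [hpos] with x hx w hw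
    apply HasDerivAt.const_mul
    have h := (hasDerivAt_id w).const_cpow (c := (g x : ℂ)) (Or.inl (by exact_mod_cast hx.ne'))
    simpa using h

lemma continuation_aux (hf : AEStronglyMeasurable f ν) (hg : AEMeasurable g ν)
    (hpos : ∀ᵐ x ∂ν, 0 < g x)
    (ha : Integrable (fun x => f x * (g x : ℂ) ^ (a : ℂ)) ν)
    (hb : Integrable (fun x => f x * (g x : ℂ) ^ (b : ℂ)) ν)
    {P : ℂ → ℂ} (hP : Differentiable ℂ P) {C : ℂ} {c : ℝ} (hac : a ≤ c) (hcb : c < b)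
    (h : ∀ s : ℝ, c < s → s < b → (∫ x, f x * (g x : ℂ) ^ (s : ℂ) ∂ν) * P s = C)
    {z : ℂ} (hz1 : a < z.re) (hz2 : z.re < b) :
    (∫ x, f x * (g x : ℂ) ^ z ∂ν) * P z = C := by
  set U : Set ℂ := {z | a < z.re ∧ z.re < b} with hU
  have hUo : IsOpen U := (isOpen_lt continuous_const Complex.continuous_re).inter
    (isOpen_lt Complex.continuous_re continuous_const)
  have hUc : IsPreconnected U := by
    apply Convex.isPreconnected
    exact (convex_halfSpace_re_gt a).inter (convex_halfSpace_re_lt b)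
  have hA : AnalyticOnNhd ℂ (fun z : ℂ => (∫ x, f x * (g x : ℂ) ^ z ∂ν) * P z) U :=
    ((differentiableOn_aux hf hg hpos ha hb).mul hP.differentiableOn).analyticOnNhd hUo
  have hC : AnalyticOnNhd ℂ (fun _ : ℂ => C) U := analyticOnNhd_const
  set s0 : ℝ := (c + b) / 2
  have hs0 : (s0 : ℂ) ∈ U := by
    simp only [hU, Set.mem_ofPred_eq, Complex.ofReal_re, s0]
    constructor <;> linarith
  refine hA.eqOn_of_preconnected_of_frequently_eq hC hUc hs0 ?_ (show z ∈ U from ⟨hz1, hz2⟩)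
  have ht : Filter.Tendsto (fun s : ℝ => (s : ℂ)) (nhdsWithin s0 {s0}ᶜ)
      (nhdsWithin (s0 : ℂ) {(s0 : ℂ)}ᶜ) := by
    apply tendsto_nhdsWithin_of_tendsto_nhds_of_eventually_within
    · exact (Complex.continuous_ofReal.tendsto s0).mono_left nhdsWithin_le_nhds
    · filter_upwards [self_mem_nhdsWithin] with s hs
      simpa using hs
  apply ht.frequently
  apply Filter.Eventually.frequently
  have : Set.Ioo c b ∈ nhds s0 := Ioo_mem_nhds (by simp only [s0]; linarith)
    (by simp only [s0]; linarith)
  filter_upwards [nhdsWithin_le_nhds this] with s hs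
  exact h s hs.1 hs.2

lemma continuation_zero_aux (hf : AEStronglyMeasurable f ν) (hg : AEMeasurable g ν)
    (hpos : ∀ᵐ x ∂ν, 0 < g x)
    (ha : Integrable (fun x => f x * (g x : ℂ) ^ (a : ℂ)) ν)
    (hb : Integrable (fun x => f x * (g x : ℂ) ^ (b : ℂ)) ν)
    {P : ℂ → ℂ} (hP : Differentiable ℂ P) {C : ℂ} {c : ℝ} (hac : a ≤ c) (hcb : c < b)
    (h : ∀ s : ℝ, c < s → s < b → (∫ x, f x * (g x : ℂ) ^ (s : ℂ) ∂ν) * P s = C)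
    {z : ℂ} (hz1 : a ≤ z.re) (hz2 : z.re < b) (hz : P z = 0) : C = 0 := by
  set M := ∫ x, ‖f x‖ * (g x ^ a + g x ^ b) ∂ν
  have hbd : ∀ t : ℝ, 0 < t → t < b - z.re → ‖C‖ ≤ M * ‖P (z + t)‖ := by
    intro t ht htb
    have h1 : a < (z + t).re := by simp; linarith
    have h2 : (z + t).re < b := by simp; linarith
    rw [← continuation_aux hf hg hpos ha hb hP hac hcb h h1 h2, norm_mul]
    gcongr
    apply norm_integral_le_of_norm_le (bound_integrable_aux hpos ha hb)
    filter_upwards [hpos] with x hx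
    rw [norm_term_aux hx]
    gcongr
    exact rpow_le_add_aux hx h1.le h2.le
  have hlim : Filter.Tendsto (fun t : ℝ => M * ‖P (z + t)‖) (nhdsWithin 0 (Set.Ioi 0))
      (nhds 0) := by
    have hc : Continuous (fun t : ℝ => M * ‖P (z + t)‖) := by
      have := hP.continuous
      fun_prop
    have := hc.tendsto 0
    simp only [Complex.ofReal_zero, add_zero, hz, norm_zero, mul_zero] at this
    exact this.mono_left nhdsWithin_le_nhds
  have : ‖C‖ ≤ 0 := by
    refine ge_of_tendsto hlim ?_
    filter_upwards [Ioo_mem_nhdsGT (show (0:ℝ) < b - z.re by linarith)] with t ht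
    exact hbd t ht.1 ht.2
  simpa using this
end

section
variable {E : Type*} [NormedAddCommGroup E] [InnerProductSpace ℝ E] [FiniteDimensional ℝ E]

lemma one_mem_cone_aux (jmul : E →ₗ[ℝ] E →ₗ[ℝ] E) (one : E)
    (hcomm : ∀ x y, jmul x y = jmul y x) (hone : ∀ x, jmul one x = x) :
    one ∈ interior {x | ∃ y, x = jmul y y} := by
  let B : E →L[ℝ] E →L[ℝ] E :=
    ((LinearMap.toContinuousLinearMap : (E →ₗ[ℝ] E) ≃ₗ[ℝ] _).toLinearMap ∘ₗ jmul).toContinuousLinearMap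
  have hB : ∀ x y, B x y = jmul x y := fun x y => rfl
  have hd : HasStrictFDerivAt (fun y => B y y)
      ((B one).comp (ContinuousLinearMap.id ℝ E) + (B.flip one).comp (ContinuousLinearMap.id ℝ E))
      one := by
    have h := B.hasStrictFDerivAt_of_bilinear (hasStrictFDerivAt_id one) (hasStrictFDerivAt_id one)
    refine h.congr_fderiv ?_
    ext x
    rfl
  have hs := hd.map_nhds_eq_of_surj (by
    rw [LinearMap.range_eq_top]
    intro w
    refine ⟨(1/2 : ℝ) • w, ?_⟩
    simp only [ContinuousLinearMap.coe_coe, add_apply,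
      ContinuousLinearMap.comp_apply, ContinuousLinearMap.id_apply, ContinuousLinearMap.flip_apply, hB]
    rw [hcomm _ one, hone, ← add_smul]
    norm_num)
  rw [mem_interior_iff_mem_nhds]
  have h1 : B one one = one := by rw [hB, hone]
  rw [h1] at hs
  rw [← hs, Filter.mem_map]
  exact Filter.Eventually.of_forall fun y => ⟨y, rfl⟩

lemma jinv_aemeasurable_aux [MeasurableSpace E] [BorelSpace E]
    (μ : Measure E) [μ.IsAddHaarMeasure]
    (jmul : E →ₗ[ℝ] E →ₗ[ℝ] E) (one : E) (Ω : Set E) (hΩ : MeasurableSet Ω) (jinv : E → E)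
    (hone : ∀ x, jmul one x = x) (hinvmul : ∀ x ∈ Ω, jmul x (jinv x) = one) :
    AEMeasurable jinv (μ.restrict Ω) := by
  let e := Module.End.toContinuousLinearMap (𝕜 := ℝ) E
  let A : E →ₗ[ℝ] E →L[ℝ] E := e.toLinearMap ∘ₗ jmul
  have hA : Continuous A := A.continuous_of_finiteDimensional
  let S : Set E := {v | IsUnit (A v)}
  have hS : IsOpen S := Units.isOpen.preimage hA
  have hae : ∀ᵐ v ∂μ, v ∈ S := by
    refine ae_mem_of_ae_add_linearMap_mem (LinearMap.toSpanSingleton ℝ E one) volume μ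
      hS.measurableSet ?_
    intro y
    have hfin : (spectrum ℝ (jmul y : Module.End ℝ E)).Finite := Module.End.finite_spectrum _
    have hnull : volume ((fun t : ℝ => -t) ⁻¹' (spectrum ℝ (jmul y : Module.End ℝ E))) = 0 :=
      (hfin.preimage neg_injective.injOn).measure_zero _
    filter_upwards [measure_eq_zero_iff_ae_notMem.1 hnull] with t ht
    rw [Set.mem_preimage, spectrum.notMem_iff] at ht
    show IsUnit (e (jmul _))
    apply IsUnit.map
    rw [← IsUnit.neg_iff]
    have heq : -(jmul (y + LinearMap.toSpanSingleton ℝ E one t) : Module.End ℝ E) =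
        algebraMap ℝ (Module.End ℝ E) (-t) - jmul y := by
      refine LinearMap.ext fun x => ?_
      rw [LinearMap.neg_apply, LinearMap.sub_apply, Module.algebraMap_end_apply,
        LinearMap.toSpanSingleton_apply, map_add, map_smul, LinearMap.add_apply,
        LinearMap.smul_apply, hone, neg_smul]
      abel
    rw [heq]
    exact ht
  let F : E → E := fun v => Ring.inverse (A v) one
  have hF : ContinuousOn F S := by
    intro v hv
    obtain ⟨u, hu⟩ := (hv : IsUnit (A v))
    apply ContinuousAt.continuousWithinAt
    have h1 : ContinuousAt Ring.inverse (A v) := hu ▸ NormedRing.inverse_continuousAt u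
    have h2 : ContinuousAt (fun v => Ring.inverse (A v)) v :=
      ContinuousAt.comp (f := A) (x := v) h1 hA.continuousAt
    exact h2.clm_apply continuousAt_const
  have hFm : AEMeasurable F μ := by
    have h := hF.aemeasurable (μ := μ) hS.measurableSet
    rwa [Measure.restrict_eq_self_of_ae_mem hae] at h
  refine hFm.restrict.congr ?_
  filter_upwards [ae_restrict_of_ae hae, ae_restrict_mem hΩ] with v hv hvΩ
  have h1 : A v (jinv v) = one := hinvmul v hvΩ
  have h2 : (Ring.inverse (A v) * A v) (jinv v) = jinv v := by
    rw [Ring.inverse_mul_cancel _ hv]; rfl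
  rw [mul_apply_eq_comp, h1] at h2
  exact h2
end

lemma fubini_aux {E : Type*} [NormedAddCommGroup E] [InnerProductSpace ℝ E] [FiniteDimensional ℝ E]
    [MeasurableSpace E] [BorelSpace E] (ν : Measure E) [SFinite ν] (Δ : E → ℝ) (jinv : E → E)
    (one : E) (hΔ : AEMeasurable Δ ν) (hj : AEMeasurable jinv ν) (hpos : ∀ᵐ v ∂ν, 0 < Δ v)
    (G p m : ℝ) (lam : ℂ)
    (h1 : ∀ᵐ v ∂ν, Integrable (fun x => Real.exp (-⟪x, jinv v⟫) * Δ x ^ m) ν)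
    (h2 : ∀ᵐ v ∂ν, ∫ x, Real.exp (-⟪x, jinv v⟫) * Δ x ^ m ∂ν = G * Δ v ^ p)
    (h3 : Integrable (fun v => Real.exp (-⟪v, one⟫) * Δ v ^ (p - lam.re)) ν) :
    Integrable (fun x => (∫ v, Complex.exp (((-⟪v, one⟫ - ⟪x, jinv v⟫ : ℝ) : ℂ)) *
        ((Δ v : ℂ) ^ (-lam)) ∂ν) * ((Δ x ^ m : ℝ) : ℂ)) ν ∧
    ∫ x, (∫ v, Complex.exp (((-⟪v, one⟫ - ⟪x, jinv v⟫ : ℝ) : ℂ)) *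
        ((Δ v : ℂ) ^ (-lam)) ∂ν) * ((Δ x ^ m : ℝ) : ℂ) ∂ν
      = (G : ℂ) * ∫ v, ((Real.exp (-⟪v, one⟫) : ℝ) : ℂ) * (Δ v : ℂ) ^ ((p : ℂ) - lam) ∂ν := by
  let F : E → E → ℂ := fun x v => (((Real.exp (-⟪v, one⟫) : ℝ) : ℂ) * (Δ v : ℂ) ^ (-lam)) *
    ((Real.exp (-⟪x, jinv v⟫) * Δ x ^ m : ℝ) : ℂ)
  have hFeq : ∀ x v, F x v = Complex.exp (((-⟪v, one⟫ - ⟪x, jinv v⟫ : ℝ) : ℂ)) *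
        ((Δ v : ℂ) ^ (-lam)) * ((Δ x ^ m : ℝ) : ℂ) := by
    intro x v
    simp only [F]
    rw [← Complex.ofReal_exp, sub_eq_add_neg (-⟪v, one⟫), Real.exp_add]
    push_cast
    ring
  have hFm : AEStronglyMeasurable (Function.uncurry F) (ν.prod ν) := by
    have hx : AEMeasurable (fun q : E × E => Δ q.1) (ν.prod ν) := hΔ.comp_fst
    have hv : AEMeasurable (fun q : E × E => Δ q.2) (ν.prod ν) := hΔ.comp_snd
    have hjv : AEMeasurable (fun q : E × E => jinv q.2) (ν.prod ν) := hj.comp_snd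
    have hq1 : AEMeasurable (fun q : E × E => q.1) (ν.prod ν) := measurable_fst.aemeasurable
    have hq2 : AEMeasurable (fun q : E × E => q.2) (ν.prod ν) := measurable_snd.aemeasurable
    have hi1 : AEMeasurable (fun q : E × E => ⟪q.1, jinv q.2⟫) (ν.prod ν) := hq1.inner hjv
    have hi2 : AEMeasurable (fun q : E × E => ⟪q.2, one⟫) (ν.prod ν) := hq2.inner aemeasurable_const
    apply AEMeasurable.aestronglyMeasurable
    refine AEMeasurable.mul (AEMeasurable.mul ?_ ?_) ?_
    · exact Complex.measurable_ofReal.comp_aemeasurable hi2.neg.exp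
    · exact (Complex.measurable_ofReal.comp_aemeasurable hv).pow_const _
    · exact Complex.measurable_ofReal.comp_aemeasurable (hi1.neg.exp.mul (hx.pow_const m))
  have hFi : Integrable (Function.uncurry F) (ν.prod ν) := by
    rw [integrable_prod_iff' hFm]
    constructor
    · filter_upwards [h1] with v hv
      exact (hv.ofReal (𝕜 := ℂ)).const_mul
        (((Real.exp (-⟪v, one⟫) : ℝ) : ℂ) * (Δ v : ℂ) ^ (-lam))
    · refine (h3.const_mul G).congr ?_
      filter_upwards [h2, hpos] with v hv hvp
      have : ∀ᵐ x ∂ν, ‖Function.uncurry F (x, v)‖ =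
          (Real.exp (-⟪v, one⟫) * Δ v ^ (-lam.re)) * (Real.exp (-⟪x, jinv v⟫) * Δ x ^ m) := by
        filter_upwards [hpos] with x hx
        simp only [Function.uncurry, F]
        rw [norm_mul, norm_mul, Complex.norm_cpow_eq_rpow_re_of_pos hvp, Complex.norm_real,
          Complex.norm_real, Real.norm_of_nonneg (Real.exp_pos _).le,
          Real.norm_of_nonneg (by positivity), Complex.neg_re]
      rw [integral_congr_ae this, integral_const_mul, hv, sub_eq_add_neg, Real.rpow_add hvp]
      ring
  have hin : ∀ x, ∫ v, F x v ∂ν = (∫ v, Complex.exp (((-⟪v, one⟫ - ⟪x, jinv v⟫ : ℝ) : ℂ)) *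
        ((Δ v : ℂ) ^ (-lam)) ∂ν) * ((Δ x ^ m : ℝ) : ℂ) := by
    intro x
    rw [← integral_mul_const]
    simp only [hFeq]
  simp only [← hin]
  refine ⟨hFi.integral_prod_left, ?_⟩
  rw [integral_integral_swap hFi, ← integral_const_mul]
  apply integral_congr_ae
  filter_upwards [h2, hpos] with v hv hvp
  simp only [F]
  rw [integral_const_mul, integral_complex_ofReal, hv, sub_eq_add_neg,
    Complex.cpow_add _ _ (by exact_mod_cast hvp.ne')]
  push_cast [Complex.ofReal_cpow hvp.le]
  ring

/-- **Convergence and value of the K-Bessel integral.** Let `Ω` be the symmetric cone of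
a Euclidean Jordan algebra of rank `r` and dimension `n`, with determinant `Δ`.  For
`λ ∈ ℂ` and `m ∈ ℝ`, the integral `∫_Ω 𝒦_λ(x) Δ(x)^m dx` converges if and only if
`m > −1` and `m − Re λ > −2 − (r−1)d/2`, and in that case it equals
`Γ_Ω(m + n/r)·Γ_Ω(m − λ + 2n/r)`. -/
theorem coneKBessel_weighted_integral
    {E : Type*} [NormedAddCommGroup E] [InnerProductSpace ℝ E] [FiniteDimensional ℝ E]
    [MeasurableSpace E] [BorelSpace E]
    (μ : Measure E) [μ.IsAddHaarMeasure]
    (jmul : E →ₗ[ℝ] E →ₗ[ℝ] E) (one : E) (Ω : Set E) (Δ tr : E → ℝ) (jinv : E → E)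
    (r : ℕ) (d : ℝ) (hr : 1 ≤ r) (hd : 0 < d)
    (hcomm : ∀ x y, jmul x y = jmul y x)
    (hjordan : ∀ x y, jmul (jmul x x) (jmul x y) = jmul x (jmul (jmul x x) y))
    (hone : ∀ x, jmul one x = x)
    (htr : ∀ x, tr x = ⟪x, one⟫)
    (hinner : ∀ x y, ⟪x, y⟫ = tr (jmul x y))
    (hΩ : Ω = interior {x | ∃ y, x = jmul y y})
    (hdim : (Module.finrank ℝ E : ℝ) = r + r * ((r : ℝ) - 1) * d / 2)
    (hΔpos : ∀ x ∈ Ω, 0 < Δ x)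
    (hΔone : Δ one = 1)
    (hΔhom : ∀ c : ℝ, 0 < c → ∀ x, Δ (c • x) = c ^ r * Δ x)
    (hinvΩ : ∀ x ∈ Ω, jinv x ∈ Ω)
    (hinvinv : ∀ x ∈ Ω, jinv (jinv x) = x)
    (hinvmul : ∀ x ∈ Ω, jmul x (jinv x) = one)
    (hΔinv : ∀ x ∈ Ω, Δ (jinv x) = (Δ x)⁻¹)
    (hLap : ∀ l : ℝ, ((r : ℝ) - 1) * d / 2 < l → ∀ y ∈ Ω,
      ∫ x in Ω, Real.exp (-⟪x, y⟫) * Δ x ^ (l - (Module.finrank ℝ E : ℝ) / r) ∂μ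
        = ((2 * Real.pi) ^ ((r : ℝ) * ((r : ℝ) - 1) * d / 4)
            * ∏ i ∈ Finset.range r, Real.Gamma (l - (i : ℝ) * d / 2)) * Δ y ^ (-l))
    (lam : ℂ) (m : ℝ) :
    (IntegrableOn
        (fun x => coneKBessel μ Ω Δ tr jinv lam x * ((Δ x ^ m : ℝ) : ℂ)) Ω μ
      ↔ (-1 < m ∧ -2 - ((r : ℝ) - 1) * d / 2 < m - lam.re)) ∧
    ((-1 < m ∧ -2 - ((r : ℝ) - 1) * d / 2 < m - lam.re) →
      ∫ x in Ω, coneKBessel μ Ω Δ tr jinv lam x * ((Δ x ^ m : ℝ) : ℂ) ∂μ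
        = gindikinGamma r d ((m : ℂ) + (Module.finrank ℝ E : ℝ) / r)
            * gindikinGamma r d ((m : ℂ) - lam + 2 * (Module.finrank ℝ E : ℝ) / r)) := by
  have hr0 : (0 : ℝ) < r := by exact_mod_cast hr
  set N : ℝ := (Module.finrank ℝ E : ℝ) / r with hNdef
  have hN : N = 1 + ((r : ℝ) - 1) * d / 2 := by
    rw [hNdef, hdim]; field_simp
  have hmem1 : one ∈ Ω := hΩ ▸ one_mem_cone_aux jmul one hcomm hone
  have hΩm : MeasurableSet Ω := by rw [hΩ]; exact isOpen_interior.measurableSet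
  set ν := μ.restrict Ω with hν
  have hmemΩ : ∀ᵐ v ∂ν, v ∈ Ω := ae_restrict_mem hΩm
  have hpos : ∀ᵐ v ∂ν, 0 < Δ v := hmemΩ.mono hΔpos
  have hjm : AEMeasurable jinv ν := jinv_aemeasurable_aux μ jmul one Ω hΩm jinv hone hinvmul
  set c0 : ℝ := (2 * Real.pi) ^ ((r : ℝ) * ((r : ℝ) - 1) * d / 4) with hc0
  have hc0pos : 0 < c0 := by positivity
  -- arguments of the Gamma factors have positive real part
  have harg : ∀ l : ℝ, ((r : ℝ) - 1) * d / 2 < l → ∀ i ∈ Finset.range r,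
      0 < l - (i : ℝ) * d / 2 := by
    intro l hl i hi
    have hi' : (i : ℝ) + 1 ≤ r := by exact_mod_cast Finset.mem_range.1 hi
    nlinarith
  have hGpos : ∀ l : ℝ, ((r : ℝ) - 1) * d / 2 < l →
      0 < c0 * ∏ i ∈ Finset.range r, Real.Gamma (l - (i : ℝ) * d / 2) := by
    intro l hl
    exact mul_pos hc0pos (Finset.prod_pos fun i hi => Real.Gamma_pos_of_pos (harg l hl i hi))
  have hGne : ∀ z : ℂ, ((r : ℝ) - 1) * d / 2 < z.re → ∀ i ∈ Finset.range r,
      Complex.Gamma (z - (i : ℝ) * d / 2) ≠ 0 := by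
    intro z hz i hi
    apply Complex.Gamma_ne_zero_of_re_pos
    have h := harg z.re hz i hi
    have he : (z - (i : ℝ) * d / 2 : ℂ) = z - (((i : ℝ) * d / 2 : ℝ) : ℂ) := by push_cast; ring
    rw [he, Complex.sub_re, Complex.ofReal_re]
    exact h
  have hGreal : ∀ l : ℝ, ((c0 * ∏ i ∈ Finset.range r, Real.Gamma (l - (i : ℝ) * d / 2) : ℝ) : ℂ)
      = gindikinGamma r d l := by
    intro l
    simp only [gindikinGamma, ← hc0, Complex.ofReal_mul, Complex.ofReal_prod,
      ← Complex.Gamma_ofReal]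
    congr 1
    apply Finset.prod_congr rfl
    intro i _
    push_cast
    ring_nf
  have hGinv : ∀ z : ℂ, ((r : ℝ) - 1) * d / 2 < z.re →
      gindikinGamma r d z * ∏ i ∈ Finset.range r, (Complex.Gamma (z - (i : ℝ) * d / 2))⁻¹
        = (c0 : ℂ) := by
    intro z hz
    simp only [gindikinGamma, ← hc0]
    rw [mul_assoc, ← Finset.prod_mul_distrib, Finset.prod_eq_one, mul_one]
    intro i hi
    exact mul_inv_cancel₀ (hGne z hz i hi)
  have hPdiff : ∀ w : ℂ, Differentiable ℂ
      (fun z : ℂ => ∏ i ∈ Finset.range r, (Complex.Gamma (z + w - (i : ℝ) * d / 2))⁻¹) := by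
    intro w
    apply Differentiable.fun_finsetProd
    intro i _
    exact Complex.differentiable_one_div_Gamma.comp
      ((differentiable_id.add_const w).sub_const ((i : ℝ) * d / 2 : ℂ))
  -- integrability of the Laplace integrals
  have hLapI : ∀ l : ℝ, ((r : ℝ) - 1) * d / 2 < l → ∀ y ∈ Ω,
      Integrable (fun x => Real.exp (-⟪x, y⟫) * Δ x ^ (l - N)) ν := by
    intro l hl y hy
    by_contra hcon
    have h := hLap l hl y hy
    rw [integral_undef hcon] at h
    have := mul_pos (hGpos l hl) (Real.rpow_pos_of_pos (hΔpos y hy) (-l))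
    linarith
  have hΔm : AEMeasurable Δ ν := by
    have h := (hLapI (N + 1) (by linarith) one hmem1).aestronglyMeasurable.aemeasurable
    have he : AEMeasurable (fun x : E => Real.exp ⟪x, one⟫) ν := by
      have : Continuous (fun x : E => Real.exp ⟪x, one⟫) := by fun_prop
      exact this.aemeasurable
    refine (he.mul h).congr (Filter.Eventually.of_forall fun x => ?_)
    simp only [add_sub_cancel_left, Real.rpow_one, Pi.mul_apply]
    rw [← mul_assoc, ← Real.exp_add, add_neg_cancel, Real.exp_zero, one_mul]
  -- Laplace integral at one with complex parameter
  have hfm : AEStronglyMeasurable (fun v : E => ((Real.exp (-⟪v, one⟫) : ℝ) : ℂ)) ν := by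
    have : Continuous (fun v : E => ((Real.exp (-⟪v, one⟫) : ℝ) : ℂ)) := by fun_prop
    exact this.aestronglyMeasurable
  have hLapCI : ∀ l : ℝ, ((r : ℝ) - 1) * d / 2 < l + N →
      Integrable (fun v => ((Real.exp (-⟪v, one⟫) : ℝ) : ℂ) * (Δ v : ℂ) ^ (l : ℂ)) ν := by
    intro l hl
    refine ((hLapI (l + N) hl one hmem1).ofReal (𝕜 := ℂ)).congr ?_
    filter_upwards [hpos] with v hv
    simp only [add_sub_cancel_right, Complex.coe_algebraMap]
    push_cast [Complex.ofReal_cpow hv.le]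
    rfl
  have hLapC : ∀ z : ℂ, ((r : ℝ) - 1) * d / 2 < (z + N).re →
      ∫ v, ((Real.exp (-⟪v, one⟫) : ℝ) : ℂ) * (Δ v : ℂ) ^ z ∂ν = gindikinGamma r d (z + N) := by
    intro z hz
    have hz' : ((r : ℝ) - 1) * d / 2 < z.re + N := by simpa using hz
    obtain ⟨a, ha1, ha2⟩ : ∃ a, ((r : ℝ) - 1) * d / 2 - N < a ∧ a < z.re :=
      exists_between (by linarith)
    have key := continuation_aux (ν := ν) hfm hΔm hpos (a := a) (b := z.re + 1)
      (hLapCI a (by linarith)) (hLapCI (z.re + 1) (by linarith)) (hPdiff N) (C := (c0 : ℂ))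
      (c := a) le_rfl (by linarith) ?_ (z := z) ha2 (by linarith)
    · rw [← hGinv (z + N) hz] at key
      refine mul_right_cancel₀ ?_ key
      exact Finset.prod_ne_zero_iff.2 fun i hi => inv_ne_zero (hGne _ hz i hi)
    · intro s hs1 hs2
      have hsl : ((r : ℝ) - 1) * d / 2 < s + N := by linarith
      have h := hLap (s + N) hsl one hmem1
      rw [hΔone, Real.one_rpow, mul_one] at h
      have h' : ∫ v, ((Real.exp (-⟪v, one⟫) : ℝ) : ℂ) * (Δ v : ℂ) ^ (s : ℂ) ∂ν
          = gindikinGamma r d ((s : ℂ) + N) := by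
        have hg := hGreal (s + N)
        rw [Complex.ofReal_add] at hg
        rw [← hg, ← h, ← integral_complex_ofReal]
        apply integral_congr_ae
        filter_upwards [hpos] with v hv
        rw [add_sub_cancel_right]
        push_cast [Complex.ofReal_cpow hv.le]
        rfl
      rw [h']
      exact hGinv _ (by simpa using hsl)
  -- the main computation
  have hK : ∀ x, coneKBessel μ Ω Δ tr jinv lam x =
      ∫ v, Complex.exp (((-⟪v, one⟫ - ⟪x, jinv v⟫ : ℝ) : ℂ)) * ((Δ v : ℂ) ^ (-lam)) ∂ν := by
    intro x
    simp only [coneKBessel, htr, hν]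
  have hmain : ∀ s : ℝ, (-1 < s ∧ -2 - ((r : ℝ) - 1) * d / 2 < s - lam.re) →
      Integrable (fun x => coneKBessel μ Ω Δ tr jinv lam x * ((Δ x ^ s : ℝ) : ℂ)) ν ∧
      ∫ x, coneKBessel μ Ω Δ tr jinv lam x * ((Δ x ^ s : ℝ) : ℂ) ∂ν
        = gindikinGamma r d ((s : ℂ) + N) * gindikinGamma r d ((s : ℂ) - lam + 2 * N) := by
    rintro s ⟨hs1, hs2⟩
    have hl : ((r : ℝ) - 1) * d / 2 < s + N := by linarith
    have h := fubini_aux ν Δ jinv one hΔm hjm hpos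
      (c0 * ∏ i ∈ Finset.range r, Real.Gamma (s + N - (i : ℝ) * d / 2)) (s + N) s lam ?_ ?_ ?_
    · simp only [hK]
      refine ⟨h.1, h.2.trans ?_⟩
      rw [hGreal, hLapC]
      · push_cast
        ring_nf
      · simp only [Complex.add_re, Complex.sub_re, Complex.ofReal_re]
        linarith
    · filter_upwards [hmemΩ] with v hv
      simpa only [add_sub_cancel_right] using hLapI (s + N) hl _ (hinvΩ v hv)
    · filter_upwards [hmemΩ] with v hv
      have h := hLap (s + N) hl _ (hinvΩ v hv)
      rw [add_sub_cancel_right, hΔinv v hv, Real.inv_rpow (hΔpos v hv).le,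
        Real.rpow_neg (hΔpos v hv).le, inv_inv] at h
      exact h
    · have h := hLapI (s + N - lam.re + N) (by linarith) one hmem1
      simpa only [add_sub_cancel_right] using h
  have hfin : ((m : ℂ) + (Module.finrank ℝ E : ℝ) / r) = (m : ℂ) + N ∧
      ((m : ℂ) - lam + 2 * (Module.finrank ℝ E : ℝ) / r) = (m : ℂ) - lam + 2 * N := by
    rw [hNdef]
    push_cast
    constructor
    · ring
    · ring
  refine ⟨⟨fun hint => ?_, fun h => (hmain m h).1⟩, fun h => ?_⟩
  swap
  · rw [hfin.1, hfin.2]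
    exact (hmain m h).2
  -- necessity
  set K : E → ℂ := fun x => coneKBessel μ Ω Δ tr jinv lam x with hKdef
  have hcp : ∀ s : ℝ, (fun x => K x * ((Δ x ^ s : ℝ) : ℂ)) =ᵐ[ν]
      fun x => K x * (Δ x : ℂ) ^ (s : ℂ) := by
    intro s
    filter_upwards [hpos] with x hx
    rw [Complex.ofReal_cpow hx.le]
  have hint' : Integrable (fun x => K x * (Δ x : ℂ) ^ (m : ℂ)) ν :=
    Integrable.congr hint (hcp m)
  have hKm : AEStronglyMeasurable K ν := by
    have h1 := (meas_aux hint'.aestronglyMeasurable hΔm (-(m : ℂ)))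
    refine h1.congr ?_
    filter_upwards [hpos] with x hx
    have hx' : (Δ x : ℂ) ≠ 0 := by exact_mod_cast hx.ne'
    rw [mul_assoc, ← Complex.cpow_add _ _ hx', add_neg_cancel, Complex.cpow_zero, mul_one]
  obtain ⟨c, hc1, hc2, hc3⟩ : ∃ c : ℝ, m ≤ c ∧ -1 ≤ c ∧
      lam.re - 2 - ((r : ℝ) - 1) * d / 2 ≤ c :=
    ⟨max m (max (-1) (lam.re - 2 - ((r : ℝ) - 1) * d / 2)), le_max_left _ _,
      (le_max_left _ _).trans (le_max_right _ _), (le_max_right _ _).trans (le_max_right _ _)⟩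
  have hbint : Integrable (fun x => K x * (Δ x : ℂ) ^ ((c + 1 : ℝ) : ℂ)) ν :=
    Integrable.congr (hmain (c + 1) ⟨by linarith, by linarith⟩).1 (hcp _)
  have hzero : ∀ z : ℂ, m ≤ z.re → z.re < c + 1 →
      (∏ i ∈ Finset.range r, (Complex.Gamma (z + N - (i : ℝ) * d / 2))⁻¹) *
      (∏ i ∈ Finset.range r, (Complex.Gamma (z + (2 * N - lam) - (i : ℝ) * d / 2))⁻¹) ≠ 0 := by
    intro z hz1 hz2 hz
    have h0 := continuation_zero_aux (ν := ν) hKm hΔm hpos hint' hbint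
      ((hPdiff N).mul (hPdiff (2 * N - lam))) (C := (c0 : ℂ) * c0) (c := c) hc1 (by linarith)
      ?_ hz1 hz2 hz
    · have : (c0 : ℂ) ≠ 0 := by exact_mod_cast hc0pos.ne'
      exact mul_ne_zero this this h0
    · intro s hs1 hs2
      have h := (hmain s ⟨by linarith, by linarith⟩).2
      have e1 := hGinv ((s : ℂ) + N) (by
        rw [Complex.add_re, Complex.ofReal_re, Complex.ofReal_re]; linarith)
      have e2 := hGinv ((s : ℂ) - lam + 2 * N) (by
        have he : ((s : ℂ) - lam + 2 * N) = ((s + 2 * N : ℝ) : ℂ) - lam := by push_cast; ring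
        rw [he, Complex.sub_re, Complex.ofReal_re]; linarith)
      have e3 : (s : ℂ) + (2 * N - lam) = (s : ℂ) - lam + 2 * N := by ring
      rw [← integral_congr_ae (hcp s), h]
      simp only [Pi.mul_apply, e3]
      rw [mul_mul_mul_comm, e1, e2]
  have hlast : r - 1 ∈ Finset.range r := Finset.mem_range.2 (by omega)
  have hcast : ((r - 1 : ℕ) : ℝ) = (r : ℝ) - 1 := by push_cast [hr]; ring
  have hNC : (N : ℂ) = 1 + ((r : ℝ) - 1) * d / 2 := by rw [hN]; push_cast; ring
  constructor
  · by_contra hm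
    push Not at hm
    refine hzero (-1) (by simpa using hm) (by simp; linarith) ?_
    apply mul_eq_zero_of_left
    apply Finset.prod_eq_zero hlast
    rw [hcast, hNC, inv_eq_zero, ← Complex.Gamma_zero]
    congr 1
    push_cast
    ring
  · by_contra hm
    push Not at hm
    refine hzero (lam - (2 + ((r : ℝ) - 1) * d / 2 : ℝ)) ?_ ?_ ?_
    · rw [Complex.sub_re, Complex.ofReal_re]; linarith
    · rw [Complex.sub_re, Complex.ofReal_re]; linarith
    · apply mul_eq_zero_of_right
      apply Finset.prod_eq_zero hlast
      rw [hcast, hNC, inv_eq_zero, ← Complex.Gamma_zero]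
      congr 1
      push_cast
      ring
end

section
/- With Ω, Δ, d, r, n as above, the integral ∫_Ω |K_λ(x)|² Δ(x)^μ dx converges if and only if μ > −1 and μ − 2Re λ > −3 − (r−1)d. -/
open MeasureTheory Real
open scoped RealInnerProductSpace

section JordanPart

variable {E : Type*} [NormedAddCommGroup E] [InnerProductSpace ℝ E] [FiniteDimensional ℝ E]

/-- Operator form of the linearized Jordan identity. -/
theorem jordan_lin (jmul : E →ₗ[ℝ] E →ₗ[ℝ] E)
    (hcomm : ∀ x y, jmul x y = jmul y x)
    (hjordan : ∀ x y, jmul (jmul x x) (jmul x y) = jmul x (jmul (jmul x x) y))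
    (a b c y : E) :
    jmul (jmul a b) (jmul c y) + jmul (jmul b c) (jmul a y) + jmul (jmul c a) (jmul b y)
      = jmul c (jmul (jmul a b) y) + jmul a (jmul (jmul b c) y) + jmul b (jmul (jmul c a) y) := by
  have h1 := hjordan (a + b + c) y
  have h2 := hjordan (a + b) y
  have h3 := hjordan (b + c) y
  have h4 := hjordan (c + a) y
  have h5 := hjordan a y
  have h6 := hjordan b y
  have h7 := hjordan c y
  simp only [map_add, LinearMap.add_apply] at h1 h2 h3 h4
  rw [hcomm b a, hcomm c b] at h1
  rw [hcomm b a] at h2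
  rw [hcomm c b] at h3
  rw [hcomm a c] at h1 h4
  linear_combination (norm := module) (1 / 2 : ℝ) • (h1 - h2 - h3 - h4 + h5 + h6 + h7)

theorem jordan_op (jmul : E →ₗ[ℝ] E →ₗ[ℝ] E)
    (hcomm : ∀ x y, jmul x y = jmul y x)
    (hjordan : ∀ x y, jmul (jmul x x) (jmul x y) = jmul x (jmul (jmul x x) y))
    (a b c y : E) :
    jmul (jmul (jmul a b) c) y
      = jmul c (jmul (jmul a b) y) + jmul a (jmul (jmul b c) y) + jmul b (jmul (jmul c a) y)
        - jmul a (jmul c (jmul b y)) - jmul b (jmul c (jmul a y)) := by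
  have h1 := jordan_lin jmul hcomm hjordan a b c y
  have h2 := jordan_lin jmul hcomm hjordan a b y c
  rw [hcomm y (jmul (jmul a b) c), hcomm y c, hcomm (jmul b y) (jmul a c),
    hcomm (jmul y a) (jmul b c), hcomm (jmul b y) c, hcomm (jmul y a) c, hcomm y a,
    hcomm a c] at h2
  linear_combination (norm := module) h1 - h2

/-- Polynomial evaluation in a Jordan algebra. -/
noncomputable def jev (jmul : E →ₗ[ℝ] E →ₗ[ℝ] E) (one x : E) : Polynomial ℝ →ₗ[ℝ] E :=
  (LinearMap.applyₗ one : Module.End ℝ E →ₗ[ℝ] E) ∘ₗ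
    (Polynomial.aeval (jmul x : Module.End ℝ E)).toLinearMap

theorem jev_apply (jmul : E →ₗ[ℝ] E →ₗ[ℝ] E) (one x : E) (p : Polynomial ℝ) :
    jev jmul one x p = (Polynomial.aeval (jmul x : Module.End ℝ E) p) one := rfl

theorem jev_commute (jmul : E →ₗ[ℝ] E →ₗ[ℝ] E) (one : E)
    (hcomm : ∀ x y, jmul x y = jmul y x)
    (hjordan : ∀ x y, jmul (jmul x x) (jmul x y) = jmul x (jmul (jmul x x) y))
    (hone : ∀ x, jmul one x = x) (x : E) (p : Polynomial ℝ) :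
    Commute (jmul (jev jmul one x p) : Module.End ℝ E) (jmul x) := by
  have key : ∀ k : ℕ, Commute (jmul (jev jmul one x (Polynomial.X ^ k)) : Module.End ℝ E) (jmul x)
      ∧ Commute (jmul (jev jmul one x (Polynomial.X ^ (k + 1))) : Module.End ℝ E) (jmul x) := by
    intro k
    induction k with
    | zero =>
      have h1 : (jmul one : Module.End ℝ E) = 1 := by ext v; simp [hone]
      refine ⟨by simp [jev_apply, h1], ?_⟩
      simp [jev_apply, hcomm x one, hone]
    | succ k ih =>
      refine ⟨ih.2, ?_⟩
      set a := jev jmul one x (Polynomial.X ^ k) with ha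
      have hb : jev jmul one x (Polynomial.X ^ (k + 1)) = jmul a x := by
        rw [hcomm a x, ha, jev_apply, jev_apply, pow_succ']
        simp
      have hc : jev jmul one x (Polynomial.X ^ (k + 1 + 1)) = jmul (jmul a x) x := by
        rw [hcomm _ x, ← hb, jev_apply, jev_apply, pow_succ']
        simp
      have hop : (jmul (jmul (jmul a x) x) : Module.End ℝ E)
          = jmul x * jmul (jmul a x) + jmul a * jmul (jmul x x) + jmul x * jmul (jmul a x)
            - jmul a * (jmul x * jmul x) - jmul x * (jmul x * jmul a) := by
        ext v
        have := jordan_op jmul hcomm hjordan a x x v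
        rw [hcomm x a] at this
        exact this
      rw [hb] at ih
      have hx2 : Commute (jmul (jmul x x) : Module.End ℝ E) (jmul x) := by
        ext v
        exact hjordan x v
      have hxx := Commute.refl (jmul x : Module.End ℝ E)
      rw [hc, hop]
      exact (((((hxx.mul_left ih.2).add_left (ih.1.mul_left hx2)).add_left
        (hxx.mul_left ih.2)).sub_left (ih.1.mul_left (hxx.mul_left hxx))).sub_left
        (hxx.mul_left (hxx.mul_left ih.1)))
  induction p using Polynomial.induction_on' with
  | add p q hp hq =>
    rw [map_add, map_add]
    exact hp.add_left hq
  | monomial n c =>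
    rw [← mul_one c, ← smul_eq_mul, ← Polynomial.smul_monomial, map_smul, map_smul,
      ← Polynomial.X_pow_eq_monomial]
    exact (key n).1.smul_left c

theorem jev_mul (jmul : E →ₗ[ℝ] E →ₗ[ℝ] E) (one : E)
    (hcomm : ∀ x y, jmul x y = jmul y x)
    (hjordan : ∀ x y, jmul (jmul x x) (jmul x y) = jmul x (jmul (jmul x x) y))
    (hone : ∀ x, jmul one x = x) (x : E) (p q : Polynomial ℝ) :
    jmul (jev jmul one x p) (jev jmul one x q) = jev jmul one x (p * q) := by
  have h := jev_commute jmul one hcomm hjordan hone x p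
  have h2 : Commute (jmul (jev jmul one x p) : Module.End ℝ E)
      (Polynomial.aeval (jmul x : Module.End ℝ E) q) := by
    induction q using Polynomial.induction_on' with
    | add p q hp hq =>
      rw [map_add]
      exact hp.add_right hq
    | monomial n c =>
      rw [Polynomial.aeval_monomial]
      exact (Algebra.commute_algebraMap_right c _).mul_right (h.pow_right n)
  have h3 := congrArg (fun f : Module.End ℝ E => f one) h2.eq
  simp only [Module.End.mul_apply] at h3
  rw [jev_apply jmul one x q, h3, hcomm _ one, hone, mul_comm p q, jev_apply, jev_apply, map_mul]
  rfl

theorem jordan_square_of_nonneg (jmul : E →ₗ[ℝ] E →ₗ[ℝ] E) (one : E) (tr : E → ℝ)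
    (hcomm : ∀ x y, jmul x y = jmul y x)
    (hjordan : ∀ x y, jmul (jmul x x) (jmul x y) = jmul x (jmul (jmul x x) y))
    (hone : ∀ x, jmul one x = x)
    (hinner : ∀ x y : E, ⟪x, y⟫ = tr (jmul x y)) (y : E)
    (hy : ∀ c, jmul c c = c → 0 ≤ ⟪y, c⟫) : ∃ w, y = jmul w w := by
  set φ := jev jmul one y with hφ
  have hmul : ∀ p q, jmul (φ p) (φ q) = φ (p * q) := jev_mul jmul one hcomm hjordan hone y
  have hX : φ Polynomial.X = y := by
    rw [hφ, jev_apply]; simp [hcomm y one, hone]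
  have hone' : φ 1 = one := by rw [hφ, jev_apply]; simp
  have hinv : ∀ v ∈ LinearMap.range φ, jmul y v ∈ LinearMap.range φ := by
    rintro _ ⟨p, rfl⟩
    exact ⟨Polynomial.X * p, by rw [← hmul, hX]⟩
  set A := LinearMap.range φ with hA
  let T : A →ₗ[ℝ] A := (jmul y).restrict hinv
  have hT : T.IsSymmetric := by
    rintro ⟨_, p, rfl⟩ ⟨_, q, rfl⟩
    change ⟪jmul y (φ p), φ q⟫ = ⟪φ p, jmul y (φ q)⟫
    rw [← hX, hinner, hinner, hmul, hmul, hmul, hmul]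
    congr 2
    ring
  let b := hT.eigenvectorBasis rfl
  let ev := hT.eigenvalues rfl
  have hTv : ∀ i, jmul y (b i : E) = ev i • (b i : E) := by
    intro i
    have := hT.apply_eigenvectorBasis rfl i
    have h2 := congrArg (fun z : A => (z : E)) this
    exact h2
  have hpv : ∀ (p : Polynomial ℝ) i, jmul (φ p) (b i : E) = p.eval (ev i) • (b i : E) := by
    intro p i
    obtain ⟨q, hq⟩ := (b i).2
    induction p using Polynomial.induction_on' with
    | add p q hp hq => 
      rw [map_add, map_add, LinearMap.add_apply, hp, hq, Polynomial.eval_add, add_smul]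
    | monomial n c => 
      rw [Polynomial.eval_monomial, ← mul_one c, ← smul_eq_mul, ← Polynomial.smul_monomial,
        map_smul, map_smul, LinearMap.smul_apply,
        ← Polynomial.X_pow_eq_monomial, smul_eq_mul, mul_one, mul_smul]
      congr 1
      induction n with
      | zero => simp [hone', hone]
      | succ n ih =>
        rw [← hq] at ih ⊢
        rw [hmul, pow_succ', mul_assoc, ← hmul, ← hmul, ih, map_smul, hX, hq, hTv, smul_smul,
          pow_succ]
  have hzero : ∀ p : Polynomial ℝ, (∀ i, p.eval (ev i) = 0) → φ p = 0 := by
    intro p hp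
    have h1 : ∀ v : A, jmul (φ p) (v : E) = 0 := by
      intro v
      have : (jmul (φ p)) ∘ₗ A.subtype = 0 := by
        apply b.toBasis.ext
        intro i
        simp [hpv, hp]
      exact congrArg (fun f : A →ₗ[ℝ] E => f v) this
    have h2 := h1 ⟨one, 1, hone'⟩
    rw [hcomm, hone] at h2
    exact h2
  classical
  let S : Finset ℝ := Finset.univ.image ev
  have hinj : Set.InjOn (id : ℝ → ℝ) (S : Set ℝ) := Function.injective_id.injOn
  have hmem : ∀ i, ev i ∈ S := fun i => Finset.mem_image_of_mem _ (Finset.mem_univ _)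
  have hnn : ∀ i, 0 ≤ ev i := by
    intro i
    set l := Lagrange.basis S id (ev i) with hl
    have hl1 : l.eval (ev i) = 1 := Lagrange.eval_basis_self hinj (hmem i)
    have hl0 : ∀ j, ev j ≠ ev i → l.eval (ev j) = 0 := fun j hj =>
      Lagrange.eval_basis_of_ne (v := id) (Ne.symm hj) (hmem j)
    have hidem : φ (l * l - l) = 0 := by
      apply hzero
      intro j
      by_cases h : ev j = ev i
      · rw [h]; simp [hl1]
      · simp [hl0 j h]
    have hyc : φ (Polynomial.X * l - Polynomial.C (ev i) * l) = 0 := by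
      apply hzero
      intro j
      by_cases h : ev j = ev i
      · rw [h]; simp
      · simp [hl0 j h]
    rw [map_sub, sub_eq_zero] at hidem hyc
    have hc := hy (φ l) (by rw [hmul, hidem])
    have hne : φ l ≠ 0 := by
      intro h
      have := hpv l i
      rw [h, hl1, map_zero, LinearMap.zero_apply, one_smul] at this
      have hb : b i ≠ 0 := b.orthonormal.ne_zero i
      exact hb (Subtype.ext this.symm)
    have h5 : jmul y (φ l) = ev i • φ l := by
      rw [← hX, hmul, hyc, ← Polynomial.smul_eq_C_mul, map_smul]
    have h6 : ⟪y, φ l⟫ = ev i * ⟪φ l, φ l⟫ := by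
      rw [← real_inner_smul_left, hinner, hinner (ev i • φ l), h5, map_smul, LinearMap.smul_apply,
        hmul, hidem]
    rw [h6] at hc
    exact nonneg_of_mul_nonneg_left hc (real_inner_self_pos.2 hne)
  refine ⟨φ (Lagrange.interpolate S id Real.sqrt), ?_⟩
  rw [hmul]
  have := hzero (Lagrange.interpolate S id Real.sqrt * Lagrange.interpolate S id Real.sqrt
    - Polynomial.X) (by
      intro i
      have : (Lagrange.interpolate S id Real.sqrt).eval (ev i) = Real.sqrt (ev i) :=
        Lagrange.eval_interpolate_at_node (v := id) _ hinj (hmem i)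
      rw [Polynomial.eval_sub, Polynomial.eval_mul, this, Real.mul_self_sqrt (hnn i),
        Polynomial.eval_X, sub_self])
  rw [map_sub, sub_eq_zero] at this
  rw [this, hX]

theorem jordan_idem_mem (jmul : E →ₗ[ℝ] E →ₗ[ℝ] E) (one : E)
    (hcomm : ∀ x y, jmul x y = jmul y x)
    (hjordan : ∀ x y, jmul (jmul x x) (jmul x y) = jmul x (jmul (jmul x x) y))
    (hone : ∀ x, jmul one x = x) (c : E) (hc : jmul c c = c) (ε : ℝ) (hε : 0 < ε) :
    c + ε • one ∈ interior {x | ∃ y, x = jmul y y} := by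
  set β := Real.sqrt ε
  set α := Real.sqrt (1 + ε)
  have hβ : β * β = ε := Real.mul_self_sqrt hε.le
  have hα : α * α = 1 + ε := Real.mul_self_sqrt (by linarith)
  have hβ0 : 0 < β := Real.sqrt_pos.2 hε
  have hαβ : β < α := Real.sqrt_lt_sqrt hε.le (by linarith)
  set w := (α - β) • c + β • one with hw
  have hww : jmul w w = c + ε • one := by
    simp only [hw, map_add, map_smul, LinearMap.add_apply, LinearMap.smul_apply, hc, hone,
      hcomm c one]
    rw [← hβ]
    have : (α - β) * (α - β) + 2 * (α - β) * β = 1 := by nlinarith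
    linear_combination (norm := module) this • c
  have hder : HasStrictFDerivAt (fun x : E => jmul x x)
      ((2 : ℝ) • (LinearMap.toContinuousLinearMap (jmul w))) w := by
    let B : E →L[ℝ] E →L[ℝ] E := LinearMap.toContinuousLinearMap
      ((LinearMap.toContinuousLinearMap : (E →ₗ[ℝ] E) ≃ₗ[ℝ] (E →L[ℝ] E)).toLinearMap ∘ₗ jmul)
    have h1 : HasStrictFDerivAt (fun x : E => B x x) _ w :=
      HasStrictFDerivAt.comp (f := fun x : E => (x, x)) w
        (B.isBoundedBilinearMap.hasStrictFDerivAt (w, w))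
        ((hasStrictFDerivAt_id w).prodMk (hasStrictFDerivAt_id w))
    refine h1.congr_fderiv ?_
    ext v
    change jmul w v + jmul v w = (2 : ℝ) • jmul w v
    rw [hcomm v w, two_smul]
  have hinj : Function.Injective (jmul w) := by
    rw [← LinearMap.ker_eq_bot, LinearMap.ker_eq_bot']
    intro v hv
    have h0 : (α - β) • jmul c v + β • v = 0 := by
      rw [← hv, hw]; simp [hone]
    set θ := -(β / (α - β)) with hθ
    have hαβ' : α - β ≠ 0 := by linarith
    have hθn : θ < 0 := by
      rw [hθ]; have := div_pos hβ0 (sub_pos.2 hαβ); linarith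
    have h1 : jmul c v = θ • v := by
      have : (α - β) • jmul c v = (α - β) • (θ • v) := by
        rw [smul_smul, hθ, eq_neg_of_add_eq_zero_left h0, ← neg_smul]
        congr 1
        field_simp
      exact smul_right_injective E hαβ' this
    have h2 := jordan_op jmul hcomm hjordan c c c v
    simp only [hc, h1, map_smul] at h2
    have h3 : (θ * (2 * θ - 1) * (θ - 1)) • v = 0 := by
      linear_combination (norm := module) h2
    rcases smul_eq_zero.1 h3 with h | h
    · exfalso
      have : θ * ((2 * θ - 1) * (θ - 1)) < 0 := mul_neg_of_neg_of_pos hθn (by nlinarith)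
      nlinarith
    · exact h
  have hsurj : Function.Surjective (jmul w) := LinearMap.injective_iff_surjective.1 hinj
  have hmap := hder.map_nhds_eq_of_surj (by
    rw [LinearMap.range_eq_top]
    intro v
    obtain ⟨u, hu⟩ := hsurj v
    exact ⟨(1 / 2 : ℝ) • u, by simp [hu, smul_smul]⟩)
  rw [mem_interior_iff_mem_nhds, ← hww, ← hmap, Filter.mem_map]
  exact Filter.univ_mem' fun x => ⟨x, rfl⟩

end JordanPart
section ConePart

variable {E : Type*} [NormedAddCommGroup E] [InnerProductSpace ℝ E] [FiniteDimensional ℝ E]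
    [MeasurableSpace E] [BorelSpace E]

open scoped Pointwise in
theorem cone_inner_nonneg (μ : Measure E) [μ.IsAddHaarMeasure] (Ω : Set E) (hopen : IsOpen Ω)
    (hcone : ∀ c : ℝ, 0 < c → ∀ x ∈ Ω, c • x ∈ Ω) (y : E)
    (hInt : IntegrableOn (fun x => Real.exp (-⟪x, y⟫)) Ω μ) : ∀ x ∈ Ω, 0 ≤ ⟪x, y⟫ := by
  intro x hx
  by_contra! hneg
  set U := Ω ∩ {x | ⟪x, y⟫ < 0} with hU
  have hUo : IsOpen U := hopen.inter (isOpen_lt (by fun_prop) continuous_const)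
  have hUpos : 0 < μ U := hUo.measure_pos μ ⟨x, hx, hneg⟩
  have hUfin : μ U < ⊤ := by
    have h1 : ∫⁻ x in U, (1 : ENNReal) ∂μ ≤ ∫⁻ x in Ω, ‖Real.exp (-⟪x, y⟫)‖ₑ ∂μ := by
      refine le_trans ?_ (lintegral_mono_set (s := U) Set.inter_subset_left)
      refine setLIntegral_mono' hUo.measurableSet fun x hx => ?_
      rw [Real.enorm_of_nonneg (Real.exp_pos _).le, ← ENNReal.ofReal_one]
      apply ENNReal.ofReal_le_ofReal
      have : ⟪x, y⟫ < 0 := hx.2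
      apply Real.one_le_exp; linarith
    simp only [lintegral_const, MeasurableSet.univ, Measure.restrict_apply, Set.univ_inter,
      one_mul] at h1
    exact lt_of_le_of_lt h1 hInt.2
  have hsc : (2 : ℝ) • U = U := by
    ext z
    rw [Set.mem_smul_set_iff_inv_smul_mem₀ (by norm_num)]
    simp only [hU, Set.mem_inter_iff, Set.mem_ofPred_eq, real_inner_smul_left]
    constructor
    · rintro ⟨h1, h2⟩
      have := hcone 2 (by norm_num) _ h1
      rw [smul_smul] at this
      norm_num at this
      exact ⟨this, by linarith⟩
    · rintro ⟨h1, h2⟩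
      exact ⟨hcone _ (by norm_num) _ h1, by linarith⟩
  have hx0 : x ≠ 0 := by
    rintro rfl
    simp at hneg
  have : Nontrivial E := ⟨x, 0, hx0⟩
  have hn : 0 < Module.finrank ℝ E := Module.finrank_pos
  have h2 := Measure.addHaar_smul μ (2 : ℝ) U
  rw [hsc] at h2
  have h3 : 1 < ENNReal.ofReal |2 ^ Module.finrank ℝ E| := by
    rw [abs_of_pos (by positivity), ← ENNReal.ofReal_one]
    exact (ENNReal.ofReal_lt_ofReal_iff (by positivity)).2 (one_lt_pow₀ (by norm_num) hn.ne')
  have h4 := ENNReal.mul_lt_mul_left hUpos.ne' hUfin.ne h3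
  rw [one_mul, ← h2] at h4
  exact lt_irrefl _ h4

theorem cone_inv_cont (μ : Measure E) [μ.IsAddHaarMeasure] (Ω : Set E) (hopen : IsOpen Ω)
    (hcone : ∀ c : ℝ, 0 < c → ∀ x ∈ Ω, c • x ∈ Ω)
    (hadd : ∀ x ∈ Ω, ∀ y ∈ Ω, x + y ∈ Ω) (w : E) (hw : w ∈ Ω)
    (hInt : ∀ y ∈ Ω, IntegrableOn (fun x => Real.exp (-⟪x, y⟫)) Ω μ)
    (J : E → E) (hJ : ∀ x ∈ Ω, J x ∈ Ω)
    (h1 : ∀ v ∈ Ω, ContinuousOn (fun u => ∫ x in Ω, Real.exp (-⟪x, J u + v⟫) ∂μ) Ω)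
    (h2 : ContinuousOn (fun u => ∫ x in Ω, Real.exp (-⟪x, (2 : ℝ) • J u + w⟫) ∂μ) Ω) :
    ContinuousOn J Ω := by
  intro u hu
  refine Filter.tendsto_of_subseq_tendsto fun ns hns => ?_
  let f : E → ℝ := fun z => ∫ x in Ω, Real.exp (-⟪x, z⟫) ∂μ
  let g : ℕ → E → ℝ := fun n x =>
    (Real.exp (-⟪x, J (ns n)⟫) - Real.exp (-⟪x, J u⟫)) ^ 2 * Real.exp (-⟪x, w⟫)
  have hexp : ∀ z z' x : E, (Real.exp (-⟪x, z⟫) - Real.exp (-⟪x, z'⟫)) ^ 2 * Real.exp (-⟪x, w⟫)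
      = Real.exp (-⟪x, (2 : ℝ) • z + w⟫) - 2 * Real.exp (-⟪x, z + (z' + w)⟫)
        + Real.exp (-⟪x, (2 : ℝ) • z' + w⟫) := by
    intro z z' x
    simp only [inner_add_right, real_inner_smul_right]
    have e1 : ∀ a b : ℝ, Real.exp (-(2 * a + b)) = Real.exp (-a) * Real.exp (-a) * Real.exp (-b) := by
      intro a b; rw [← Real.exp_add, ← Real.exp_add]; ring_nf
    have e2 : ∀ a b c : ℝ, Real.exp (-(a + (b + c)))
        = Real.exp (-a) * Real.exp (-b) * Real.exp (-c) := by
      intro a b c; rw [← Real.exp_add, ← Real.exp_add]; ring_nf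
    rw [e1, e1, e2]; ring
  have hI : ∀ n, ns n ∈ Ω → Integrable (g n) (μ.restrict Ω) ∧ ∫ x, g n x ∂(μ.restrict Ω)
      = f ((2 : ℝ) • J (ns n) + w) - 2 * f (J (ns n) + (J u + w)) + f ((2 : ℝ) • J u + w) := by
    intro n hn
    have i1 := hInt _ (hadd _ (hcone 2 (by norm_num) _ (hJ _ hn)) _ hw)
    have i2 := hInt _ (hadd _ (hJ _ hn) _ (hadd _ (hJ _ hu) _ hw))
    have i3 := hInt _ (hadd _ (hcone 2 (by norm_num) _ (hJ _ hu)) _ hw)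
    have hg : g n = fun x => Real.exp (-⟪x, (2 : ℝ) • J (ns n) + w⟫)
        - 2 * Real.exp (-⟪x, J (ns n) + (J u + w)⟫)
        + Real.exp (-⟪x, (2 : ℝ) • J u + w⟫) := by
      funext x; exact hexp _ _ _
    have i4 : Integrable (fun x => Real.exp (-⟪x, (2 : ℝ) • J (ns n) + w⟫)
        - 2 * Real.exp (-⟪x, J (ns n) + (J u + w)⟫)) (μ.restrict Ω) := i1.sub (i2.const_mul 2)
    rw [hg]
    refine ⟨i4.add i3, ?_⟩
    rw [integral_add i4 i3, integral_sub i1 (i2.const_mul 2), integral_const_mul]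
  have hmem : ∀ᶠ n in Filter.atTop, ns n ∈ Ω := hns self_mem_nhdsWithin
  have hlim : Filter.Tendsto (fun n => ∫ x, g n x ∂(μ.restrict Ω)) Filter.atTop (nhds 0) := by
    have t1 := (h2 u hu).tendsto.comp hns
    have t2 := (h1 (J u + w) (hadd _ (hJ _ hu) _ hw) u hu).tendsto.comp hns
    have t3 := (t1.sub (t2.const_mul 2)).add_const (f ((2 : ℝ) • J u + w))
    have hz : f ((2 : ℝ) • J u + w) - 2 * f (J u + (J u + w)) + f ((2 : ℝ) • J u + w) = 0 := by
      rw [two_smul, add_assoc]; ring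
    have t4 : Filter.Tendsto (fun n => f ((2 : ℝ) • J (ns n) + w) - 2 * f (J (ns n) + (J u + w))
        + f ((2 : ℝ) • J u + w)) Filter.atTop (nhds 0) := by
      rw [← hz]; exact t3
    refine t4.congr' ?_
    filter_upwards [hmem] with n hn
    rw [(hI n hn).2]
  have hg0 : ∀ n x, 0 ≤ g n x := fun n x => by positivity
  have hmeas : TendstoInMeasure (μ.restrict Ω) g Filter.atTop (fun _ => (0 : ℝ)) := by
    refine tendstoInMeasure_of_tendsto_eLpNorm (p := 1) one_ne_zero
      (fun n => ?_) aestronglyMeasurable_const ?_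
    · apply Continuous.aestronglyMeasurable
      fun_prop
    · have : Filter.Tendsto (fun n => ENNReal.ofReal (∫ x, g n x ∂(μ.restrict Ω)))
          Filter.atTop (nhds 0) := by
        rw [← ENNReal.ofReal_zero]
        exact ENNReal.tendsto_ofReal hlim
      refine this.congr' ?_
      filter_upwards [hmem] with n hn
      rw [eLpNorm_one_eq_lintegral_enorm,
        ofReal_integral_eq_lintegral_ofReal (hI n hn).1 (Filter.Eventually.of_forall (hg0 n))]
      refine lintegral_congr fun x => ?_
      simp [Real.enorm_of_nonneg (hg0 n x)]
  obtain ⟨ms, -, hae⟩ := hmeas.exists_seq_tendsto_ae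
  refine ⟨ms, ?_⟩
  let G : Submodule ℝ E :=
    { carrier := {x | Filter.Tendsto (fun k => ⟪x, J (ns (ms k))⟫) Filter.atTop (nhds ⟪x, J u⟫)}
      add_mem' := by
        intro a b ha hb
        simp only [Set.mem_ofPred_eq, inner_add_left] at *
        exact ha.add hb
      zero_mem' := by simp
      smul_mem' := by
        intro c x hx
        simp only [Set.mem_ofPred_eq, real_inner_smul_left] at *
        exact hx.const_mul c }
  have hG : G = ⊤ := by
    by_contra hne
    have hz := Measure.addHaar_submodule μ G hne
    have haeG : ∀ᵐ x ∂(μ.restrict Ω), x ∈ G := by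
      filter_upwards [hae] with x hx
      have t1 := hx.mul_const (Real.exp ⟪x, w⟫)
      have t2 : Filter.Tendsto (fun k => (Real.exp (-⟪x, J (ns (ms k))⟫)
          - Real.exp (-⟪x, J u⟫)) ^ 2) Filter.atTop (nhds 0) := by
        rw [zero_mul] at t1
        refine t1.congr fun k => ?_
        simp only [g]
        rw [mul_assoc, ← Real.exp_add]; simp
      have t3 := t2.sqrt
      simp only [Real.sqrt_sq_eq_abs, Real.sqrt_zero] at t3
      have t4 := (tendsto_zero_iff_abs_tendsto_zero _).2 t3
      have t5 : Filter.Tendsto (fun k => Real.exp (-⟪x, J (ns (ms k))⟫)) Filter.atTop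
          (nhds (Real.exp (-⟪x, J u⟫))) := by
        simpa using t4.add_const (Real.exp (-⟪x, J u⟫))
      have t6 := (t5.log (Real.exp_pos _).ne').neg
      have t7 : Filter.Tendsto (fun k => ⟪x, J (ns (ms k))⟫) Filter.atTop (nhds ⟪x, J u⟫) := by
        simpa using t6
      exact t7
    have h3 : μ.restrict Ω (G : Set E) = μ.restrict Ω Set.univ := by
      apply measure_congr
      filter_upwards [haeG] with x hx
      exact propext ⟨fun _ => trivial, fun _ => hx⟩
    have h4 : μ.restrict Ω (G : Set E) = 0 := le_antisymm (hz ▸ Measure.restrict_apply_le _ _) bot_le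
    rw [h4, Measure.restrict_apply_univ] at h3
    exact (hopen.measure_pos μ ⟨u, hu⟩).ne h3
  have hall : ∀ x : E, Filter.Tendsto (fun k => ⟪x, J (ns (ms k))⟫) Filter.atTop
      (nhds ⟪x, J u⟫) := by
    intro x
    have : x ∈ G := hG ▸ Submodule.mem_top
    exact this
  let b := stdOrthonormalBasis ℝ E
  have hsum : Filter.Tendsto (fun k => ∑ i, ⟪b i, J (ns (ms k))⟫ • b i) Filter.atTop
      (nhds (∑ i, ⟪b i, J u⟫ • b i)) :=
    tendsto_finsetSum _ fun i _ => (hall (b i)).smul_const (b i)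
  simpa only [b.sum_repr'] using hsum

end ConePart
section CorePart

theorem sq_tonelli {X : Type*} [MeasurableSpace X] (ν : Measure X) [SFinite ν] (w : X → ℝ)
    (hw : Measurable w) (p : X → X → ℂ) (hp : Measurable (Function.uncurry p)) :
    ∫⁻ x, ‖w x‖ₑ * (∫⁻ u, ‖p x u‖ₑ ∂ν) ^ 2 ∂ν
      = ∫⁻ q, ∫⁻ x, ‖w x‖ₑ * (‖p x q.1‖ₑ * ‖p x q.2‖ₑ) ∂ν ∂(ν.prod ν) := by
  have hm : ∀ x, Measurable (p x) := fun x => hp.comp measurable_prodMk_left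
  have h1 : Measurable (fun t : X × (X × X) => p t.1 t.2.1) :=
    hp.comp (measurable_fst.prodMk (measurable_fst.comp measurable_snd))
  have h2 : Measurable (fun t : X × (X × X) => p t.1 t.2.2) :=
    hp.comp (measurable_fst.prodMk (measurable_snd.comp measurable_snd))
  rw [← lintegral_lintegral_swap]
  · refine lintegral_congr fun x => ?_
    rw [lintegral_const_mul]
    · rw [lintegral_prod_mul (hm x).enorm.aemeasurable (hm x).enorm.aemeasurable, sq]
    · exact ((hm x).comp measurable_fst).enorm.mul ((hm x).comp measurable_snd).enorm
  · exact ((hw.comp measurable_fst).enorm.mul (h1.enorm.mul h2.enorm)).aemeasurable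

theorem sq_fubini {X : Type*} [MeasurableSpace X] (ν : Measure X) [SFinite ν] (w : X → ℝ)
    (hw : Measurable w) (p : X → X → ℂ) (hp : Measurable (Function.uncurry p))
    (hfin : ∫⁻ x, ‖w x‖ₑ * (∫⁻ u, ‖p x u‖ₑ ∂ν) ^ 2 ∂ν < ⊤) :
    Integrable (fun x => ‖∫ u, p x u ∂ν‖ ^ 2 * w x) ν ∧
    ((∫ x, ‖∫ u, p x u ∂ν‖ ^ 2 * w x ∂ν : ℝ) : ℂ)
      = ∫ q, ∫ x, (w x : ℂ) * (p x q.1 * (starRingEnd ℂ) (p x q.2)) ∂ν ∂(ν.prod ν) := by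
  have h1 : Measurable (fun t : X × (X × X) => p t.1 t.2.1) :=
    hp.comp (measurable_fst.prodMk (measurable_fst.comp measurable_snd))
  have h2 : Measurable (fun t : X × (X × X) => p t.1 t.2.2) :=
    hp.comp (measurable_fst.prodMk (measurable_snd.comp measurable_snd))
  have hKm : StronglyMeasurable (fun x => ∫ u, p x u ∂ν) :=
    StronglyMeasurable.integral_prod_right hp.stronglyMeasurable
  have hmeas : AEStronglyMeasurable (fun x => ‖∫ u, p x u ∂ν‖ ^ 2 * w x) ν :=
    ((hKm.measurable.norm.pow_const 2).mul hw).aestronglyMeasurable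
  have hInt : Integrable (fun x => ‖∫ u, p x u ∂ν‖ ^ 2 * w x) ν := by
    refine ⟨hmeas, lt_of_le_of_lt (lintegral_mono fun x => ?_) hfin⟩
    simp only [enorm_mul, enorm_pow, enorm_norm]
    rw [mul_comm]
    gcongr
    exact enorm_integral_le_lintegral_enorm _
  refine ⟨hInt, ?_⟩
  have hF : Integrable (Function.uncurry fun (x : X) (q : X × X) =>
      (w x : ℂ) * (p x q.1 * (starRingEnd ℂ) (p x q.2))) (ν.prod (ν.prod ν)) := by
    have hms : Measurable (Function.uncurry fun (x : X) (q : X × X) =>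
      (w x : ℂ) * (p x q.1 * (starRingEnd ℂ) (p x q.2))) :=
      (Complex.measurable_ofReal.comp (hw.comp measurable_fst)).mul
        (h1.mul (Complex.continuous_conj.measurable.comp h2))
    refine ⟨hms.aestronglyMeasurable, ?_⟩
    rw [HasFiniteIntegral, lintegral_prod_symm _ hms.enorm.aemeasurable]
    refine lt_of_eq_of_lt ?_ hfin
    rw [sq_tonelli ν w hw p hp]
    refine lintegral_congr fun q => lintegral_congr fun x => ?_
    simp only [Function.uncurry, enorm_mul, RCLike.enorm_conj]
    rw [← ofReal_norm ((w x : ℝ) : ℂ), ← ofReal_norm (w x), Complex.norm_real]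
  rw [← integral_integral_swap hF, ← integral_complex_ofReal]
  refine integral_congr_ae (Filter.Eventually.of_forall fun x => ?_)
  change (((‖∫ u, p x u ∂ν‖ ^ 2 * w x : ℝ)) : ℂ)
    = ∫ q : X × X, (w x : ℂ) * (p x q.1 * (starRingEnd ℂ) (p x q.2)) ∂(ν.prod ν)
  rw [integral_const_mul, integral_prod_mul (f := fun u => p x u)
    (g := fun u => (starRingEnd ℂ) (p x u)), integral_conj, Complex.mul_conj,
    Complex.normSq_eq_norm_sq]
  push_cast
  ring

theorem rpow_le_add {t a b c : ℝ} (ht : 0 < t) (hab : a ≤ b) (hbc : b ≤ c) :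
    t ^ b ≤ t ^ a + t ^ c := by
  rcases le_total t 1 with h | h
  · have := Real.rpow_le_rpow_of_exponent_ge ht h hab
    have := Real.rpow_nonneg ht.le c
    linarith
  · have := Real.rpow_le_rpow_of_exponent_le h hbc
    have := Real.rpow_nonneg ht.le a
    linarith

variable {E : Type*} [NormedAddCommGroup E] [InnerProductSpace ℝ E] [FiniteDimensional ℝ E]
    [MeasurableSpace E] [BorelSpace E]

/-- The analytic data extracted from the symmetric cone. -/
structure ConeData (ν : Measure E) (Ω : Set E) (Δ : E → ℝ) (e : E) (l0 N : ℝ) (G : ℝ → ℝ) :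
    Prop where
  ae : ∀ᵐ x ∂ν, x ∈ Ω
  meas : Measurable Δ
  pos : ∀ x, 0 < Δ x
  he : e ∈ Ω
  hadd : ∀ x ∈ Ω, ∀ y ∈ Ω, x + y ∈ Ω
  inner_nonneg : ∀ x ∈ Ω, ∀ y ∈ Ω, 0 ≤ ⟪x, y⟫
  hN : N = 1 + l0
  hl0 : 0 ≤ l0
  Gpos : ∀ l, l0 < l → 0 < G l
  Glim : Filter.Tendsto G (nhdsWithin l0 (Set.Ioi l0)) Filter.atTop
  lap : ∀ l, l0 < l → ∀ y ∈ Ω,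
    ∫ x, Real.exp (-⟪x, y⟫) * Δ x ^ (l - N) ∂ν = G l * Δ y ^ (-l)

/-- The extended Laplace integral. -/
noncomputable def lapL (ν : Measure E) (Δ : E → ℝ) (N l : ℝ) (y : E) : ENNReal :=
  ∫⁻ x, ENNReal.ofReal (Real.exp (-⟪x, y⟫) * Δ x ^ (l - N)) ∂ν

variable {ν : Measure E} [SFinite ν] {Ω : Set E} {Δ : E → ℝ} {e : E} {l0 N : ℝ} {G : ℝ → ℝ}

theorem ConeData.integrable (h : ConeData ν Ω Δ e l0 N G) {l : ℝ} (hl : l0 < l) {y : E}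
    (hy : y ∈ Ω) : Integrable (fun x => Real.exp (-⟪x, y⟫) * Δ x ^ (l - N)) ν := by
  by_contra hn
  have h1 := h.lap l hl y hy
  rw [integral_undef hn] at h1
  exact (mul_pos (h.Gpos l hl) (Real.rpow_pos_of_pos (h.pos y) _)).ne h1

theorem ConeData.lapL_eq (h : ConeData ν Ω Δ e l0 N G) {l : ℝ} (hl : l0 < l) {y : E}
    (hy : y ∈ Ω) : lapL ν Δ N l y = ENNReal.ofReal (G l * Δ y ^ (-l)) := by
  rw [lapL, ← h.lap l hl y hy, ofReal_integral_eq_lintegral_ofReal (h.integrable hl hy)]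
  exact Filter.Eventually.of_forall fun x =>
    mul_nonneg (Real.exp_pos _).le (Real.rpow_nonneg (h.pos x).le _)

theorem ConeData.lapL_top (h : ConeData ν Ω Δ e l0 N G) {l : ℝ} (hl : l ≤ l0) {y : E}
    (hy : y ∈ Ω) : lapL ν Δ N l y = ⊤ := by
  by_contra hne
  set M := lapL ν Δ N l y + lapL ν Δ N (l0 + 1) y with hM
  have hMfin : M ≠ ⊤ := by
    rw [hM, h.lapL_eq (l := l0 + 1) (by linarith) hy]
    exact ENNReal.add_ne_top.2 ⟨hne, ENNReal.ofReal_ne_top⟩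
  have hm : ∀ c : ℝ, Measurable fun x => ENNReal.ofReal (Real.exp (-⟪x, y⟫) * Δ x ^ c) := by
    intro c
    have := h.meas
    fun_prop
  have hle : ∀ l' ∈ Set.Ioo l0 (l0 + 1), G l' * Δ y ^ (-l') ≤ M.toReal := by
    intro l' hl'
    rw [← ENNReal.ofReal_le_iff_le_toReal hMfin, ← h.lapL_eq hl'.1 hy, hM, lapL, lapL, lapL,
      ← lintegral_add_left (hm _)]
    refine lintegral_mono fun x => ?_
    have hp := h.pos x
    rw [← ENNReal.ofReal_add (by positivity) (by positivity), ← mul_add]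
    apply ENNReal.ofReal_le_ofReal
    gcongr
    exact rpow_le_add hp (by linarith [hl'.1]) (by linarith [hl'.2])
  have ht : Filter.Tendsto (fun l' => G l' * Δ y ^ (-l')) (nhdsWithin l0 (Set.Ioi l0))
      Filter.atTop := by
    refine h.Glim.atTop_mul_pos (Real.rpow_pos_of_pos (h.pos y) (-l0)) ?_
    have : Continuous fun l' : ℝ => Δ y ^ (-l') :=
      Continuous.rpow continuous_const continuous_neg (fun _ => Or.inl (h.pos y).ne')
    exact (this.tendsto l0).mono_left nhdsWithin_le_nhds
  have h1 := ht.eventually_gt_atTop M.toReal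
  have h2 : ∀ᶠ l' in nhdsWithin l0 (Set.Ioi l0), l' ∈ Set.Ioo l0 (l0 + 1) :=
    Ioo_mem_nhdsGT (by linarith)
  obtain ⟨l', h3, h4⟩ := (h1.and h2).exists
  exact absurd (hle l' h4) (not_le.2 h3)

/-- The beta type integral. -/
noncomputable def betaW (ν : Measure E) (Δ : E → ℝ) (e : E) (m s : ℝ) : ENNReal :=
  ∫⁻ x, ENNReal.ofReal (Δ x ^ m * Δ (x + e) ^ (-s)) ∂ν

theorem ConeData.betaW_eq (h : ConeData ν Ω Δ e l0 N G) {m s : ℝ} (hs : l0 < s) :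
    ENNReal.ofReal (G s) * betaW ν Δ e m s
      = ∫⁻ y, ENNReal.ofReal (Real.exp (-⟪y, e⟫) * Δ y ^ (s - N)) * lapL ν Δ N (m + N) y ∂ν := by
  have hme := h.meas
  have h1 : ENNReal.ofReal (G s) * betaW ν Δ e m s
      = ∫⁻ x, ENNReal.ofReal (Δ x ^ m) * lapL ν Δ N s (x + e) ∂ν := by
    rw [betaW, ← lintegral_const_mul _ (by fun_prop)]
    refine lintegral_congr_ae ?_
    filter_upwards [h.ae] with x hx
    have := h.pos x
    have := h.pos (x + e)
    rw [h.lapL_eq hs (h.hadd x hx e h.he), ← ENNReal.ofReal_mul (h.Gpos s hs).le,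
      ← ENNReal.ofReal_mul (by positivity)]
    congr 1; ring
  have h2 : ∫⁻ x, ENNReal.ofReal (Δ x ^ m) * lapL ν Δ N s (x + e) ∂ν
      = ∫⁻ x, ∫⁻ y, ENNReal.ofReal (Δ x ^ m) *
        ENNReal.ofReal (Real.exp (-⟪y, x + e⟫) * Δ y ^ (s - N)) ∂ν ∂ν := by
    refine lintegral_congr fun x => ?_
    rw [lapL, lintegral_const_mul _ (by fun_prop)]
  rw [h1, h2, lintegral_lintegral_swap]
  · refine lintegral_congr fun y => ?_
    rw [lapL, ← lintegral_const_mul _ (by fun_prop)]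
    refine lintegral_congr fun x => ?_
    have := h.pos x
    have := h.pos y
    rw [← ENNReal.ofReal_mul (by positivity), ← ENNReal.ofReal_mul (by positivity)]
    congr 1
    rw [inner_add_right, neg_add, Real.exp_add, real_inner_comm, add_sub_cancel_right]
    ring
  · apply Measurable.aemeasurable
    change Measurable fun t : E × E => ENNReal.ofReal (Δ t.1 ^ m) *
      ENNReal.ofReal (Real.exp (-⟪t.2, t.1 + e⟫) * Δ t.2 ^ (s - N))
    fun_prop

theorem ConeData.betaW_lt (h : ConeData ν Ω Δ e l0 N G) {m s : ℝ} (hs : l0 < s)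
    (hm : l0 < m + N) (hsm : l0 < s - m - N) : betaW ν Δ e m s < ⊤ := by
  have hme := h.meas
  have h1 := h.betaW_eq (m := m) hs
  have h2 : ∫⁻ y, ENNReal.ofReal (Real.exp (-⟪y, e⟫) * Δ y ^ (s - N)) * lapL ν Δ N (m + N) y ∂ν
      = ENNReal.ofReal (G (m + N)) * lapL ν Δ N (s - m - N) e := by
    rw [lapL, ← lintegral_const_mul _ (by fun_prop)]
    refine lintegral_congr_ae ?_
    filter_upwards [h.ae] with y hy
    have := h.pos y
    rw [h.lapL_eq hm hy, ← ENNReal.ofReal_mul (by positivity),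
      ← ENNReal.ofReal_mul (h.Gpos _ hm).le]
    congr 1
    rw [show s - m - N - N = (s - N) + (-(m + N)) by ring, Real.rpow_add this]
    ring
  rw [h2, h.lapL_eq hsm h.he] at h1
  by_contra hne
  rw [not_lt, top_le_iff] at hne
  rw [hne, ENNReal.mul_top (by simpa using h.Gpos s hs)] at h1
  exact (ENNReal.mul_ne_top ENNReal.ofReal_ne_top ENNReal.ofReal_ne_top) h1.symm

theorem ConeData.betaW_top (h : ConeData ν Ω Δ e l0 N G) {m s : ℝ} (hs : l0 < s)
    (hm : m + N ≤ l0 ∨ s - m - N ≤ l0) : betaW ν Δ e m s = ⊤ := by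
  have hme := h.meas
  have h1 := h.betaW_eq (m := m) hs
  have hpos : 0 < lapL ν Δ N s e := by
    rw [h.lapL_eq hs h.he, ENNReal.ofReal_pos]
    exact mul_pos (h.Gpos s hs) (Real.rpow_pos_of_pos (h.pos e) _)
  have h2 : ∫⁻ y, ENNReal.ofReal (Real.exp (-⟪y, e⟫) * Δ y ^ (s - N)) * lapL ν Δ N (m + N) y ∂ν
      = ⊤ := by
    by_cases hm' : m + N ≤ l0
    · have : ∫⁻ y, ENNReal.ofReal (Real.exp (-⟪y, e⟫) * Δ y ^ (s - N)) * lapL ν Δ N (m + N) y ∂ν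
          = ∫⁻ y, ENNReal.ofReal (Real.exp (-⟪y, e⟫) * Δ y ^ (s - N)) * ⊤ ∂ν := by
        refine lintegral_congr_ae ?_
        filter_upwards [h.ae] with y hy
        rw [h.lapL_top hm' hy]
      rw [this, lintegral_mul_const _ (by fun_prop), ← lapL, ENNReal.mul_top hpos.ne']
    · rw [not_le] at hm'
      have hsm : s - m - N ≤ l0 := hm.resolve_left (not_le.2 hm')
      have : ∫⁻ y, ENNReal.ofReal (Real.exp (-⟪y, e⟫) * Δ y ^ (s - N)) * lapL ν Δ N (m + N) y ∂ν
          = ENNReal.ofReal (G (m + N)) * lapL ν Δ N (s - m - N) e := by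
        rw [lapL, ← lintegral_const_mul _ (by fun_prop)]
        refine lintegral_congr_ae ?_
        filter_upwards [h.ae] with y hy
        have := h.pos y
        rw [h.lapL_eq hm' hy, ← ENNReal.ofReal_mul (by positivity),
          ← ENNReal.ofReal_mul (h.Gpos _ hm').le]
        congr 1
        rw [show s - m - N - N = (s - N) + (-(m + N)) by ring, Real.rpow_add this]
        ring
      rw [this, h.lapL_top hsm h.he, ENNReal.mul_top (by simpa using h.Gpos _ hm')]
  rw [h2] at h1
  by_contra hne
  exact ENNReal.mul_ne_top ENNReal.ofReal_ne_top hne h1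

theorem ConeData.betaW_top_zero (h : ConeData ν Ω Δ e l0 N G) {m : ℝ}
    (hm : m + N ≤ l0) : betaW ν Δ e m 0 = ⊤ := by
  rw [← top_le_iff, ← h.lapL_top hm h.he, lapL, betaW]
  refine lintegral_mono_ae ?_
  filter_upwards [h.ae] with x hx
  apply ENNReal.ofReal_le_ofReal
  have := h.pos x
  rw [neg_zero, Real.rpow_zero, mul_one, add_sub_cancel_right]
  have h1 : Real.exp (-⟪x, e⟫) ≤ 1 := Real.exp_le_one_iff.2 (by
    linarith [h.inner_nonneg x hx e h.he])
  exact mul_le_of_le_one_left (by positivity) h1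

end CorePart
section CorePart2

variable {E : Type*} [NormedAddCommGroup E] [InnerProductSpace ℝ E] [FiniteDimensional ℝ E]
    [MeasurableSpace E] [BorelSpace E]
variable {ν : Measure E} [SFinite ν] {Ω : Set E} {Δ : E → ℝ} {e : E} {l0 N : ℝ} {G : ℝ → ℝ}

theorem ConeData.lapC (h : ConeData ν Ω Δ e l0 N G) (Gc : ℂ → ℂ)
    (hGc : DifferentiableOn ℂ Gc {z | l0 < z.re}) (hGcr : ∀ l : ℝ, l0 < l → Gc (l : ℂ) = (G l : ℂ))
    (z : ℂ) (hz : l0 < z.re) (y : E) (hy : y ∈ Ω) :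
    ∫ x, ((Real.exp (-⟪x, y⟫) : ℝ) : ℂ) * (Δ x : ℂ) ^ (z - (N : ℂ)) ∂ν
      = Gc z * (Δ y : ℂ) ^ (-z) := by
  have hme := h.meas
  let ρ : E → NNReal := fun x => Real.toNNReal (Real.exp (-⟪x, y⟫) * Δ x ^ (-N))
  have hρm : Measurable ρ := by fun_prop
  have hρ0 : ∀ x, 0 ≤ Real.exp (-⟪x, y⟫) * Δ x ^ (-N) := fun x =>
    mul_nonneg (Real.exp_pos _).le (Real.rpow_nonneg (h.pos x).le _)
  let ν' := ν.withDensity fun x => (ρ x : ENNReal)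
  let X : E → ℝ := fun x => Real.log (Δ x)
  have hC : ∀ z : ℂ, ProbabilityTheory.complexMGF X ν' z
      = ∫ x, ((Real.exp (-⟪x, y⟫) : ℝ) : ℂ) * (Δ x : ℂ) ^ (z - (N : ℂ)) ∂ν := by
    intro z
    rw [ProbabilityTheory.complexMGF, integral_withDensity_eq_integral_smul hρm]
    refine integral_congr_ae (Filter.Eventually.of_forall fun x => ?_)
    have hΔc : (Δ x : ℂ) ≠ 0 := by exact_mod_cast (h.pos x).ne'
    simp only [ρ, X, NNReal.smul_def, Real.coe_toNNReal _ (hρ0 x)]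
    rw [Complex.real_smul, Complex.ofReal_mul, Complex.ofReal_cpow (h.pos x).le,
      sub_eq_add_neg, Complex.cpow_add _ _ hΔc, Complex.cpow_def_of_ne_zero hΔc z,
      Complex.ofReal_log (h.pos x).le, mul_comm z]
    push_cast
    ring
  have hI : ∀ l : ℝ, l0 < l → l ∈ ProbabilityTheory.integrableExpSet X ν' := by
    intro l hl
    change Integrable _ ν'
    rw [integrable_withDensity_iff_integrable_smul hρm]
    refine (h.integrable hl hy).congr (Filter.Eventually.of_forall fun x => ?_)
    simp only [ρ, X, NNReal.smul_def, Real.coe_toNNReal _ (hρ0 x), smul_eq_mul]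
    rw [sub_eq_add_neg, Real.rpow_add (h.pos x), Real.rpow_def_of_pos (h.pos x) l, mul_comm l]
    ring
  have hInt : Set.Ioi l0 ⊆ interior (ProbabilityTheory.integrableExpSet X ν') :=
    interior_maximal (fun l hl => hI l hl) isOpen_Ioi
  have hopen : IsOpen {z : ℂ | l0 < z.re} := isOpen_lt continuous_const Complex.continuous_re
  have hf : AnalyticOnNhd ℂ (ProbabilityTheory.complexMGF X ν') {z | l0 < z.re} :=
    ProbabilityTheory.analyticOnNhd_complexMGF.mono fun z hz => hInt hz
  have hΔy : (Δ y : ℂ) ≠ 0 := by exact_mod_cast (h.pos y).ne'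
  have hg : AnalyticOnNhd ℂ (fun z => Gc z * (Δ y : ℂ) ^ (-z)) {z | l0 < z.re} := by
    refine DifferentiableOn.analyticOnNhd ?_ hopen
    refine hGc.mul ?_
    exact (DifferentiableOn.const_cpow differentiableOn_id.neg (Or.inl hΔy))
  have hconv : IsPreconnected {z : ℂ | l0 < z.re} := (convex_halfSpace_re_gt l0).isPreconnected
  have hreal : ∀ l : ℝ, l0 < l → ProbabilityTheory.complexMGF X ν' (l : ℂ)
      = Gc l * (Δ y : ℂ) ^ (-(l : ℂ)) := by
    intro l hl
    rw [hC, hGcr l hl]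
    have h1 := congrArg (fun t : ℝ => (t : ℂ)) (h.lap l hl y hy)
    simp only [Complex.ofReal_mul, Complex.ofReal_cpow (h.pos y).le, Complex.ofReal_neg] at h1
    rw [← h1, ← integral_complex_ofReal]
    refine integral_congr_ae (Filter.Eventually.of_forall fun x => ?_)
    simp only [Complex.ofReal_mul, Complex.ofReal_cpow (h.pos x).le, Complex.ofReal_sub]
  have hfreq : ∃ᶠ w in nhdsWithin ((l0 + 1 : ℝ) : ℂ) {((l0 + 1 : ℝ) : ℂ)}ᶜ,
      ProbabilityTheory.complexMGF X ν' w = Gc w * (Δ y : ℂ) ^ (-w) := by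
    have ht : Filter.Tendsto ((↑) : ℝ → ℂ) (nhdsWithin (l0 + 1) {l0 + 1}ᶜ)
        (nhdsWithin ((l0 + 1 : ℝ) : ℂ) {((l0 + 1 : ℝ) : ℂ)}ᶜ) := by
      refine tendsto_nhdsWithin_iff.2 ⟨(Complex.continuous_ofReal.tendsto _).mono_left
        nhdsWithin_le_nhds, ?_⟩
      filter_upwards [self_mem_nhdsWithin] with t ht
      exact fun hh => ht (Complex.ofReal_injective hh)
    refine ht.frequently (Filter.Eventually.frequently ?_)
    have : ∀ᶠ t in nhdsWithin (l0 + 1) {l0 + 1}ᶜ, l0 < t :=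
      nhdsWithin_le_nhds (lt_mem_nhds (by linarith))
    filter_upwards [this] with t ht
    exact hreal t ht
  have := hf.eqOn_of_preconnected_of_frequently_eq hg hconv (z₀ := ((l0 + 1 : ℝ) : ℂ))
    (by change l0 < _; rw [Complex.ofReal_re]; linarith) hfreq hz
  rw [← hC]
  exact this

theorem ConeData.inner_lint (h : ConeData ν Ω Δ e l0 N G) (m : ℝ) (k : E → ℂ) (Z : E → E)
    (u v : E) :
    ∫⁻ x, ‖Δ x ^ m‖ₑ * (‖k u * ((Real.exp (-⟪x, Z u⟫) : ℝ) : ℂ)‖ₑ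
        * ‖k v * ((Real.exp (-⟪x, Z v⟫) : ℝ) : ℂ)‖ₑ) ∂ν
      = ‖k u‖ₑ * ‖k v‖ₑ * lapL ν Δ N (m + N) (Z u + Z v) := by
  have hme := h.meas
  rw [lapL, ← lintegral_const_mul _ (by fun_prop)]
  refine lintegral_congr fun x => ?_
  have hr : ∀ t : ℝ, ‖((Real.exp t : ℝ) : ℂ)‖ₑ = ENNReal.ofReal (Real.exp t) := by
    intro t
    rw [← ofReal_norm, Complex.norm_real, Real.norm_of_nonneg (Real.exp_pos _).le]
  have := h.pos x
  rw [enorm_mul, enorm_mul, hr, hr, Real.enorm_of_nonneg (by positivity), inner_add_right,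
    neg_add, Real.exp_add, add_sub_cancel_right, ENNReal.ofReal_mul (by positivity),
    ENNReal.ofReal_mul (by positivity)]
  ring

theorem ConeData.inner_int (h : ConeData ν Ω Δ e l0 N G) (m : ℝ) (hm : l0 < m + N)
    (k : E → ℂ) (Z : E → E) (u v : E) (huv : Z u + Z v ∈ Ω) :
    ∫ x, ((Δ x ^ m : ℝ) : ℂ) * (k u * ((Real.exp (-⟪x, Z u⟫) : ℝ) : ℂ)
        * (starRingEnd ℂ) (k v * ((Real.exp (-⟪x, Z v⟫) : ℝ) : ℂ))) ∂ν
      = k u * (starRingEnd ℂ) (k v) * ((G (m + N) * Δ (Z u + Z v) ^ (-(m + N)) : ℝ) : ℂ) := by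
  rw [← h.lap _ hm _ huv, ← integral_complex_ofReal, ← integral_const_mul]
  refine integral_congr_ae (Filter.Eventually.of_forall fun x => ?_)
  simp only [map_mul, Complex.conj_ofReal, inner_add_right, neg_add, Real.exp_add,
    add_sub_cancel_right, Complex.ofReal_mul]
  ring

/-- The kernel of the K-Bessel function. -/
noncomputable def kerK (Δ : E → ℝ) (e : E) (J : E → E) (lam : ℂ) (x u : E) : ℂ :=
  (((Real.exp (-⟪u, e⟫) : ℝ) : ℂ) * (Δ u : ℂ) ^ (-lam)) * ((Real.exp (-⟪x, J u⟫) : ℝ) : ℂ)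

theorem ConeData.good (h : ConeData ν Ω Δ e l0 N G) (Gc : ℂ → ℂ)
    (hGc : DifferentiableOn ℂ Gc {z | l0 < z.re}) (hGcr : ∀ l : ℝ, l0 < l → Gc (l : ℂ) = (G l : ℂ))
    (J : E → E) (hJm : Measurable J) (hJ : ∀ u ∈ Ω, J u ∈ Ω)
    (hsum : ∀ u ∈ Ω, ∀ v ∈ Ω, Δ (J u + J v) = Δ (u + v) * (Δ u)⁻¹ * (Δ v)⁻¹)
    (lam : ℂ) (m : ℝ) (h1 : l0 < m + N) (h2 : l0 < (m + 2 * N - lam).re)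
    (h3 : l0 < m + 3 * N - 2 * lam.re) :
    Integrable (fun x => ‖∫ u, kerK Δ e J lam x u ∂ν‖ ^ 2 * Δ x ^ m) ν ∧
    ∫ x, ‖∫ u, kerK Δ e J lam x u ∂ν‖ ^ 2 * Δ x ^ m ∂ν
      = ‖Gc (m + 2 * N - lam)‖ ^ 2 * (betaW ν Δ e m (2 * (m + 2 * N - lam.re))).toReal := by
  have hme := h.meas
  set z : ℂ := m + 2 * N - lam with hz
  have hzre : z.re = m + 2 * N - lam.re := by simp [hz]
  set a := m + N with ha
  let k1 : E → ℂ := fun u => ((Real.exp (-⟪u, e⟫) : ℝ) : ℂ) * (Δ u : ℂ) ^ (-lam)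
  let k2 : E → ℂ := fun u => k1 u * ((Δ u ^ a : ℝ) : ℂ)
  have hk1 : Measurable k1 := by fun_prop
  have hk2 : Measurable k2 := by fun_prop
  let p1 : E → E → ℂ := fun x u => k1 u * ((Real.exp (-⟪x, J u⟫) : ℝ) : ℂ)
  let p2 : E → E → ℂ := fun x u => k2 u * ((Real.exp (-⟪x, u⟫) : ℝ) : ℂ)
  have hp1 : Measurable (Function.uncurry p1) := by
    change Measurable fun t : E × E => k1 t.2 * ((Real.exp (-⟪t.1, J t.2⟫) : ℝ) : ℂ)
    fun_prop
  have hp2 : Measurable (Function.uncurry p2) := by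
    change Measurable fun t : E × E => k2 t.2 * ((Real.exp (-⟪t.1, t.2⟫) : ℝ) : ℂ)
    fun_prop
  have hwm : Measurable fun x => Δ x ^ m := by fun_prop
  have hae2 : ∀ᵐ q ∂(ν.prod ν), q.1 ∈ Ω ∧ q.2 ∈ Ω :=
    (Measure.quasiMeasurePreserving_fst.ae h.ae).and (Measure.quasiMeasurePreserving_snd.ae h.ae)
  -- the exact relation of the two kernels
  have hrel : ∀ u ∈ Ω, ∀ v ∈ Ω, Δ (J u + J v) ^ (-a) = Δ (u + v) ^ (-a) * Δ u ^ a * Δ v ^ a := by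
    intro u hu v hv
    have q1 := h.pos u
    have q2 := h.pos v
    have q3 := h.pos (u + v)
    rw [hsum u hu v hv, Real.mul_rpow (by positivity) (by positivity),
      Real.mul_rpow (by positivity) (by positivity), Real.inv_rpow q1.le, Real.inv_rpow q2.le,
      Real.rpow_neg q1.le, Real.rpow_neg q2.le, inv_inv, inv_inv]
  have hton : ∫⁻ x, ‖Δ x ^ m‖ₑ * (∫⁻ u, ‖p1 x u‖ₑ ∂ν) ^ 2 ∂ν
      = ∫⁻ x, ‖Δ x ^ m‖ₑ * (∫⁻ u, ‖p2 x u‖ₑ ∂ν) ^ 2 ∂ν := by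
    rw [sq_tonelli ν _ hwm p1 hp1, sq_tonelli ν _ hwm p2 hp2]
    refine lintegral_congr_ae ?_
    filter_upwards [hae2] with q hq
    have e1 := h.inner_lint m k1 J q.1 q.2
    have e2 := h.inner_lint m k2 id q.1 q.2
    simp only [id] at e2
    refine e1.trans (Eq.trans ?_ e2.symm)
    have q1 := h.pos q.1
    have q2 := h.pos q.2
    have q3 := h.pos (q.1 + q.2)
    have hr : ∀ t : ℝ, 0 ≤ t → ‖(t : ℂ)‖ₑ = ENNReal.ofReal t := by
      intro t ht
      rw [← ofReal_norm, Complex.norm_real, Real.norm_of_nonneg ht]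
    rw [h.lapL_eq h1 (h.hadd _ (hJ _ hq.1) _ (hJ _ hq.2)), h.lapL_eq h1 (h.hadd _ hq.1 _ hq.2),
      hrel _ hq.1 _ hq.2]
    simp only [k2, enorm_mul]
    rw [hr _ (by positivity), hr _ (by positivity), ENNReal.ofReal_mul (h.Gpos _ h1).le,
      ENNReal.ofReal_mul (by positivity), ENNReal.ofReal_mul (by positivity),
      ENNReal.ofReal_mul (h.Gpos _ h1).le]
    ring
  have hp2e : ∀ x u, ‖p2 x u‖ₑ
      = ENNReal.ofReal (Real.exp (-⟪u, x + e⟫) * Δ u ^ (z.re - N)) := by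
    intro x u
    have q1 := h.pos u
    have hx : Δ u ^ (z.re - N) = Δ u ^ (-lam).re * Δ u ^ a := by
      rw [← Real.rpow_add q1]
      congr 1
      simp only [hzre, ha, Complex.neg_re]
      ring
    rw [← ofReal_norm]
    congr 1
    simp only [p2, k2, k1, norm_mul, Complex.norm_real, Complex.norm_cpow_eq_rpow_re_of_pos q1]
    rw [Real.norm_of_nonneg (Real.exp_pos _).le, Real.norm_of_nonneg (Real.exp_pos _).le,
      Real.norm_of_nonneg (by positivity), inner_add_right, neg_add, Real.exp_add, hx,
      real_inner_comm x u]
    ring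
  have hs : l0 < 2 * (m + 2 * N - lam.re) := by
    have := h.hl0
    linarith [hzre ▸ h2]
  have hW : betaW ν Δ e m (2 * (m + 2 * N - lam.re)) < ⊤ :=
    h.betaW_lt hs h1 (by linarith)
  have hfin2 : ∫⁻ x, ‖Δ x ^ m‖ₑ * (∫⁻ u, ‖p2 x u‖ₑ ∂ν) ^ 2 ∂ν < ⊤ := by
    have : ∫⁻ x, ‖Δ x ^ m‖ₑ * (∫⁻ u, ‖p2 x u‖ₑ ∂ν) ^ 2 ∂ν
        = ENNReal.ofReal (G z.re ^ 2) * betaW ν Δ e m (2 * (m + 2 * N - lam.re)) := by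
      rw [betaW, ← lintegral_const_mul _ (by fun_prop)]
      refine lintegral_congr_ae ?_
      filter_upwards [h.ae] with x hx
      have q1 := h.pos x
      have q2 := h.pos (x + e)
      have q3 := h.Gpos _ h2
      have : ∫⁻ u, ‖p2 x u‖ₑ ∂ν = lapL ν Δ N z.re (x + e) := by
        rw [lapL]; exact lintegral_congr fun u => hp2e x u
      rw [this, h.lapL_eq h2 (h.hadd x hx e h.he), Real.enorm_of_nonneg (by positivity),
        ← ENNReal.ofReal_pow (by positivity), ← ENNReal.ofReal_mul (by positivity),
        ← ENNReal.ofReal_mul (by positivity)]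
      congr 1
      rw [← hzre, show -(2 * z.re) = -z.re + -z.re by ring, Real.rpow_add q2]
      ring
    rw [this]
    exact ENNReal.mul_lt_top ENNReal.ofReal_lt_top hW
  have F1 := sq_fubini ν _ hwm p1 hp1 (hton ▸ hfin2)
  have F2 := sq_fubini ν _ hwm p2 hp2 hfin2
  refine ⟨F1.1, ?_⟩
  have hEq : ∫ x, ‖∫ u, p1 x u ∂ν‖ ^ 2 * Δ x ^ m ∂ν = ∫ x, ‖∫ u, p2 x u ∂ν‖ ^ 2 * Δ x ^ m ∂ν := by
    have : ((∫ x, ‖∫ u, p1 x u ∂ν‖ ^ 2 * Δ x ^ m ∂ν : ℝ) : ℂ)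
        = ((∫ x, ‖∫ u, p2 x u ∂ν‖ ^ 2 * Δ x ^ m ∂ν : ℝ) : ℂ) := by
      rw [F1.2, F2.2]
      refine integral_congr_ae ?_
      filter_upwards [hae2] with q hq
      have e1 := h.inner_int m h1 k1 J q.1 q.2 (h.hadd _ (hJ _ hq.1) _ (hJ _ hq.2))
      have e2 := h.inner_int m h1 k2 id q.1 q.2 (h.hadd _ hq.1 _ hq.2)
      simp only [id] at e2
      refine e1.trans (Eq.trans ?_ e2.symm)
      rw [← ha, hrel _ hq.1 _ hq.2]
      simp only [k2, map_mul, Complex.conj_ofReal]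
      push_cast
      ring
    exact_mod_cast this
  have hEq' := hEq
  change ∫ x, ‖∫ u, p1 x u ∂ν‖ ^ 2 * Δ x ^ m ∂ν = _
  rw [hEq]
  have hfin3 : ∫ x, ‖∫ u, p2 x u ∂ν‖ ^ 2 * Δ x ^ m ∂ν
      = ∫ x, ‖Gc z‖ ^ 2 * (Δ x ^ m * Δ (x + e) ^ (-(2 * (m + 2 * N - lam.re)))) ∂ν := by
    refine integral_congr_ae ?_
    filter_upwards [h.ae] with x hx
    have q2 := h.pos (x + e)
    have hH : ∫ u, p2 x u ∂ν = Gc z * (Δ (x + e) : ℂ) ^ (-z) := by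
      rw [← h.lapC Gc hGc hGcr z h2 (x + e) (h.hadd x hx e h.he)]
      refine integral_congr_ae (Filter.Eventually.of_forall fun u => ?_)
      have q1 := h.pos u
      have hΔu : (Δ u : ℂ) ≠ 0 := by exact_mod_cast q1.ne'
      simp only [p2, k2, k1]
      rw [Complex.ofReal_cpow q1.le, inner_add_right, neg_add, Real.exp_add,
        show z - (N : ℂ) = -lam + (a : ℂ) by simp only [hz, ha]; push_cast; ring,
        Complex.cpow_add _ _ hΔu, real_inner_comm x u]
      push_cast
      ring
    rw [hH, norm_mul, Complex.norm_cpow_eq_rpow_re_of_pos q2, ← hzre,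
      show -(2 * z.re) = -z.re + -z.re by ring, Real.rpow_add q2, Complex.neg_re]
    ring
  rw [hfin3, integral_const_mul, betaW, integral_eq_lintegral_of_nonneg_ae]
  · exact Filter.Eventually.of_forall fun x => by
      have q1 := h.pos x
      have q2 := h.pos (x + e)
      positivity
  · exact Measurable.aestronglyMeasurable (by fun_prop)

end CorePart2

section CorePart3

variable {E : Type*} [NormedAddCommGroup E] [InnerProductSpace ℝ E] [FiniteDimensional ℝ E]
    [MeasurableSpace E] [BorelSpace E]
variable {ν : Measure E} [SFinite ν] {Ω : Set E} {Δ : E → ℝ} {e : E} {l0 N : ℝ} {G : ℝ → ℝ}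

theorem ConeData.core (h : ConeData ν Ω Δ e l0 N G) (Gc R : ℂ → ℂ)
    (hGc : DifferentiableOn ℂ Gc {z | l0 < z.re}) (hGcr : ∀ l : ℝ, l0 < l → Gc (l : ℂ) = (G l : ℂ))
    (hR : Continuous R) (hRG : ∀ z : ℂ, l0 < z.re → R z * Gc z = 1)
    (J : E → E) (hJm : Measurable J) (hJ : ∀ u ∈ Ω, J u ∈ Ω)
    (hsum : ∀ u ∈ Ω, ∀ v ∈ Ω, Δ (J u + J v) = Δ (u + v) * (Δ u)⁻¹ * (Δ v)⁻¹)
    (lam : ℂ) (m : ℝ) :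
    Integrable (fun x => ‖∫ u, kerK Δ e J lam x u ∂ν‖ ^ 2 * Δ x ^ m) ν ↔
      (-1 < m ∧ -3 - 2 * l0 < m - 2 * lam.re) := by
  have hN := h.hN
  have hl0 := h.hl0
  have hme := h.meas
  have hgood : ∀ m : ℝ, -1 < m → -3 - 2 * l0 < m - 2 * lam.re →
      Integrable (fun x => ‖∫ u, kerK Δ e J lam x u ∂ν‖ ^ 2 * Δ x ^ m) ν ∧
      ∫ x, ‖∫ u, kerK Δ e J lam x u ∂ν‖ ^ 2 * Δ x ^ m ∂ν
        = ‖Gc (m + 2 * N - lam)‖ ^ 2 * (betaW ν Δ e m (2 * (m + 2 * N - lam.re))).toReal := by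
    intro m h1 h2
    refine h.good Gc hGc hGcr J hJm hJ hsum lam m (by linarith) ?_ (by linarith)
    have : ((m : ℂ) + 2 * N - lam).re = m + 2 * N - lam.re := by simp
    rw [this]; linarith
  refine ⟨fun hInt => ?_, fun hm => (hgood m hm.1 hm.2).1⟩
  by_contra hcon
  set ms : ℝ := max (-1) (2 * lam.re - 3 - 2 * l0) with hms
  have hms1 : -1 ≤ ms := le_max_left _ _
  have hms2 : 2 * lam.re - 3 - 2 * l0 ≤ ms := le_max_right _ _
  have hmms : m ≤ ms := by
    by_contra hlt
    push Not at hlt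
    exact hcon ⟨by linarith, by linarith⟩
  have hI1 := (hgood (ms + 1) (by linarith) (by linarith)).1
  set f : E → ℝ := fun x => ‖∫ u, kerK Δ e J lam x u ∂ν‖ ^ 2 with hf
  set M : ℝ := ∫ x, f x * Δ x ^ m ∂ν + ∫ x, f x * Δ x ^ (ms + 1) ∂ν with hM
  let t : ℕ → ℝ := fun k => ms + 1 / ((k : ℝ) + 1)
  have ht0 : ∀ k, ms < t k := fun k => by
    have : (0 : ℝ) < 1 / ((k : ℝ) + 1) := by positivity
    simp only [t]; linarith
  have ht1 : ∀ k, t k ≤ ms + 1 := fun k => by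
    have : 1 / ((k : ℝ) + 1) ≤ 1 := by
      rw [div_le_one (by positivity)]
      have : (0 : ℝ) ≤ k := by positivity
      linarith
    simp only [t]; linarith
  have htl : Filter.Tendsto t Filter.atTop (nhds ms) := by
    have := (tendsto_one_div_add_atTop_nhds_zero_nat (𝕜 := ℝ)).const_add ms
    rwa [add_zero] at this
  let z : ℝ → ℂ := fun m => m + 2 * N - lam
  have hzc : Continuous z := by fun_prop
  have hzre : ∀ m, (z m).re = m + 2 * N - lam.re := fun m => by simp [z]
  let s : ℝ → ℝ := fun m => 2 * (m + 2 * N - lam.re)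
  have hsc : Continuous s := by fun_prop
  have hW : ∀ k, betaW ν Δ e (t k) (s (t k)) ≤ ENNReal.ofReal (‖R (z (t k))‖ ^ 2 * M) := by
    intro k
    have hk := ht0 k
    obtain ⟨g1, g2⟩ := hgood (t k) (by linarith) (by linarith)
    have hle : ∫ x, f x * Δ x ^ (t k) ∂ν ≤ M := by
      rw [hM, ← integral_add hInt hI1]
      refine integral_mono g1 (hInt.add hI1) fun x => ?_
      have := rpow_le_add (h.pos x) (hmms.trans hk.le) (ht1 k)
      have hfx : 0 ≤ f x := by positivity
      simp only
      nlinarith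
    have hfin : betaW ν Δ e (t k) (s (t k)) < ⊤ :=
      h.betaW_lt (by simp only [s]; linarith) (by linarith) (by simp only [s]; linarith)
    rw [← ENNReal.ofReal_toReal hfin.ne]
    apply ENNReal.ofReal_le_ofReal
    have hRz := hRG (z (t k)) (by rw [hzre]; linarith)
    have hn : ‖R (z (t k))‖ ^ 2 * ‖Gc (z (t k))‖ ^ 2 = 1 := by
      rw [← mul_pow, ← norm_mul, hRz]; simp
    calc (betaW ν Δ e (t k) (s (t k))).toReal
        = ‖R (z (t k))‖ ^ 2 * (‖Gc (z (t k))‖ ^ 2 * (betaW ν Δ e (t k) (s (t k))).toReal) := by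
          rw [← mul_assoc, hn, one_mul]
      _ = ‖R (z (t k))‖ ^ 2 * ∫ x, f x * Δ x ^ (t k) ∂ν := by rw [g2]
      _ ≤ _ := by gcongr
  have hlimR : Filter.Tendsto (fun k => ENNReal.ofReal (‖R (z (t k))‖ ^ 2 * M)) Filter.atTop
      (nhds (ENNReal.ofReal (‖R (z ms)‖ ^ 2 * M))) := by
    refine ENNReal.tendsto_ofReal ?_
    have : Continuous fun m => ‖R (z m)‖ ^ 2 * M := by fun_prop
    exact (this.tendsto ms).comp htl
  have hFatou : betaW ν Δ e ms (s ms) ≤ ENNReal.ofReal (‖R (z ms)‖ ^ 2 * M) := by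
    rw [← hlimR.liminf_eq]
    refine le_trans ?_ (Filter.liminf_le_liminf (Filter.Eventually.of_forall hW))
    refine le_trans (le_of_eq ?_) (lintegral_liminf_le fun k => ?_)
    · rw [betaW]
      refine lintegral_congr fun x => ?_
      refine (Filter.Tendsto.liminf_eq ?_).symm
      refine ENNReal.tendsto_ofReal ?_
      have q1 := h.pos x
      have q2 := h.pos (x + e)
      have : Continuous fun m => Δ x ^ m * Δ (x + e) ^ (-(s m)) :=
        (Real.continuous_const_rpow q1.ne').mul
          ((Real.continuous_const_rpow q2.ne').comp hsc.neg)
      exact (this.tendsto ms).comp htl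
    · fun_prop
  have htop : betaW ν Δ e ms (s ms) = ⊤ := by
    have hAB : ms = -1 ∨ ms = 2 * lam.re - 3 - 2 * l0 := max_choice _ _
    by_cases hs : l0 < s ms
    · refine h.betaW_top hs ?_
      rcases hAB with h1 | h1
      · left; linarith
      · right; simp only [s]; linarith
    · simp only [s, not_lt] at hs
      have : s ms = 0 := by simp only [s]; linarith
      rw [this]
      exact h.betaW_top_zero (by linarith)
  rw [htop, top_le_iff] at hFatou
  exact ENNReal.ofReal_ne_top hFatou

end CorePart3

section GammaPart

theorem gamma_tendsto_zero :
    Filter.Tendsto Real.Gamma (nhdsWithin 0 (Set.Ioi 0)) Filter.atTop := by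
  have h1 : Filter.Tendsto (fun t : ℝ => Real.Gamma (t + 1) * t⁻¹) (nhdsWithin 0 (Set.Ioi 0))
      Filter.atTop := by
    refine Filter.Tendsto.pos_mul_atTop (C := Real.Gamma 1) (by simp) ?_ tendsto_inv_nhdsGT_zero
    have hc : ContinuousAt (fun t : ℝ => Real.Gamma (t + 1)) 0 := by
      have : ContinuousAt Real.Gamma ((0 : ℝ) + 1) :=
        (Real.differentiableAt_Gamma fun m => by
          have : (0 : ℝ) ≤ m := by positivity
          linarith).continuousAt
      exact ContinuousAt.comp (f := fun t : ℝ => t + 1) this (by fun_prop)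
    have := hc.tendsto
    rw [zero_add] at this
    exact this.mono_left nhdsWithin_le_nhds
  refine h1.congr' ?_
  filter_upwards [self_mem_nhdsWithin] with t ht
  have ht' : (0 : ℝ) < t := ht
  rw [Real.Gamma_add_one ht'.ne', mul_comm t, mul_assoc, mul_inv_cancel₀ ht'.ne', mul_one]

/-- The real Gindikin Gamma function. -/
noncomputable def gindR (r : ℕ) (d l : ℝ) : ℝ :=
  (2 * Real.pi) ^ ((r : ℝ) * ((r : ℝ) - 1) * d / 4)
            * ∏ i ∈ Finset.range r, Real.Gamma (l - (i : ℝ) * d / 2)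

theorem gind_arg {r : ℕ} {d l : ℝ} (hd : 0 < d) (hl : ((r : ℝ) - 1) * d / 2 < l) {i : ℕ}
    (hi : i ∈ Finset.range r) : 0 < l - (i : ℝ) * d / 2 := by
  have h1 : (i : ℝ) + 1 ≤ r := by exact_mod_cast Finset.mem_range.1 hi
  have : (i : ℝ) * d ≤ ((r : ℝ) - 1) * d := by gcongr; linarith
  linarith

theorem gindR_pos {r : ℕ} {d l : ℝ} (hd : 0 < d) (hl : ((r : ℝ) - 1) * d / 2 < l) :
    0 < gindR r d l := by
  refine mul_pos (Real.rpow_pos_of_pos (by positivity) _) (Finset.prod_pos fun i hi => ?_)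
  exact Real.Gamma_pos_of_pos (gind_arg hd hl hi)

theorem gindR_lim {r : ℕ} {d : ℝ} (hr : 1 ≤ r) (hd : 0 < d) :
    Filter.Tendsto (gindR r d)
      (nhdsWithin (((r : ℝ) - 1) * d / 2) (Set.Ioi (((r : ℝ) - 1) * d / 2))) Filter.atTop := by
  obtain ⟨n, rfl⟩ : ∃ n, r = n + 1 := ⟨r - 1, by omega⟩
  have hn : (((n + 1 : ℕ) : ℝ) - 1) * d / 2 = n * d / 2 := by push_cast; ring
  rw [hn]
  unfold gindR
  simp only [Finset.prod_range_succ]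
  set c : ℝ := (2 * Real.pi) ^ (((n + 1 : ℕ) : ℝ) * (((n + 1 : ℕ) : ℝ) - 1) * d / 4) with hc
  have hcp : 0 < c := Real.rpow_pos_of_pos (by positivity) _
  refine Filter.Tendsto.const_mul_atTop hcp ?_
  have hpos : ∀ i ∈ Finset.range n, 0 < (n : ℝ) * d / 2 - i * d / 2 := by
    intro i hi
    have h1 : (i : ℝ) < n := by exact_mod_cast Finset.mem_range.1 hi
    have : (i : ℝ) * d < n * d := by gcongr
    linarith
  refine Filter.Tendsto.pos_mul_atTop
    (C := ∏ i ∈ Finset.range n, Real.Gamma ((n : ℝ) * d / 2 - i * d / 2))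
    (Finset.prod_pos fun i hi => Real.Gamma_pos_of_pos (hpos i hi)) ?_ ?_
  · refine tendsto_finsetProd _ fun i hi => ?_
    have h1 : ContinuousAt Real.Gamma ((n : ℝ) * d / 2 - i * d / 2) :=
      (Real.differentiableAt_Gamma fun m => by
        have : (0 : ℝ) ≤ m := by positivity
        have := hpos i hi
        linarith).continuousAt
    have h2 : ContinuousAt (fun l : ℝ => Real.Gamma (l - i * d / 2)) ((n : ℝ) * d / 2) :=
      ContinuousAt.comp (f := fun l : ℝ => l - i * d / 2) h1 (by fun_prop)
    exact h2.tendsto.mono_left nhdsWithin_le_nhds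
  · refine gamma_tendsto_zero.comp ?_
    refine tendsto_nhdsWithin_iff.2 ⟨?_, ?_⟩
    · have : Continuous fun l : ℝ => l - n * d / 2 := by fun_prop
      have h2 := this.tendsto (n * d / 2)
      rw [sub_self] at h2
      exact h2.mono_left nhdsWithin_le_nhds
    · filter_upwards [self_mem_nhdsWithin] with l hl
      exact sub_pos.2 (Set.mem_Ioi.1 hl)

theorem gindC_arg {r : ℕ} {d : ℝ} {z : ℂ} (hd : 0 < d) (hl : ((r : ℝ) - 1) * d / 2 < z.re)
    {i : ℕ} (hi : i ∈ Finset.range r) : 0 < (z - (i : ℝ) * d / 2).re := by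
  have h := gind_arg hd hl hi
  have : (z - ((i : ℝ) : ℂ) * (d : ℂ) / 2).re = z.re - i * d / 2 := by
    rw [show z - ((i : ℝ) : ℂ) * (d : ℂ) / 2 = z - ((i * d / 2 : ℝ) : ℂ) by push_cast; ring,
      Complex.sub_re, Complex.ofReal_re]
  rw [this]; exact h

theorem gindC_diff {r : ℕ} {d : ℝ} (hd : 0 < d) :
    DifferentiableOn ℂ (gindikinGamma r d) {z | ((r : ℝ) - 1) * d / 2 < z.re} := by
  intro z hz
  refine DifferentiableAt.differentiableWithinAt ?_
  unfold gindikinGamma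
  refine DifferentiableAt.const_mul ?_ _
  refine DifferentiableAt.fun_finsetProd fun i hi => ?_
  have h0 := gindC_arg hd hz hi
  have h1 : DifferentiableAt ℂ Complex.Gamma (z - (i : ℝ) * d / 2) := by
    refine Complex.differentiableAt_Gamma _ fun m hm => ?_
    rw [hm] at h0
    simp only [Complex.neg_re, Complex.natCast_re] at h0
    have : (0 : ℝ) ≤ m := by positivity
    linarith
  exact DifferentiableAt.comp (f := fun z : ℂ => z - (i : ℝ) * d / 2) z h1 (by fun_prop)

theorem gindC_real (r : ℕ) (d l : ℝ) : gindikinGamma r d (l : ℂ) = (gindR r d l : ℂ) := by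
  unfold gindikinGamma gindR
  rw [Complex.ofReal_mul, Complex.ofReal_prod]
  congr 1
  refine Finset.prod_congr rfl fun i _ => ?_
  rw [← Complex.Gamma_ofReal]
  congr 1
  push_cast
  ring

theorem gindC_inv {r : ℕ} {d : ℝ} (hd : 0 < d) : ∃ R : ℂ → ℂ, Continuous R ∧
    ∀ z : ℂ, ((r : ℝ) - 1) * d / 2 < z.re → R z * gindikinGamma r d z = 1 := by
  refine ⟨fun z => (((2 * Real.pi) ^ ((r : ℝ) * ((r : ℝ) - 1) * d / 4) : ℝ) : ℂ)⁻¹ *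
    ∏ i ∈ Finset.range r, (Complex.Gamma (z - (i : ℝ) * d / 2))⁻¹, ?_, fun z hz => ?_⟩
  · refine continuous_const.mul (continuous_finsetProd _ fun i _ => ?_)
    exact Complex.differentiable_one_div_Gamma.continuous.comp
      (g := fun s : ℂ => (Complex.Gamma s)⁻¹) (f := fun z : ℂ => z - (i : ℝ) * d / 2) (by fun_prop)
  · have hc : (((2 * Real.pi) ^ ((r : ℝ) * ((r : ℝ) - 1) * d / 4) : ℝ) : ℂ) ≠ 0 := by
      rw [Complex.ofReal_ne_zero]
      exact (Real.rpow_pos_of_pos (by positivity) _).ne'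
    have hp : ∏ i ∈ Finset.range r, Complex.Gamma (z - (i : ℝ) * d / 2) ≠ 0 :=
      Finset.prod_ne_zero_iff.2 fun i hi =>
        Complex.Gamma_ne_zero_of_re_pos (gindC_arg hd hz hi)
    unfold gindikinGamma
    simp only [Finset.prod_inv_distrib]
    rw [mul_mul_mul_comm, inv_mul_cancel₀ hc, inv_mul_cancel₀ hp, one_mul]

end GammaPart

section FinalPart

variable {E : Type*} [NormedAddCommGroup E] [InnerProductSpace ℝ E] [FiniteDimensional ℝ E]
    [MeasurableSpace E] [BorelSpace E]

theorem sqcone_smul (jmul : E →ₗ[ℝ] E →ₗ[ℝ] E) (c : ℝ) (hc : 0 < c) :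
    ∀ x ∈ interior {x | ∃ y, x = jmul y y}, c • x ∈ interior {x | ∃ y, x = jmul y y} := by
  intro x hx
  have hsub : (fun z : E => c⁻¹ • z) ⁻¹' (interior {x | ∃ y, x = jmul y y})
      ⊆ {x | ∃ y, x = jmul y y} := by
    intro z hz
    obtain ⟨y, hy⟩ := interior_subset hz
    refine ⟨Real.sqrt c • y, ?_⟩
    have hy' : c⁻¹ • z = jmul y y := hy
    rw [map_smul, map_smul, LinearMap.smul_apply, smul_smul, Real.mul_self_sqrt hc.le, ← hy',
      smul_smul, mul_inv_cancel₀ hc.ne', one_smul]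
  have hop : IsOpen ((fun z : E => c⁻¹ • z) ⁻¹' (interior {x | ∃ y, x = jmul y y})) :=
    isOpen_interior.preimage (by fun_prop)
  refine interior_maximal hsub hop ?_
  change c⁻¹ • (c • x) ∈ interior {x | ∃ y, x = jmul y y}
  rw [smul_smul, inv_mul_cancel₀ hc.ne', one_smul]
  exact hx

theorem sqcone_one (jmul : E →ₗ[ℝ] E →ₗ[ℝ] E) (one : E)
    (hcomm : ∀ x y, jmul x y = jmul y x)
    (hjordan : ∀ x y, jmul (jmul x x) (jmul x y) = jmul x (jmul (jmul x x) y))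
    (hone : ∀ x, jmul one x = x) : one ∈ interior {x | ∃ y, x = jmul y y} := by
  have h := jordan_idem_mem jmul one hcomm hjordan hone one (hone one) 1 one_pos
  have h2 := sqcone_smul jmul (2⁻¹ : ℝ) (by norm_num) _ h
  have : (2⁻¹ : ℝ) • (one + (1 : ℝ) • one) = one := by
    rw [one_smul, ← two_smul ℝ one, smul_smul]; norm_num
  rwa [this] at h2

theorem sqcone_add (jmul : E →ₗ[ℝ] E →ₗ[ℝ] E) (one : E) (tr : E → ℝ)
    (hcomm : ∀ x y, jmul x y = jmul y x)
    (hjordan : ∀ x y, jmul (jmul x x) (jmul x y) = jmul x (jmul (jmul x x) y))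
    (hone : ∀ x, jmul one x = x)
    (hinner : ∀ x y : E, ⟪x, y⟫ = tr (jmul x y))
    (hnn : ∀ x ∈ interior {x | ∃ y, x = jmul y y}, ∀ y ∈ interior {x | ∃ y, x = jmul y y},
      0 ≤ ⟪x, y⟫) :
    ∀ x ∈ interior {x | ∃ y, x = jmul y y}, ∀ y ∈ interior {x | ∃ y, x = jmul y y},
      x + y ∈ interior {x | ∃ y, x = jmul y y} := by
  have hdual : ∀ y : E, (∀ x ∈ interior {x | ∃ y, x = jmul y y}, 0 ≤ ⟪y, x⟫) →
      ∃ w, y = jmul w w := by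
    intro y hy
    refine jordan_square_of_nonneg jmul one tr hcomm hjordan hone hinner y fun c hc => ?_
    have hlim : Filter.Tendsto (fun ε : ℝ => ⟪y, c + ε • one⟫) (nhdsWithin 0 (Set.Ioi 0))
        (nhds ⟪y, c⟫) := by
      have hcont : Continuous fun ε : ℝ => ⟪y, c + ε • one⟫ := by fun_prop
      have := hcont.tendsto 0
      rw [zero_smul, add_zero] at this
      exact this.mono_left nhdsWithin_le_nhds
    refine ge_of_tendsto hlim ?_
    filter_upwards [self_mem_nhdsWithin] with ε hε
    exact hy _ (jordan_idem_mem jmul one hcomm hjordan hone c hc ε hε)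
  intro u hu v hv
  have hop : IsOpen ((fun z : E => z - v) ⁻¹' (interior {x | ∃ y, x = jmul y y})) :=
    isOpen_interior.preimage (by fun_prop)
  refine interior_maximal ?_ hop ?_
  · intro z hz
    refine hdual z fun x hx => ?_
    have h1 := hnn _ hz x hx
    have h2 := hnn v hv x hx
    rw [inner_sub_left] at h1
    linarith
  · change u + v - v ∈ interior {x | ∃ y, x = jmul y y}
    rw [add_sub_cancel_right]
    exact hu

theorem cone_lap_cont (μ : Measure E) (Ω : Set E) (hopen : IsOpen Ω)
    (hcone : ∀ c : ℝ, 0 < c → ∀ x ∈ Ω, c • x ∈ Ω)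
    (hadd : ∀ x ∈ Ω, ∀ y ∈ Ω, x + y ∈ Ω)
    (hInt : ∀ y ∈ Ω, IntegrableOn (fun x => Real.exp (-⟪x, y⟫)) Ω μ) :
    ContinuousOn (fun y => ∫ x in Ω, Real.exp (-⟪x, y⟫) ∂μ) Ω := by
  have hconv : Convex ℝ Ω := by
    intro x hx y hy a b ha hb hab
    rcases ha.eq_or_lt with rfl | ha
    · rw [zero_add] at hab; subst hab; simpa using hy
    rcases hb.eq_or_lt with rfl | hb
    · rw [add_zero] at hab; subst hab; simpa using hx
    exact hadd _ (hcone a ha x hx) _ (hcone b hb y hy)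
  refine ConvexOn.continuousOn hopen ⟨hconv, ?_⟩
  intro x hx y hy a b ha hb hab
  simp only [smul_eq_mul]
  rw [← integral_const_mul, ← integral_const_mul, ← integral_add ((hInt x hx).const_mul a)
    ((hInt y hy).const_mul b)]
  refine integral_mono (hInt _ (hconv hx hy ha hb hab))
    (((hInt x hx).const_mul a).add ((hInt y hy).const_mul b)) fun t => ?_
  have := convexOn_exp.2 (Set.mem_univ (-⟪t, x⟫)) (Set.mem_univ (-⟪t, y⟫)) ha hb hab
  simp only [smul_eq_mul] at this
  refine le_trans (le_of_eq ?_) this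
  simp only [inner_add_right, real_inner_smul_right]
  congr 1
  ring

end FinalPart

/-- **Square-integrability of the K-Bessel function.** With `Ω, Δ, d, r, n` as above,
the integral `∫_Ω |𝒦_λ(x)|² Δ(x)^m dx` converges if and only if `m > −1` and
`m − 2 Re λ > −3 − (r−1)d`. -/
theorem coneKBessel_L2_integral
    {E : Type*} [NormedAddCommGroup E] [InnerProductSpace ℝ E] [FiniteDimensional ℝ E]
    [MeasurableSpace E] [BorelSpace E]
    (μ : Measure E) [μ.IsAddHaarMeasure]
    (jmul : E →ₗ[ℝ] E →ₗ[ℝ] E) (one : E) (Ω : Set E) (Δ tr : E → ℝ) (jinv : E → E)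
    (r : ℕ) (d : ℝ) (hr : 1 ≤ r) (hd : 0 < d)
    (hcomm : ∀ x y, jmul x y = jmul y x)
    (hjordan : ∀ x y, jmul (jmul x x) (jmul x y) = jmul x (jmul (jmul x x) y))
    (hone : ∀ x, jmul one x = x)
    (htr : ∀ x, tr x = ⟪x, one⟫)
    (hinner : ∀ x y, ⟪x, y⟫ = tr (jmul x y))
    (hΩ : Ω = interior {x | ∃ y, x = jmul y y})
    (hdim : (Module.finrank ℝ E : ℝ) = r + r * ((r : ℝ) - 1) * d / 2)
    (hΔpos : ∀ x ∈ Ω, 0 < Δ x)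
    (hΔone : Δ one = 1)
    (hΔhom : ∀ c : ℝ, 0 < c → ∀ x, Δ (c • x) = c ^ r * Δ x)
    (hinvΩ : ∀ x ∈ Ω, jinv x ∈ Ω)
    (hinvinv : ∀ x ∈ Ω, jinv (jinv x) = x)
    (hinvmul : ∀ x ∈ Ω, jmul x (jinv x) = one)
    (hΔinv : ∀ x ∈ Ω, Δ (jinv x) = (Δ x)⁻¹)
    (hLap : ∀ l : ℝ, ((r : ℝ) - 1) * d / 2 < l → ∀ y ∈ Ω,
      ∫ x in Ω, Real.exp (-⟪x, y⟫) * Δ x ^ (l - (Module.finrank ℝ E : ℝ) / r) ∂μ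
        = ((2 * Real.pi) ^ ((r : ℝ) * ((r : ℝ) - 1) * d / 4)
            * ∏ i ∈ Finset.range r, Real.Gamma (l - (i : ℝ) * d / 2)) * Δ y ^ (-l))
    (hΔsum : ∀ u ∈ Ω, ∀ v ∈ Ω, Δ (jinv u + jinv v) = Δ (u + v) * (Δ u)⁻¹ * (Δ v)⁻¹)
    (hΔP : ∀ x y : E,
      Δ ((2 : ℝ) • jmul x (jmul x y) - jmul (jmul x x) y) = Δ x ^ 2 * Δ y)
    (lam : ℂ) (m : ℝ) :
    IntegrableOn
        (fun x => ‖coneKBessel μ Ω Δ tr jinv lam x‖ ^ 2 * Δ x ^ m) Ω μ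
      ↔ (-1 < m ∧ -3 - ((r : ℝ) - 1) * d < m - 2 * lam.re) := by
  classical
  have hr0 : (0 : ℝ) < r := by exact_mod_cast hr
  have hr1 : (1 : ℝ) ≤ r := by exact_mod_cast hr
  set l0 : ℝ := ((r : ℝ) - 1) * d / 2 with hl0d
  set N : ℝ := (Module.finrank ℝ E : ℝ) / r with hNd
  have hl0 : 0 ≤ l0 := by
    have : 0 ≤ (r : ℝ) - 1 := by linarith
    positivity
  have hN : N = 1 + l0 := by
    rw [hNd, hdim, hl0d]; field_simp
  have hlap : ∀ l : ℝ, l0 < l → ∀ y ∈ Ω,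
      ∫ x in Ω, Real.exp (-⟪x, y⟫) * Δ x ^ (l - N) ∂μ = gindR r d l * Δ y ^ (-l) := hLap
  clear hLap
  have hNl : l0 < N := by linarith
  set C : ℝ := gindR r d N with hC
  have hCp : 0 < C := gindR_pos hd hNl
  have hopen : IsOpen Ω := by rw [hΩ]; exact isOpen_interior
  have hmΩ : MeasurableSet Ω := hopen.measurableSet
  have hcone : ∀ c : ℝ, 0 < c → ∀ x ∈ Ω, c • x ∈ Ω := by
    intro c hc; rw [hΩ]; exact sqcone_smul jmul c hc
  have hf : ∀ y ∈ Ω, ∫ x in Ω, Real.exp (-⟪x, y⟫) ∂μ = C * Δ y ^ (-N) := by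
    intro y hy
    rw [← hlap N hNl y hy]
    simp
  have hInt : ∀ y ∈ Ω, IntegrableOn (fun x => Real.exp (-⟪x, y⟫)) Ω μ := by
    intro y hy
    refine Integrable.of_integral_ne_zero ?_
    rw [hf y hy]
    exact (mul_pos hCp (Real.rpow_pos_of_pos (hΔpos y hy) _)).ne'
  have hnn : ∀ x ∈ Ω, ∀ y ∈ Ω, 0 ≤ ⟪x, y⟫ := fun x hx y hy =>
    cone_inner_nonneg μ Ω hopen hcone y (hInt y hy) x hx
  have h1Ω : one ∈ Ω := by rw [hΩ]; exact sqcone_one jmul one hcomm hjordan hone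
  have hadd : ∀ x ∈ Ω, ∀ y ∈ Ω, x + y ∈ Ω := by
    have h := hnn
    rw [hΩ] at h ⊢
    exact sqcone_add jmul one tr hcomm hjordan hone hinner h
  have hfc := cone_lap_cont μ Ω hopen hcone hadd hInt
  have hΔc : ContinuousOn Δ Ω := by
    have h1 : ContinuousOn (fun y => ((∫ x in Ω, Real.exp (-⟪x, y⟫) ∂μ) / C) ^ (-(1 / N))) Ω := by
      refine (hfc.div_const C).rpow_const fun y hy => Or.inl ?_
      rw [hf y hy]
      have := Real.rpow_pos_of_pos (hΔpos y hy) (-N)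
      positivity
    refine h1.congr fun y hy => ?_
    have hp := hΔpos y hy
    simp only
    rw [hf y hy, mul_div_cancel_left₀ _ hCp.ne', ← Real.rpow_mul hp.le,
      show -N * -(1 / N) = 1 by field_simp [(by linarith : N ≠ 0)], Real.rpow_one]
  -- a translation formula for the inversion
  have hjs : ∀ v ∈ Ω, ContinuousOn (fun u => Δ (jinv u + v)) Ω := by
    intro v hv
    have h1 : ContinuousOn (fun u => Δ (u + jinv v) * (Δ u)⁻¹ * (Δ (jinv v))⁻¹) Ω := by
      refine ((hΔc.comp (by fun_prop) fun u hu => hadd u hu _ (hinvΩ v hv)).mul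
        (hΔc.inv₀ fun u hu => (hΔpos u hu).ne')).mul continuousOn_const
    refine h1.congr fun u hu => ?_
    have := hΔsum u hu (jinv v) (hinvΩ v hv)
    rw [hinvinv v hv] at this
    exact this
  have hjc : ContinuousOn jinv Ω := by
    refine cone_inv_cont μ Ω hopen hcone hadd one h1Ω hInt jinv hinvΩ (fun v hv => ?_) ?_
    · have h1 : ContinuousOn (fun u => C * Δ (jinv u + v) ^ (-N)) Ω :=
        continuousOn_const.mul ((hjs v hv).rpow_const fun u hu =>
          Or.inl (hΔpos _ (hadd _ (hinvΩ u hu) v hv)).ne')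
      exact h1.congr fun u hu => hf _ (hadd _ (hinvΩ u hu) v hv)
    · have hw := hcone (1 / 2) (by norm_num) one h1Ω
      have h1 : ContinuousOn
          (fun u => C * (2 ^ r * Δ (jinv u + (1 / 2 : ℝ) • one)) ^ (-N)) Ω := by
        refine continuousOn_const.mul ((continuousOn_const.mul (hjs _ hw)).rpow_const fun u hu =>
          Or.inl ?_)
        have := hΔpos _ (hadd _ (hinvΩ u hu) _ hw)
        exact (mul_pos (by positivity) this).ne'
      refine h1.congr fun u hu => ?_
      have hm := hadd _ (hinvΩ u hu) _ hw
      have he : (2 : ℝ) • jinv u + one = (2 : ℝ) • (jinv u + (1 / 2 : ℝ) • one) := by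
        rw [smul_add, smul_smul]; norm_num
      simp only
      rw [he, hf _ (hcone 2 (by norm_num) _ hm), hΔhom 2 (by norm_num)]
  -- measurable modifications
  let D : E → ℝ := Ω.piecewise Δ fun _ => 1
  let J : E → E := Ω.piecewise jinv fun _ => 0
  have hD : ∀ x ∈ Ω, D x = Δ x := fun x hx => Set.piecewise_eq_of_mem _ _ _ hx
  have hJ : ∀ x ∈ Ω, J x = jinv x := fun x hx => Set.piecewise_eq_of_mem _ _ _ hx
  have hDm : Measurable D := hΔc.measurable_piecewise continuousOn_const hmΩ
  have hJm : Measurable J := hjc.measurable_piecewise continuousOn_const hmΩ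
  have hcd : ConeData (μ.restrict Ω) Ω D one l0 N (gindR r d) :=
    { ae := ae_restrict_mem hmΩ
      meas := hDm
      pos := fun x => by
        by_cases hx : x ∈ Ω
        · rw [hD x hx]; exact hΔpos x hx
        · rw [show D x = 1 from Set.piecewise_eq_of_notMem _ _ _ hx]; exact one_pos
      he := h1Ω
      hadd := hadd
      inner_nonneg := hnn
      hN := hN
      hl0 := hl0
      Gpos := fun l hl => gindR_pos hd hl
      Glim := gindR_lim hr hd
      lap := fun l hl y hy => by
        rw [hD y hy, ← hlap l hl y hy]
        exact setIntegral_congr_fun hmΩ fun x hx => by simp only [hD x hx] }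
  obtain ⟨R, hRc, hRG⟩ := gindC_inv (r := r) hd
  have hcore := hcd.core (gindikinGamma r d) R (gindC_diff hd) (fun l _ => gindC_real r d l) hRc hRG
    J hJm (fun u hu => by rw [hJ u hu]; exact hinvΩ u hu)
    (fun u hu v hv => by
      rw [hJ u hu, hJ v hv, hD _ (hadd _ (hinvΩ u hu) _ (hinvΩ v hv)), hD u hu, hD v hv,
        hD _ (hadd u hu v hv)]
      exact hΔsum u hu v hv) lam m
  have hK : ∀ x, coneKBessel μ Ω Δ tr jinv lam x = ∫ u in Ω, kerK D one J lam x u ∂μ := by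
    intro x
    unfold coneKBessel
    refine setIntegral_congr_fun hmΩ fun v hv => ?_
    simp only [kerK]
    rw [hD v hv, hJ v hv, htr, sub_eq_add_neg, ← Complex.ofReal_exp, Real.exp_add]
    push_cast
    ring
  have hl2 : -3 - ((r : ℝ) - 1) * d = -3 - 2 * l0 := by rw [hl0d]; ring
  rw [hl2, ← hcore]
  refine integrable_congr ?_
  filter_upwards [ae_restrict_mem hmΩ] with x hx
  rw [hK x, hD x hx]
end

section
/- The K-Bessel function K_λ on the symmetric cone Ω satisfies the second integral representation K_λ(x²) = Δ(x)^{n/r − λ} ∫_Ω e^{−(x|v + v^{-1})} Δ(v)^{−λ} dv for all x ∈ Ω. -/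
open MeasureTheory Real
open scoped RealInnerProductSpace

namespace ConeAux

section algebra
variable {E : Type*} [NormedAddCommGroup E] [InnerProductSpace ℝ E]

/-- linearized Jordan identity -/
lemma lin (L : E →L[ℝ] E →L[ℝ] E) (hc : ∀ x y, L x y = L y x)
    (hj : ∀ x y, L (L x x) (L x y) = L x (L (L x x) y)) (a b c d : E) :
    L a (L (L b c) d) + L b (L (L a c) d) + L c (L (L a b) d)
      = L (L b c) (L a d) + L (L a c) (L b d) + L (L a b) (L c d) := by
  have h1 := hj (a + b + c) d
  have h2 := hj (a + b) d
  have h3 := hj (a + c) d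
  have h4 := hj (b + c) d
  have h5 := hj a d
  have h6 := hj b d
  have h7 := hj c d
  simp only [map_add, add_apply, hc b a, hc c a, hc c b] at *
  linear_combination (norm := module) (-1/2 : ℝ) • (h1 - h2 - h3 - h4 + h5 + h6 + h7)

/-- `[L x, L y]` acts on squares like a derivation. -/
lemma der_sq (L : E →L[ℝ] E →L[ℝ] E) (hc : ∀ x y, L x y = L y x)
    (hj : ∀ x y, L (L x x) (L x y) = L x (L (L x x) y)) (x y c : E) :
    L x (L y (L c c)) - L y (L x (L c c)) = (2 : ℝ) • L c (L x (L y c) - L y (L x c)) := by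
  have h1 := lin L hc hj x c c y
  have h2 := lin L hc hj y c c x
  simp only [map_sub]
  rw [hc (L c c) y, hc (L x c) y, hc c y, hc x y] at h1
  rw [hc (L c c) x, hc (L y c) x, hc c x, hc (L y c) (L x c)] at h2
  linear_combination (norm := module) h1 - h2

/-- powers -/
noncomputable def pw (L : E →L[ℝ] E →L[ℝ] E) (one x : E) (p : Polynomial ℝ) : E :=
  (Polynomial.aeval (L x) p) one

lemma comm_pow (L : E →L[ℝ] E →L[ℝ] E) (hc : ∀ x y, L x y = L y x)
    (hj : ∀ x y, L (L x x) (L x y) = L x (L (L x x) y)) (one : E) (h1 : ∀ x, L one x = x)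
    (x : E) (n : ℕ) :
    Commute (L x) (L ((L x ^ n) one)) ∧ Commute (L x) (L ((L x ^ (n+1)) one)) := by
  have hx2 : Commute (L x) (L (L x x)) := by
    ext y; simpa using (hj x y).symm
  induction n with
  | zero =>
    constructor
    · ext y; simp [h1]
    · simp [hc x one, h1, Commute.refl]
  | succ n ih =>
    refine ⟨ih.2, ?_⟩
    obtain ⟨ha, hb⟩ := ih
    have e1 : (L x ^ (n+1)) one = L x ((L x ^ n) one) := by rw [pow_succ']; rfl
    have e2 : (L x ^ (n+1+1)) one = L x ((L x ^ (n+1)) one) := by rw [pow_succ']; rfl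
    set b := (L x ^ n) one
    have key : L (L x (L x b)) = L (L x b) * L x + L (L x x) * L b + L (L x b) * L x
        - L x * L x * L b - L b * L x * L x := by
      ext y
      have := lin L hc hj y x b x
      simp only [add_apply, sub_apply,
        mul_apply_eq_comp]
      have e3 : L y (L (L x b) x) = L (L x (L x b)) y := by rw [hc y, hc (L x b) x]
      have e4 : L x (L (L y b) x) = L x (L x (L b y)) := by rw [hc y b, hc (L b y) x]
      have e5 : L b (L (L y x) x) = L b (L x (L x y)) := by rw [hc y x, hc (L x y) x]
      rw [e3, e4, e5, hc y x, hc y b, hc (L b y) (L x x), hc (L x y), hc b x] at this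
      linear_combination (norm := module) this
    rw [e2, e1, key]
    rw [e1] at hb
    exact ((((hb.mul_right (Commute.refl _)).add_right (hx2.mul_right ha)).add_right
      (hb.mul_right (Commute.refl _))).sub_right
      (((Commute.refl _).mul_right (Commute.refl _)).mul_right ha)).sub_right
      ((ha.mul_right (Commute.refl _)).mul_right (Commute.refl _))

lemma comm_pw (L : E →L[ℝ] E →L[ℝ] E) (hc : ∀ x y, L x y = L y x)
    (hj : ∀ x y, L (L x x) (L x y) = L x (L (L x x) y)) (one : E) (h1 : ∀ x, L one x = x)
    (x : E) (p : Polynomial ℝ) : Commute (L x) (L (pw L one x p)) := by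
  induction p using Polynomial.induction_on' with
  | add p q hp hq =>
    simp only [pw, map_add, add_apply] at *
    exact hp.add_right hq
  | monomial n a =>
    have := (comm_pow L hc hj one h1 x n).1
    simp only [pw, Polynomial.aeval_monomial, ← Algebra.smul_def, 
      smul_apply, map_smul]
    exact this.smul_right a

lemma pw_mul (L : E →L[ℝ] E →L[ℝ] E) (hc : ∀ x y, L x y = L y x)
    (hj : ∀ x y, L (L x x) (L x y) = L x (L (L x x) y)) (one : E) (h1 : ∀ x, L one x = x)
    (x : E) (p q : Polynomial ℝ) : L (pw L one x p) (pw L one x q) = pw L one x (p * q) := by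
  have h := comm_pw L hc hj one h1 x p
  have h2 : Commute (Polynomial.aeval (L x) q) (L (pw L one x p)) := by
    induction q using Polynomial.induction_on' with
    | add p q hp hq => simpa using hp.add_left hq
    | monomial n a =>
      simp only [Polynomial.aeval_monomial, ← Algebra.smul_def]
      exact (h.pow_left n).smul_left a
  have h3 := congrArg (fun T => T one) h2.eq
  simp only [mul_apply_eq_comp] at h3
  have : L (pw L one x p) (pw L one x q) = (Polynomial.aeval (L x) q) (pw L one x p) := by
    rw [show (pw L one x q) = (Polynomial.aeval (L x) q) one from rfl, ← h3, hc _ one, h1]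
  rw [this, mul_comm p q]
  simp [pw]

lemma pw_mul_left (L : E →L[ℝ] E →L[ℝ] E) 
    (one : E) (x : E) (q : Polynomial ℝ) : L x (pw L one x q) = pw L one x (Polynomial.X * q) := by
  simp [pw]

lemma spectral [FiniteDimensional ℝ E] (L : E →L[ℝ] E →L[ℝ] E) (hc : ∀ x y, L x y = L y x)
    (hj : ∀ x y, L (L x x) (L x y) = L x (L (L x x) y)) (one : E) (h1 : ∀ x, L one x = x)
    (hin : ∀ x y, ⟪x, y⟫ = ⟪L x y, one⟫) (x : E) :
    ∃ (n : ℕ) (lam : Fin n → ℝ) (c : Fin n → E),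
      (∀ i, L (c i) (c i) = c i) ∧ (∀ i j, i ≠ j → L (c i) (c j) = 0) ∧ ∑ i, c i = one ∧
      ∑ i, lam i • c i = x ∧ (∀ i, L x (c i) = lam i • c i) ∧
      (∀ i, Commute (L x) (L (c i))) := by
  let φ : Polynomial ℝ →ₗ[ℝ] E :=
    { toFun := pw L one x
      map_add' := by intro p q; simp [pw]
      map_smul' := by intro a p; simp [pw] }
  let A : Submodule ℝ E := LinearMap.range φ
  have hA : ∀ a ∈ A, (L x : E →ₗ[ℝ] E) a ∈ A := by
    rintro _ ⟨p, rfl⟩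
    exact ⟨Polynomial.X * p, (pw_mul_left L one x p).symm⟩
  let T : A →ₗ[ℝ] A := (L x : E →ₗ[ℝ] E).restrict hA
  have hT : T.IsSymmetric := by
    rintro ⟨_, p, rfl⟩ ⟨_, q, rfl⟩
    change ⟪L x (pw L one x p), pw L one x q⟫ = ⟪pw L one x p, L x (pw L one x q)⟫
    rw [hin, hin (pw L one x p), pw_mul_left L one, pw_mul_left L one,
      pw_mul L hc hj one h1, pw_mul L hc hj one h1]
    congr 2; ring
  let b := hT.eigenvectorBasis rfl
  let mu := hT.eigenvalues rfl
  have hTb : ∀ i, L x (b i : E) = mu i • (b i : E) := by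
    intro i
    have := hT.apply_eigenvectorBasis rfl i
    exact congrArg (Subtype.val) this
  have hae : ∀ (p : Polynomial ℝ) i,
      Polynomial.aeval (L x) p (b i : E) = (p.eval (mu i)) • (b i : E) := by
    intro p i
    induction p using Polynomial.induction_on' with
    | add p q hp hq =>
      simp only [map_add, add_apply, Polynomial.eval_add, add_smul, hp, hq]
    | monomial n a =>
      have : (L x ^ n) (b i : E) = mu i ^ n • (b i : E) := by
        induction n with
        | zero => simp
        | succ n ih =>
          rw [pow_succ', mul_apply_eq_comp, ih, map_smul, hTb, smul_smul, pow_succ]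
      simp only [Polynomial.aeval_monomial, ← Algebra.smul_def, smul_apply, this,
        Polynomial.eval_monomial, smul_smul]
  have hp : ∀ (p : Polynomial ℝ) i, L (pw L one x p) (b i : E) = (p.eval (mu i)) • (b i : E) := by
    intro p i
    obtain ⟨q, hq⟩ := (b i).2
    have hq : pw L one x q = (b i : E) := hq
    rw [← hq, pw_mul L hc hj one h1]
    have : pw L one x (p * q) = Polynomial.aeval (L x) p (b i : E) := by
      rw [← hq]; simp [pw]
    rw [this, hq]
    exact hae p i
  have hone : one ∈ A := ⟨1, by change pw L one x 1 = one; simp [pw]⟩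
  have hbb : ∀ i j, i ≠ j → L (b i : E) (b j : E) = 0 := by
    intro i j hij
    obtain ⟨p, hp'⟩ := (b i).2
    obtain ⟨q, hq'⟩ := (b j).2
    have e1 := hp p j
    have e2 := hp q i
    rw [show pw L one x p = (b i : E) from hp'] at e1
    rw [show pw L one x q = (b j : E) from hq', hc, e1] at e2
    have e3 : (p.eval (mu j)) • b j = (q.eval (mu i)) • b i := Subtype.ext e2
    have e4 := congrArg (fun z => ⟪b j, z⟫) e3
    have o := b.orthonormal
    simp only [inner_smul_right, o.2 hij.symm, real_inner_self_eq_norm_sq, o.1 j] at e4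
    rw [e1, show p.eval (mu j) = 0 by simpa using e4, zero_smul]
  let c : Fin _ → E := fun i => ⟪b i, (⟨one, hone⟩ : A)⟫ • (b i : E)
  have hcc : ∀ i j, i ≠ j → L (c i) (c j) = 0 := by
    intro i j hij
    simp [c, hbb i j hij]
  have hsum : ∑ i, c i = one := by
    have := congrArg (Subtype.val) (b.sum_repr' ⟨one, hone⟩)
    simpa [c] using this
  have hLc : ∀ i, L x (c i) = mu i • c i := by
    intro i
    simp only [c, map_smul, hTb]; rw [smul_comm]
  refine ⟨_, mu, c, ?_, hcc, hsum, ?_, hLc, ?_⟩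
  · intro i
    have : L (c i) one = c i := by rw [hc, h1]
    rw [← hsum, map_sum, Finset.sum_eq_single i] at this
    · exact this
    · intro j _ hj; exact hcc i j hj.symm
    · simp
  · simp_rw [← hLc]
    rw [← map_sum, hsum, hc, h1]
  · intro i
    obtain ⟨p, hp'⟩ := (b i).2
    simp only [c, map_smul]
    rw [show (b i : E) = pw L one x p from hp'.symm]
    exact (comm_pw L hc hj one h1 x p).smul_right _

end algebra

section order
variable {E : Type*} [NormedAddCommGroup E] [InnerProductSpace ℝ E]

open scoped Pointwise in
/-- convergence of the Laplace integral forces nonnegativity of the pairing -/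
lemma inner_nonneg_of_integrable [FiniteDimensional ℝ E] [MeasurableSpace E] [BorelSpace E]
    (μ : Measure E) [μ.IsAddHaarMeasure] (hn : 0 < Module.finrank ℝ E) (Ω : Set E)
    (hΩo : IsOpen Ω) (hΩs : ∀ t : ℝ, 0 < t → ∀ x ∈ Ω, t • x ∈ Ω) (y : E)
    (hint : IntegrableOn (fun x => Real.exp (-⟪x, y⟫)) Ω μ) (x : E) (hx : x ∈ Ω) :
    0 ≤ ⟪x, y⟫ := by
  by_contra hneg
  push Not at hneg
  let B : Set E := Ω ∩ {z | ⟪z, y⟫ < 0}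
  have hBo : IsOpen B := hΩo.inter (isOpen_lt (by fun_prop) continuous_const)
  have hBpos : 0 < μ B := hBo.measure_pos μ ⟨x, hx, hneg⟩
  have hBint : IntegrableOn (fun x => Real.exp (-⟪x, y⟫)) B μ := hint.mono_set Set.inter_subset_left
  have hfin : μ B ≠ ⊤ := by
    have h1 : IntegrableOn (fun _ : E => (1 : ℝ)) B μ := by
      refine Integrable.mono hBint (by fun_prop) ?_
      filter_upwards [ae_restrict_mem hBo.measurableSet] with z hz
      have : ⟪z, y⟫ < 0 := hz.2
      simp only [norm_one, Real.norm_eq_abs, Real.abs_exp]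
      exact Real.one_le_exp (by linarith)
    have := (integrableOn_const_iff (by simp)).1 h1
    rcases this with h | h
    · simp at h
    · exact h.ne
  have hsc : (2 : ℝ) • B ⊆ B := by
    rintro _ ⟨z, hz, rfl⟩
    refine ⟨hΩs 2 two_pos z hz.1, ?_⟩
    have : ⟪z, y⟫ < 0 := hz.2
    change ⟪(2 : ℝ) • z, y⟫ < 0
    rw [real_inner_smul_left]
    linarith
  have h2 := measure_mono (μ := μ) hsc
  rw [Measure.addHaar_smul] at h2
  have h3 : (2:ENNReal) * μ B ≤ μ B := by
    refine le_trans ?_ h2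
    gcongr
    rw [abs_of_pos (by positivity)]
    have : (2:ℝ) ≤ 2 ^ Module.finrank ℝ E := by
      calc (2:ℝ) = 2 ^ 1 := by norm_num
        _ ≤ _ := pow_le_pow_right₀ (by norm_num) hn
    calc (2 : ENNReal) = ENNReal.ofReal 2 := by simp
      _ ≤ _ := ENNReal.ofReal_le_ofReal this
  rw [two_mul] at h3
  have := ENNReal.lt_add_right hfin hBpos.ne'
  exact absurd h3 (not_le.2 this)

lemma sq_mem_closure [FiniteDimensional ℝ E] (L : E →L[ℝ] E →L[ℝ] E)
    (hc : ∀ x y, L x y = L y x) (one : E) (h1 : ∀ x, L one x = x) (y : E) :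
    L y y ∈ closure (interior {x | ∃ y, x = L y y}) := by
  have := FiniteDimensional.complete ℝ E
  -- regular perturbation
  have hreg : ∀ z : E, Function.Injective (L z) → L z z ∈ interior {x | ∃ y, x = L y y} := by
    intro z hz
    have hd : HasStrictFDerivAt (fun z => L z z) (L z + L.flip z) z := by
      have := L.hasStrictFDerivAt (x := z)
      have h2 := this.clm_apply (hasStrictFDerivAt_id z)
      exact h2
    have he : L z + L.flip z = (2 : ℝ) • L z := by
      ext w; simp [hc w z, two_smul]
    have hs : (L z + L.flip z).range = ⊤ := by
      rw [he]
      rw [LinearMap.range_eq_top]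
      have hsurj : Function.Surjective (L z) :=
        (LinearMap.injective_iff_surjective (f := (L z : E →ₗ[ℝ] E))).1 hz
      intro w
      obtain ⟨u, hu⟩ := hsurj ((1/2 : ℝ) • w)
      exact ⟨u, by simp [hu]⟩
    have := hd.map_nhds_eq_of_surj hs
    rw [mem_interior_iff_mem_nhds, ← this]
    exact Filter.mem_map.2 (Filter.univ_mem' fun w => ⟨w, rfl⟩)
  have hfin : {a : ℝ | Module.End.HasEigenvalue (L y : E →ₗ[ℝ] E) (-a)}.Finite := by
    have := Module.End.finite_hasEigenvalue (L y : E →ₗ[ℝ] E)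
    exact Set.Finite.preimage (neg_injective.injOn) this
  have hfreq : ∃ᶠ a : ℝ in nhds 0, Function.Injective (L (y + a • one)) := by
    have hev : ∀ᶠ a : ℝ in nhdsWithin 0 {0}ᶜ, 
        a ∉ {a : ℝ | Module.End.HasEigenvalue (L y : E →ₗ[ℝ] E) (-a)} := by
      have := (hfin.subset (Set.sdiff_subset (t := {0}))).isClosed.isOpen_compl.mem_nhds
        (x := (0:ℝ)) (by simp)
      filter_upwards [mem_nhdsWithin_of_mem_nhds this, self_mem_nhdsWithin] with a ha h0 hmem
      exact ha ⟨hmem, h0⟩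
    have : ∃ᶠ a : ℝ in nhdsWithin 0 {0}ᶜ, Function.Injective (L (y + a • one)) := by
      refine Filter.Eventually.frequently ?_
      filter_upwards [hev] with a ha
      rw [injective_iff_map_eq_zero]
      intro w hw
      by_contra hw0
      apply ha
      refine Module.End.hasEigenvalue_of_hasEigenvector (x := w) ⟨?_, hw0⟩
      rw [Module.End.mem_eigenspace_iff]
      simp [h1] at hw ⊢
      exact eq_neg_of_add_eq_zero_left hw
    exact this.filter_mono nhdsWithin_le_nhds
  have hcont : Continuous fun a : ℝ => L (y + a • one) (y + a • one) := by fun_prop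
  rw [mem_closure_iff_frequently]
  have ht : Filter.Tendsto (fun a : ℝ => L (y + a • one) (y + a • one)) (nhds 0) (nhds (L y y)) := by
    have := hcont.tendsto 0
    simpa using this
  exact ht.frequently (hfreq.mono fun a ha => hreg _ ha)

/-- the form is associative -/
lemma assoc_form [FiniteDimensional ℝ E] (L : E →L[ℝ] E →L[ℝ] E) (hc : ∀ x y, L x y = L y x)
    (hj : ∀ x y, L (L x x) (L x y) = L x (L (L x x) y)) (one : E) (h1 : ∀ x, L one x = x)
    (hin : ∀ x y, ⟪x, y⟫ = ⟪L x y, one⟫) (hpos : ∀ x y, 0 ≤ ⟪L x x, L y y⟫) (a x y : E) :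
    ⟪L a x, y⟫ = ⟪x, L a y⟫ := by
  have hhalf : ∀ c u, L c c = c → L c u = (1/2 : ℝ) • u → ⟪u, one⟫ = 0 := by
    intro c u hcc hcu
    have key : ∀ q : ℝ, 0 ≤ ⟪L c (L u u), one⟫ + q / 2 * ⟪u, one⟫ := by
      intro q
      have h := hpos c (u + q • (one - c))
      have e : L c (L (u + q • (one - c)) (u + q • (one - c))) = L c (L u u) + (q/2) • u := by
        simp only [map_add, map_sub, map_smul, add_apply, sub_apply, smul_apply, h1, hc u one,
          hc u c, hcu, hcc, hc c one, smul_sub, smul_add]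
        module
      rw [hcc, hin, e, inner_add_left, inner_smul_left] at h
      simpa using h
    by_contra hne
    have := key (2 * (-(⟪L c (L u u), one⟫ + 1) / ⟪u, one⟫))
    have e : 2 * (-(⟪L c (L u u), one⟫ + 1) / ⟪u, one⟫) / 2 * ⟪u, one⟫
      = -(⟪L c (L u u), one⟫ + 1) := by field_simp
    rw [e] at this
    linarith
  have hidem : ∀ c, L c c = c → ⟪L c x, y⟫ = ⟪x, L c y⟫ := by
    intro c hcc
    have hd := der_sq L hc hj y x c
    rw [hcc] at hd
    have := hhalf c (L y (L x c) - L x (L y c)) hcc (by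
      conv_rhs => rw [hd, smul_smul]
      norm_num)
    rw [inner_sub_left, sub_eq_zero] at this
    rw [hin, hin x, hc (L c x) y, hc c x, hc c y]
    exact this
  obtain ⟨n, lam, c, hcc, -, -, hsum, -⟩ := spectral L hc hj one h1 hin a
  rw [← hsum]
  simp only [map_sum, map_smul, sum_apply, smul_apply, sum_inner, inner_sum,
    inner_smul_left, inner_smul_right, hidem _ (hcc _)]
  simp

lemma mem_cone_of_pd [FiniteDimensional ℝ E] (L : E →L[ℝ] E →L[ℝ] E) (hc : ∀ x y, L x y = L y x)
    (hj : ∀ x y, L (L x x) (L x y) = L x (L (L x x) y)) (one : E) (h1 : ∀ x, L one x = x)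
    (hin : ∀ x y, ⟪x, y⟫ = ⟪L x y, one⟫) (v : E) (ε : ℝ) (hε : 0 < ε)
    (hv : ∀ z, ε * ⟪z, z⟫ ≤ ⟪v, L z z⟫) : v ∈ interior {x | ∃ y, x = L y y} := by
  have hsq : ∀ (v : E) (ε : ℝ), 0 < ε → (∀ z, ε * ⟪z, z⟫ ≤ ⟪v, L z z⟫) → ∃ y, v = L y y := by
    intro v ε hε hv
    obtain ⟨n, lam, c, hcc, hcd, hone, hsum, hL, -⟩ := spectral L hc hj one h1 hin v
    have hlam : ∀ i, c i = 0 ∨ 0 < lam i := by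
      intro i
      by_cases h0 : c i = 0
      · exact Or.inl h0
      · right
        have hp : 0 < ⟪c i, c i⟫ := real_inner_self_pos.2 h0
        have := hv (c i)
        have e : ⟪v, L (c i) (c i)⟫ = lam i * ⟪c i, c i⟫ := by
          rw [hcc, hin, hL, inner_smul_left, hin (c i) (c i), hcc]; simp
        rw [e] at this
        have : ε ≤ lam i := le_of_mul_le_mul_right this hp
        linarith
    refine ⟨∑ i, √(lam i) • c i, ?_⟩
    have : ∀ i, L (∑ i, √(lam i) • c i) (√(lam i) • c i) = lam i • c i := by
      intro i
      simp only [map_sum, sum_apply, map_smul, smul_apply]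
      rw [Finset.sum_eq_single i]
      · rw [hcc, smul_smul]
        rcases hlam i with h | h
        · simp [h]
        · rw [Real.mul_self_sqrt h.le]
      · intro j _ hj; rw [hcd j i hj]; simp
      · simp
    rw [map_sum, Finset.sum_congr rfl (fun i _ => this i), hsum]
  rw [mem_interior_iff_mem_nhds]
  obtain ⟨M, hM⟩ : ∃ M, ∀ z, ‖L z z‖ ≤ M * ‖z‖ ^ 2 := by
    refine ⟨‖L‖, fun z => ?_⟩
    have := L.le_opNorm₂ z z
    nlinarith
  have hM0 : ∃ M, 0 < M ∧ ∀ z, ‖L z z‖ ≤ M * ‖z‖ ^ 2 :=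
    ⟨|M| + 1, by positivity, fun z => (hM z).trans (by gcongr; linarith [le_abs_self M])⟩
  obtain ⟨M, hMp, hM⟩ := hM0
  refine Filter.mem_of_superset (Metric.ball_mem_nhds v (ε := ε / (2 * M)) (by positivity)) ?_
  intro u hu
  refine hsq u (ε / 2) (by positivity) fun z => ?_
  have e : ⟪u, L z z⟫ = ⟪v, L z z⟫ + ⟪u - v, L z z⟫ := by rw [inner_sub_left]; ring
  have h2 := abs_le.1 (abs_real_inner_le_norm (u - v) (L z z))
  have h3 : ‖u - v‖ * ‖L z z‖ ≤ ε / (2 * M) * (M * ‖z‖ ^ 2) := by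
    have : ‖u - v‖ < ε / (2 * M) := by simpa [dist_eq_norm] using hu
    gcongr
    exact hM z
  have h4 : ε / (2 * M) * (M * ‖z‖ ^ 2) = ε / 2 * ‖z‖ ^ 2 := by field_simp
  have h5 := hv z
  rw [real_inner_self_eq_norm_sq] at h5 ⊢
  rw [e]
  linarith [h2.1]

lemma pd_of_mem_cone (L : E →L[ℝ] E →L[ℝ] E) (one : E) 
    (hin : ∀ x y, ⟪x, y⟫ = ⟪L x y, one⟫) (hpos : ∀ x y, 0 ≤ ⟪L x x, L y y⟫) (v : E)
    (hv : v ∈ interior {x | ∃ y, x = L y y}) : ∃ ε > 0, ∀ z, ε * ⟪z, z⟫ ≤ ⟪v, L z z⟫ := by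
  have hcont : Continuous fun a : ℝ => v - a • one := by fun_prop
  have : ∀ᶠ a : ℝ in nhds 0, v - a • one ∈ interior {x | ∃ y, x = L y y} :=
    hcont.continuousAt.eventually_mem (isOpen_interior.mem_nhds (by simpa using hv))
  have h2 : ∃ᶠ a : ℝ in nhdsWithin 0 (Set.Ioi 0), v - a • one ∈ interior {x | ∃ y, x = L y y} :=
    (this.filter_mono nhdsWithin_le_nhds).frequently
  obtain ⟨a, ha, ha0⟩ := (h2.and_eventually self_mem_nhdsWithin).exists
  refine ⟨a, ha0, fun z => ?_⟩
  obtain ⟨y, hy⟩ := interior_subset ha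
  have := hpos y z
  rw [← hy, inner_sub_left, inner_smul_left, real_inner_comm, real_inner_comm _ one, ← hin] at this
  have e : ⟪L z z, v⟫ = ⟪v, L z z⟫ := real_inner_comm _ _
  simp at this
  simp only [real_inner_self_eq_norm_sq]
  linarith

lemma mem_of_closure [FiniteDimensional ℝ E] (L : E →L[ℝ] E →L[ℝ] E) (hc : ∀ x y, L x y = L y x)
    (hj : ∀ x y, L (L x x) (L x y) = L x (L (L x x) y)) (one : E) (h1 : ∀ x, L one x = x)
    (hin : ∀ x y, ⟪x, y⟫ = ⟪L x y, one⟫) (hpos : ∀ x y, 0 ≤ ⟪L x x, L y y⟫)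
    (has : ∀ a x y, ⟪L a x, y⟫ = ⟪x, L a y⟫) (u w : E) (huw : L u w = one)
    (hu : u ∈ closure (interior {x | ∃ y, x = L y y})) :
    u ∈ interior {x | ∃ y, x = L y y} := by
  have hu2 : ∀ z, 0 ≤ ⟪u, L z z⟫ := by
    intro z
    have hcl : IsClosed {u : E | 0 ≤ ⟪u, L z z⟫} := isClosed_le continuous_const (by fun_prop)
    refine closure_minimal ?_ hcl hu
    intro x hx
    obtain ⟨y, rfl⟩ := interior_subset hx
    exact hpos y z
  obtain ⟨n, lam, c, hcc, hcd, hone, hsum, hL, -⟩ := spectral L hc hj one h1 hin u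
  have hlam : ∀ i, c i = 0 ∨ 0 < lam i := by
    intro i
    by_cases h0 : c i = 0
    · exact Or.inl h0
    · right
      have hp : 0 < ⟪c i, c i⟫ := real_inner_self_pos.2 h0
      have := hu2 (c i)
      have e : ⟪u, L (c i) (c i)⟫ = lam i * ⟪c i, c i⟫ := by
        rw [hcc, hin, hL, inner_smul_left, hin (c i) (c i), hcc]; simp
      rw [e] at this
      have h3 : 0 ≤ lam i := nonneg_of_mul_nonneg_left this hp
      refine lt_of_le_of_ne h3 fun h4 => ?_
      have h5 := has u (c i) w
      rw [hL, ← h4, huw] at h5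
      rw [hin, hcc] at hp
      simp at h5
      linarith
  classical
  obtain ⟨ε, hε, hlt⟩ := Pi.exists_forall_pos_add_lt (x := fun _ : Fin n => (0:ℝ))
    (y := fun i => if c i = 0 then 1 else lam i) (by
      intro i
      rcases hlam i with h | h
      · simp [h]
      · by_cases h0 : c i = 0 <;> simp [h0, h])
  refine mem_cone_of_pd L hc hj one h1 hin u ε hε fun z => ?_
  rw [hin z z, real_inner_comm]
  nth_rw 1 [← hone]
  rw [← hsum, sum_inner, sum_inner, Finset.mul_sum]
  refine Finset.sum_le_sum fun i _ => ?_
  rw [inner_smul_left]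
  have h6 := hpos (c i) z
  rw [hcc] at h6
  by_cases h0 : c i = 0
  · simp [h0]
  · have := hlt i
    simp [h0] at this
    simp
    gcongr
end order

section flow
variable {E : Type*} [NormedAddCommGroup E] [InnerProductSpace ℝ E]

open NormedSpace in
lemma exp_eigen [CompleteSpace E] (T : E →L[ℝ] E) (a : ℝ) (c : E) (h : T c = a • c) :
    exp T c = Real.exp a • c := by
  have h1 := NormedSpace.exp_series_hasSum_exp' (𝕂 := ℝ) T
  have h2 := (ContinuousLinearMap.apply ℝ E c).hasSum h1
  have h3 := NormedSpace.exp_series_hasSum_exp' (𝕂 := ℝ) a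
  have h4 := h3.smul_const c
  rw [← Real.exp_eq_exp_ℝ] at h4
  refine h2.unique ?_
  convert h4 using 2 with n
  have : (T ^ n) c = a ^ n • c := by
    induction n with
    | zero => simp
    | succ n ih => rw [pow_succ', mul_apply_eq_comp, ih, map_smul, h, smul_smul, pow_succ]
  simp [this, smul_smul]

lemma cone_inj (L : E →L[ℝ] E →L[ℝ] E) (has : ∀ a x y, ⟪L a x, y⟫ = ⟪x, L a y⟫) (v : E) (ε : ℝ)
    (hε : 0 < ε) (hc : ∀ x y, L x y = L y x) (hv : ∀ z, ε * ⟪z, z⟫ ≤ ⟪v, L z z⟫) :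
    Function.Injective (L v) := by
  rw [injective_iff_map_eq_zero]
  intro z hz
  have h := hv z
  rw [← has, hc z v, hz, inner_zero_left] at h
  by_contra h0
  have := mul_pos hε (real_inner_self_pos.2 h0)
  linarith

lemma isUnit_of_inj [FiniteDimensional ℝ E] (T : E →L[ℝ] E) (h : Function.Injective T) :
    IsUnit T := by
  let e := LinearEquiv.ofInjectiveEndo (T : E →ₗ[ℝ] E) h
  let e' := e.toContinuousLinearEquiv
  refine ⟨ContinuousLinearEquiv.toUnit e', ?_⟩
  ext x; rfl

lemma comm_inv [FiniteDimensional ℝ E] (L : E →L[ℝ] E →L[ℝ] E) (hc : ∀ x y, L x y = L y x)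
    (hj : ∀ x y, L (L x x) (L x y) = L x (L (L x x) y)) (one : E) (h1 : ∀ x, L one x = x)
    (hin : ∀ x y, ⟪x, y⟫ = ⟪L x y, one⟫) (v w : E) (hinj : Function.Injective (L v))
    (hw : L v w = one) : Commute (L v) (L w) := by
  obtain ⟨n, lam, c, hcc, hcd, hone, hsum, hL, hcom⟩ := spectral L hc hj one h1 hin v
  have h2 : w = ∑ i, (lam i)⁻¹ • c i := by
    apply hinj
    rw [hw, map_sum, ← hone]
    refine Finset.sum_congr rfl fun i _ => ?_
    rw [map_smul, hL, smul_smul]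
    by_cases h0 : lam i = 0
    · have : L v (c i) = 0 := by rw [hL, h0, zero_smul]
      rw [(injective_iff_map_eq_zero (L v)).1 hinj _ this]; simp
    · rw [inv_mul_cancel₀ h0, one_smul]
  rw [h2, map_sum]
  refine Commute.sum_right _ _ _ fun i _ => ?_
  rw [map_smul]
  exact (hcom i).smul_right _

lemma hasDerivAt_inverse_apply [CompleteSpace E] (A : ℝ → E →L[ℝ] E) (A' : E →L[ℝ] E) (t : ℝ)
    (z : E) (hA : HasDerivAt A A' t) (hu : IsUnit (A t)) :
    HasDerivAt (fun s => Ring.inverse (A s) z)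
      (-(Ring.inverse (A t) (A' (Ring.inverse (A t) z)))) t := by
  obtain ⟨U, hU⟩ := hu
  have d2 := hasFDerivAt_ringInverse (𝕜 := ℝ) U
  rw [hU] at d2
  have hUi : (↑U⁻¹ : E →L[ℝ] E) = Ring.inverse (A t) := by rw [← hU, Ring.inverse_unit]
  rw [hUi] at d2
  have d3 : HasDerivAt (fun s => Ring.inverse (A s)) _ t := d2.comp_hasDerivAt t hA
  have d4 := d3.clm_apply (hasDerivAt_const t z)
  refine d4.congr_deriv ?_
  simp

open NormedSpace in
lemma exp_neg_mul_self [CompleteSpace E] (T : E →L[ℝ] E) : exp (-T) * exp T = 1 := by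
  let _ : NormedAlgebra ℚ (E →L[ℝ] E) := NormedAlgebra.restrictScalars ℚ ℝ (E →L[ℝ] E)
  rw [← exp_add_of_commute ((Commute.refl T).neg_left)]
  simp

open NormedSpace in
lemma flow [FiniteDimensional ℝ E] (L : E →L[ℝ] E →L[ℝ] E) (hc : ∀ x y, L x y = L y x)
    (hj : ∀ x y, L (L x x) (L x y) = L x (L (L x x) y)) (one : E) (h1 : ∀ x, L one x = x)
    (hin : ∀ x y, ⟪x, y⟫ = ⟪L x y, one⟫) (hpos : ∀ x y, 0 ≤ ⟪L x x, L y y⟫)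
    (has : ∀ a x y, ⟪L a x, y⟫ = ⟪x, L a y⟫) (k v w : E) (hvw : L v w = one)
    (hv : v ∈ interior {x | ∃ y, x = L y y}) :
    exp (L k) v ∈ interior {x | ∃ y, x = L y y} ∧ L (exp (L k) v) (exp (-L k) w) = one := by
  have := FiniteDimensional.complete ℝ E
  set Ω := interior {x | ∃ y, x = L y y} with hΩ
  let V : ℝ → E := fun t => exp (t • L k) v
  let W : ℝ → E := fun t => Ring.inverse (L (V t)) one
  have hV : ∀ t, HasDerivAt V (L k (V t)) t := by
    intro t
    have := (hasDerivAt_exp_smul_const' (𝕂 := ℝ) (L k) t).clm_apply (hasDerivAt_const t v)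
    simpa [V] using this
  have hVc : Continuous V := continuous_iff_continuousAt.2 fun t => (hV t).continuousAt
  have hunit : ∀ u ∈ Ω, IsUnit (L u) := by
    intro u hu
    obtain ⟨ε, hε, h⟩ := pd_of_mem_cone L one hin hpos u hu
    exact isUnit_of_inj _ (cone_inj L has u ε hε hc h)
  have hinj : ∀ u ∈ Ω, Function.Injective (L u) := by
    intro u hu
    obtain ⟨ε, hε, h⟩ := pd_of_mem_cone L one hin hpos u hu
    exact cone_inj L has u ε hε hc h
  have hLW : ∀ u ∈ Ω, L u (Ring.inverse (L u) one) = one := by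
    intro u hu
    have := Ring.mul_inverse_cancel _ (hunit u hu)
    simpa using congrArg (fun T => T one) this
  have hW : ∀ t, V t ∈ Ω → HasDerivAt W (- L k (W t)) t := by
    intro t ht
    have d1 : HasDerivAt (fun t => L (V t)) (L (L k (V t))) t :=
      L.hasFDerivAt.comp_hasDerivAt t (hV t)
    have d3 := hasDerivAt_inverse_apply (fun t => L (V t)) _ t one d1 (hunit _ ht)
    have hcm := comm_inv L hc hj one h1 hin (V t) (W t) (hinj _ ht) (hLW _ ht)
    refine d3.congr_deriv ?_
    rw [neg_inj]
    apply hinj _ ht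
    have e1 : ∀ z, L (V t) (Ring.inverse (L (V t)) z) = z := by
      intro z
      have := Ring.mul_inverse_cancel _ (hunit _ ht)
      simpa using congrArg (fun T => T z) this
    rw [e1]
    change L (L k (V t)) (W t) = L (V t) (L k (W t))
    have := congrArg (fun T => T k) hcm.eq
    simp only [mul_apply_eq_comp] at this
    rw [hc k (W t), this, hc k (V t), hc (W t)]
  have hW0 : W 0 = w := by
    apply hinj v hv
    rw [hvw]
    have : V 0 = v := by simp [V]
    simp only [W, this]
    exact hLW v hv
  -- conservation law
  have hcons : ∀ t, 0 ≤ t → (∀ s ∈ Set.Icc 0 t, V s ∈ Ω) → exp (t • L k) (W t) = w := by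
    intro t ht hs
    let F : ℝ → E := fun t => exp (t • L k) (W t)
    have hF : ∀ s ∈ Set.Icc 0 t, HasDerivAt F 0 s := by
      intro s hs'
      have := (hasDerivAt_exp_smul_const (𝕂 := ℝ) (L k) s).clm_apply (hW s (hs s hs'))
      convert this using 1
      simp
    have := constant_of_has_deriv_right_zero (f := F) (a := 0) (b := t)
      (fun s hs' => (hF s hs').continuousAt.continuousWithinAt)
      (fun s hs' => (hF s ⟨hs'.1, hs'.2.le⟩).hasDerivWithinAt) t ⟨ht, le_rfl⟩
    simp only [F] at this
    rw [this]
    simp [hW0]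
  have hinvexp : ∀ (t : ℝ) z, exp (t • (-L k)) (exp (t • L k) z) = z := by
    intro t z
    have : exp (t • (-L k)) * exp (t • L k) = 1 := by
      rw [smul_neg, exp_neg_mul_self]
    simpa using congrArg (fun T => T z) this
  have hprod : ∀ t, 0 ≤ t → (∀ s ∈ Set.Icc 0 t, V s ∈ Ω) → L (V t) (exp (t • (-L k)) w) = one := by
    intro t ht hs
    rw [← hcons t ht hs, hinvexp]
    exact hLW _ (hs t ⟨ht, le_rfl⟩)
  have hall : ∀ s ∈ Set.Icc (0:ℝ) 1, V s ∈ Ω := by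
    by_contra hbad
    push Not at hbad
    let S := Set.Icc (0:ℝ) 1 ∩ {s | V s ∉ Ω}
    have hScl : IsClosed {s | V s ∉ Ω} :=
      (isOpen_interior.preimage hVc).isClosed_compl
    have hS : IsCompact S := isCompact_Icc.inter_right hScl
    obtain ⟨t, ⟨⟨ht0, ht1⟩, htb⟩, hmin⟩ := hS.exists_isLeast hbad
    have hlt : ∀ s, 0 ≤ s → s < t → V s ∈ Ω := by
      intro s hs0 hst
      by_contra hs
      have := hmin (show s ∈ S from ⟨⟨hs0, by linarith⟩, hs⟩)
      linarith
    have ht0' : 0 < t := by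
      refine lt_of_le_of_ne ht0 fun h => ?_
      apply htb
      rw [← h]; simpa [V] using hv
    have hev : ∀ᶠ s in nhdsWithin t (Set.Iio t), 0 < s ∧ s < t := by
      filter_upwards [Ioo_mem_nhdsLT ht0'] with s hs using hs
    have hlim1 : Filter.Tendsto V (nhdsWithin t (Set.Iio t)) (nhds (V t)) :=
      (hVc.tendsto t).mono_left nhdsWithin_le_nhds
    have hcl : V t ∈ closure Ω :=
      mem_closure_of_tendsto hlim1 (hev.mono fun s hs => hlt s hs.1.le hs.2)
    have hGc : Continuous fun s => L (V s) (exp (s • (-L k)) w) := by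
      have hd : Continuous fun s : ℝ => exp (s • (-L k)) :=
        continuous_iff_continuousAt.2 fun s =>
          (hasDerivAt_exp_smul_const (𝕂 := ℝ) (-L k) s).continuousAt
      fun_prop
    have hlim2 := (hGc.tendsto t).mono_left (nhdsWithin_le_nhds (s := Set.Iio t))
    have hlim3 : Filter.Tendsto (fun s => L (V s) (exp (s • (-L k)) w)) (nhdsWithin t (Set.Iio t))
        (nhds one) := by
      refine Filter.Tendsto.congr' ?_ tendsto_const_nhds
      filter_upwards [hev] with s hs
      exact (hprod s hs.1.le fun s' hs' => hlt s' hs'.1 (by linarith [hs'.2, hs.2])).symm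
    have heq := tendsto_nhds_unique hlim2 hlim3
    exact htb (mem_of_closure L hc hj one h1 hin hpos has (V t) _ heq hcl)
  have a1 := hall 1 (by simp)
  have a2 := hprod 1 zero_le_one hall
  simp only [V, one_smul] at a1 a2
  exact ⟨a1, a2⟩
end flow

section final
variable {E : Type*} [NormedAddCommGroup E] [InnerProductSpace ℝ E]

open NormedSpace in
lemma exists_group_elem [FiniteDimensional ℝ E] (L : E →L[ℝ] E →L[ℝ] E)
    (hc : ∀ x y, L x y = L y x)
    (hj : ∀ x y, L (L x x) (L x y) = L x (L (L x x) y)) (one : E) (h1 : ∀ x, L one x = x)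
    (hin : ∀ x y, ⟪x, y⟫ = ⟪L x y, one⟫) (hpos : ∀ x y, 0 ≤ ⟪L x x, L y y⟫)
    (has : ∀ a x y, ⟪L a x, y⟫ = ⟪x, L a y⟫) (x : E)
    (hx : x ∈ interior {x | ∃ y, x = L y y}) :
    ∃ g g' : E →L[ℝ] E, (∀ z, g' (g z) = z) ∧ (∀ z, g (g' z) = z) ∧
      (∀ a b, ⟪g a, b⟫ = ⟪a, g b⟫) ∧ (∀ a b, ⟪g' a, b⟫ = ⟪a, g' b⟫) ∧
      g one = x ∧ g' (L x x) = x ∧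
      (∀ v w, v ∈ interior {x | ∃ y, x = L y y} → L v w = one →
        g v ∈ interior {x | ∃ y, x = L y y} ∧ g' v ∈ interior {x | ∃ y, x = L y y} ∧
        L (g v) (g' w) = one) := by
  have := FiniteDimensional.complete ℝ E
  obtain ⟨n, lam, c, hcc, hcd, hone, hsum, hL, -⟩ := spectral L hc hj one h1 hin x
  obtain ⟨ε, hε, hpd⟩ := pd_of_mem_cone L one hin hpos x hx
  have hlam : ∀ i, c i = 0 ∨ 0 < lam i := by
    intro i
    by_cases h0 : c i = 0
    · exact Or.inl h0
    · right
      have hp : 0 < ⟪c i, c i⟫ := real_inner_self_pos.2 h0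
      have := hpd (c i)
      have e : ⟪x, L (c i) (c i)⟫ = lam i * ⟪c i, c i⟫ := by
        rw [hcc, hin, hL, inner_smul_left, hin (c i) (c i), hcc]; simp
      rw [e] at this
      have : ε ≤ lam i := le_of_mul_le_mul_right this hp
      linarith
  let k : E := ∑ i, Real.log (lam i) • c i
  have hk : ∀ i, L k (c i) = Real.log (lam i) • c i := by
    intro i
    simp only [k, map_sum, sum_apply, map_smul, smul_apply]
    rw [Finset.sum_eq_single i]
    · rw [hcc]
    · intro j _ hj; rw [hcd j i hj]; simp
    · simp
  have hsa : ∀ T : E →L[ℝ] E, (∀ a b, ⟪T a, b⟫ = ⟪a, T b⟫) → ∀ a b, ⟪exp T a, b⟫ = ⟪a, exp T b⟫ := by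
    intro T hT
    have h2 : IsSelfAdjoint T := ContinuousLinearMap.isSelfAdjoint_iff_isSymmetric.2 hT
    exact ContinuousLinearMap.isSelfAdjoint_iff_isSymmetric.1 h2.exp
  have hi1 : ∀ z, exp (-L k) (exp (L k) z) = z := fun z => by
    simpa using congrArg (fun T => T z) (exp_neg_mul_self (L k))
  have hi2 : ∀ z, exp (L k) (exp (-L k) z) = z := fun z => by
    simpa using congrArg (fun T => T z) (exp_neg_mul_self (-L k))
  have hxx : L x x = ∑ i, (lam i * lam i) • c i := by
    nth_rw 2 [← hsum]
    rw [map_sum]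
    refine Finset.sum_congr rfl fun i _ => ?_
    rw [map_smul, hL, smul_smul]
  refine ⟨exp (L k), exp (-L k), hi1, hi2, hsa _ (has k), hsa _ ?_, ?_, ?_, ?_⟩
  · intro a b
    simp [has k a b]
  · rw [← hone, map_sum, ← hsum]
    refine Finset.sum_congr rfl fun i _ => ?_
    rw [exp_eigen _ _ _ (hk i)]
    rcases hlam i with h | h
    · simp [h]
    · rw [Real.exp_log h]
  · rw [hxx, map_sum]
    refine Eq.trans ?_ hsum
    refine Finset.sum_congr rfl fun i _ => ?_
    rw [map_smul, exp_eigen (-L k) (-Real.log (lam i)) (c i) (by simp [hk i])]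
    rcases hlam i with h | h
    · simp [h]
    · rw [Real.exp_neg, Real.exp_log h, smul_smul]
      congr 1
      field_simp
  · intro v w hv hvw
    have f1 := flow L hc hj one h1 hin hpos has k v w hvw hv
    have f2 := flow L hc hj one h1 hin hpos has (-k) v w hvw hv
    refine ⟨f1.1, ?_, f1.2⟩
    simpa using f2.1

/-- linear change of variables preserving a set -/
lemma change_var [FiniteDimensional ℝ E] [MeasurableSpace E] [BorelSpace E]
    {F : Type*} [NormedAddCommGroup F] [NormedSpace ℝ F]
    (μ : Measure E) [μ.IsAddHaarMeasure] (Ω : Set E) (hΩ : MeasurableSet Ω) (g g' : E →L[ℝ] E)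
    (h1 : ∀ z, g' (g z) = z) (h2 : ∀ z, g (g' z) = z) (h3 : ∀ v ∈ Ω, g v ∈ Ω)
    (h4 : ∀ v ∈ Ω, g' v ∈ Ω) (f : E → F) :
    ∫ v in Ω, f v ∂μ = |g.det| • ∫ v in Ω, f (g v) ∂μ := by
  have him : g '' Ω = Ω := by
    ext v; constructor
    · rintro ⟨u, hu, rfl⟩; exact h3 u hu
    · intro hv; exact ⟨g' v, h4 v hv, h2 v⟩
  have := integral_image_eq_integral_abs_det_fderiv_smul μ hΩ (f := g) (f' := fun _ => g)
    (fun v _ => g.hasFDerivAt.hasFDerivWithinAt) (fun a _ b _ hab => by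
      rw [← h1 a, ← h1 b, hab]) f
  rw [him] at this
  rw [this, integral_smul]

end final
end ConeAux

/-- **Second integral representation of the K-Bessel function.**
`𝒦_λ(x²) = Δ(x)^{n/r−λ} ∫_Ω e^{−(x|v+v⁻¹)} Δ(v)^{−λ} dv` for all `x ∈ Ω`. -/
theorem coneKBessel_second_integral_representation
    {E : Type*} [NormedAddCommGroup E] [InnerProductSpace ℝ E] [FiniteDimensional ℝ E]
    [MeasurableSpace E] [BorelSpace E]
    (μ : Measure E) [μ.IsAddHaarMeasure]
    (jmul : E →ₗ[ℝ] E →ₗ[ℝ] E) (one : E) (Ω : Set E) (Δ tr : E → ℝ) (jinv : E → E)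
    (r : ℕ) (d : ℝ) (hr : 1 ≤ r) (hd : 0 < d)
    (hcomm : ∀ x y, jmul x y = jmul y x)
    (hjordan : ∀ x y, jmul (jmul x x) (jmul x y) = jmul x (jmul (jmul x x) y))
    (hone : ∀ x, jmul one x = x)
    (htr : ∀ x, tr x = ⟪x, one⟫)
    (hinner : ∀ x y, ⟪x, y⟫ = tr (jmul x y))
    (hΩ : Ω = interior {x | ∃ y, x = jmul y y})
    (hdim : (Module.finrank ℝ E : ℝ) = r + r * ((r : ℝ) - 1) * d / 2)
    (hΔpos : ∀ x ∈ Ω, 0 < Δ x)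
    (hΔone : Δ one = 1)
    (hΔhom : ∀ c : ℝ, 0 < c → ∀ x, Δ (c • x) = c ^ r * Δ x)
    (hinvΩ : ∀ x ∈ Ω, jinv x ∈ Ω)
    (hinvinv : ∀ x ∈ Ω, jinv (jinv x) = x)
    (hinvmul : ∀ x ∈ Ω, jmul x (jinv x) = one)
    (hΔinv : ∀ x ∈ Ω, Δ (jinv x) = (Δ x)⁻¹)
    (hLap : ∀ l : ℝ, ((r : ℝ) - 1) * d / 2 < l → ∀ y ∈ Ω,
      ∫ x in Ω, Real.exp (-⟪x, y⟫) * Δ x ^ (l - (Module.finrank ℝ E : ℝ) / r) ∂μ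
        = ((2 * Real.pi) ^ ((r : ℝ) * ((r : ℝ) - 1) * d / 4)
            * ∏ i ∈ Finset.range r, Real.Gamma (l - (i : ℝ) * d / 2)) * Δ y ^ (-l))
    (hsqrt : ∀ x ∈ Ω, ∃ s ∈ Ω, jmul s s = x)
    (lam : ℂ) (x : E) (hx : x ∈ Ω) :
    coneKBessel μ Ω Δ tr jinv lam (jmul x x)
      = ((Δ x : ℂ) ^ ((((Module.finrank ℝ E : ℝ) / r : ℝ) : ℂ) - lam))
          * ∫ v in Ω, Complex.exp (((-⟪x, v + jinv v⟫ : ℝ) : ℂ))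
              * ((Δ v : ℂ) ^ (-lam)) ∂μ := by
  classical
  let L : E →L[ℝ] E →L[ℝ] E := LinearMap.toContinuousLinearMap
    ((LinearMap.toContinuousLinearMap : (E →ₗ[ℝ] E) ≃ₗ[ℝ] (E →L[ℝ] E)).toLinearMap ∘ₗ jmul)
  have hLj : ∀ a b, jmul a b = L a b := fun a b => rfl
  simp only [hLj] at *
  clear_value L
  have hin : ∀ x y, ⟪x, y⟫ = ⟪L x y, one⟫ := fun x y => by rw [hinner, htr]
  have hΩo : IsOpen Ω := by rw [hΩ]; exact isOpen_interior
  have hr0 : (0:ℝ) < r := by exact_mod_cast hr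
  have hr1 : (1:ℝ) ≤ r := by exact_mod_cast hr
  have hN : (Module.finrank ℝ E : ℝ) / r = 1 + ((r:ℝ) - 1) * d / 2 := by
    rw [hdim]; field_simp
  have hNpos : (0:ℝ) < (Module.finrank ℝ E : ℝ) / r := by
    rw [hN]
    have : 0 ≤ ((r:ℝ) - 1) * d / 2 := by
      have : 0 ≤ (r:ℝ) - 1 := by linarith
      positivity
    linarith
  have hn : 0 < Module.finrank ℝ E := by
    rcases Nat.eq_zero_or_pos (Module.finrank ℝ E) with h | h
    · rw [h] at hNpos; simp at hNpos
    · exact h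
  set N : ℝ := (Module.finrank ℝ E : ℝ) / r with hNdef
  obtain ⟨C, hC, hLapN⟩ : ∃ C : ℝ, 0 < C ∧ ∀ y ∈ Ω,
      ∫ x in Ω, Real.exp (-⟪x, y⟫) ∂μ = C * Δ y ^ (-N) := by
    refine ⟨(2 * Real.pi) ^ ((r : ℝ) * ((r : ℝ) - 1) * d / 4)
            * ∏ i ∈ Finset.range r, Real.Gamma (N - (i : ℝ) * d / 2), ?_, fun y hy => ?_⟩
    rotate_left
    · have := hLap N (by rw [hN]; linarith) y hy
      simpa only [sub_self, Real.rpow_zero, mul_one] using this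
    · refine mul_pos (by positivity) (Finset.prod_pos fun i hi => Real.Gamma_pos_of_pos ?_)
      have hi' : (i:ℝ) + 1 ≤ r := by exact_mod_cast Finset.mem_range.1 hi
      rw [hN]
      nlinarith
  have hΩs : ∀ t : ℝ, 0 < t → ∀ x ∈ Ω, t • x ∈ Ω := by
    intro t ht x hx
    rw [hΩ] at hx ⊢
    rw [mem_interior] at hx ⊢
    obtain ⟨U, hU, hUo, hxU⟩ := hx
    refine ⟨(fun z => t⁻¹ • z) ⁻¹' U, ?_, hUo.preimage (by fun_prop), ?_⟩
    · intro z hz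
      obtain ⟨y, hy⟩ := hU hz
      refine ⟨√t • y, ?_⟩
      have hy' : t⁻¹ • z = L y y := hy
      rw [map_smul, map_smul, smul_apply, smul_smul, Real.mul_self_sqrt ht.le, ← hy', smul_smul,
        mul_inv_cancel₀ ht.ne', one_smul]
    · simpa [ht.ne'] using hxU
  have hnn : ∀ x ∈ Ω, ∀ y ∈ Ω, 0 ≤ ⟪x, y⟫ := by
    intro x hx y hy
    refine ConeAux.inner_nonneg_of_integrable μ hn Ω hΩo hΩs y ?_ x hx
    by_contra hni
    have h1 := hLapN y hy
    rw [integral_undef hni] at h1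
    have := mul_pos hC (Real.rpow_pos_of_pos (hΔpos y hy) (-N))
    linarith
  have hsqcl : ∀ y, L y y ∈ closure Ω := by
    intro y; rw [hΩ]; exact ConeAux.sq_mem_closure L hcomm one hone y
  have hpos : ∀ x y, 0 ≤ ⟪L x x, L y y⟫ := by
    intro x y
    have s1 : ∀ u ∈ Ω, ∀ v ∈ closure Ω, 0 ≤ ⟪u, v⟫ := by
      intro u hu v hv
      have hcl : IsClosed {v : E | 0 ≤ ⟪u, v⟫} := isClosed_le continuous_const (by fun_prop)
      exact closure_minimal (fun v hv => hnn u hu v hv) hcl hv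
    have hcl : IsClosed {u : E | 0 ≤ ⟪u, L y y⟫} := isClosed_le continuous_const (by fun_prop)
    exact closure_minimal (fun u hu => s1 u hu _ (hsqcl y)) hcl (hsqcl x)
  have has := ConeAux.assoc_form L hcomm hjordan one hone hin hpos
  obtain ⟨g, g', hg1, hg2, hgs, hgs', hgone, hgx, hgΩ⟩ :=
    ConeAux.exists_group_elem L hcomm hjordan one hone hin hpos has x (by rw [← hΩ]; exact hx)
  rw [← hΩ] at hgΩ
  have m1 : ∀ v ∈ Ω, g v ∈ Ω := fun v hv => (hgΩ v _ hv (hinvmul v hv)).1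
  have m2 : ∀ v ∈ Ω, g' v ∈ Ω := fun v hv => (hgΩ v _ hv (hinvmul v hv)).2.1
  have m3 : ∀ v ∈ Ω, jinv (g v) = g' (jinv v) := by
    intro v hv
    have hgv := m1 v hv
    rw [hΩ] at hgv
    obtain ⟨ε, hε, h⟩ := ConeAux.pd_of_mem_cone L one hin hpos _ hgv
    apply ConeAux.cone_inj L has (g v) ε hε hcomm h
    rw [hinvmul _ (m1 v hv), (hgΩ v _ hv (hinvmul v hv)).2.2]
  have honeΩ : one ∈ Ω := by
    rw [← hg1 one, hgone]; exact m2 x hx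
  -- transformation of the determinant
  have hdet : ∀ y ∈ Ω, Δ (g y) ^ N = |g.det| * Δ y ^ N := by
    intro y hy
    have e1 := hLapN y hy
    rw [ConeAux.change_var μ Ω hΩo.measurableSet g g' hg1 hg2 m1 m2] at e1
    have e2 := hLapN (g y) (m1 y hy)
    simp only [hgs] at e1
    rw [e2, smul_eq_mul, Real.rpow_neg (hΔpos _ (m1 y hy)).le, Real.rpow_neg (hΔpos y hy).le] at e1
    have p1 := Real.rpow_pos_of_pos (hΔpos _ (m1 y hy)) N
    have p2 := Real.rpow_pos_of_pos (hΔpos _ hy) N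
    field_simp at e1
    linarith
  have hdx : Δ x ^ N = |g.det| := by
    have := hdet one honeΩ
    rwa [hgone, hΔone, Real.one_rpow, mul_one] at this
  have hΔg : ∀ y ∈ Ω, Δ (g y) = Δ x * Δ y := by
    intro y hy
    have h := hdet y hy
    rw [← hdx, ← Real.mul_rpow (hΔpos x hx).le (hΔpos y hy).le] at h
    exact (Real.rpow_left_inj (hΔpos _ (m1 y hy)).le
      (mul_pos (hΔpos x hx) (hΔpos y hy)).le hNpos.ne').1 h
  unfold coneKBessel
  rw [ConeAux.change_var μ Ω hΩo.measurableSet g g' hg1 hg2 m1 m2, ← hdx,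
    ← integral_smul, ← integral_const_mul]
  refine setIntegral_congr_fun hΩo.measurableSet fun v hv => ?_
  have hx0 := hΔpos x hx
  have hv0 := hΔpos v hv
  have i1 : tr (g v) = ⟪x, v⟫ := by rw [htr, hgs, hgone, real_inner_comm]
  have i2 : ⟪L x x, jinv (g v)⟫ = ⟪x, jinv v⟫ := by rw [m3 v hv, ← hgs', hgx]
  have i3 : -(tr (g v)) - ⟪L x x, jinv (g v)⟫ = -⟪x, v + jinv v⟫ := by
    rw [i1, i2, inner_add_right]; ring
  simp only [i3, hΔg v hv]
  rw [Complex.ofReal_mul, Complex.mul_cpow_ofReal_nonneg hx0.le hv0.le,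
    Complex.cpow_sub _ _ (by exact_mod_cast hx0.ne'), Complex.real_smul,
    Complex.ofReal_cpow hx0.le, Complex.cpow_neg (Δ x : ℂ)]
  ring
end
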